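/- arXiv:2308.16728 — 4 statements merged into one kernel-verified Lean document; each statement's English description precedes it below -/
import Mathlib

section
/- For every integer d ≥ 12 and every real ε > 0 there exists r₀ such that for all integers r ≥ r₀ one has ( d^{−1/3} − ε ) · r^{1/3} ≤ f(r, K_{2,d+1}) ≤ ( 2·d^{−1/3}·(1 − 1.5·d^{−1/2})^{−5/3} + ε ) · r^{1/3}, where K_{2,d+1} denotes the complete bipartite graph with parts of sizes 2 and d+1. -/
open SimpleGraph

/-- `G` is an `(r,k)`-graph: its vertex set can be partitioned into `r` parts,
each of size at most `k`, with at least one edge between any two distinct parts. -/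
def IsRKGraph {V : Type} [Fintype V] (G : SimpleGraph V) (r k : ℕ) : Prop :=
  ∃ P : Fin r → Finset V,
    (∀ v : V, ∃! i, v ∈ P i) ∧
    (∀ i, (P i).card ≤ k) ∧
    ∀ i j : Fin r, i ≠ j → ∃ u ∈ P i, ∃ w ∈ P j, G.Adj u w

/-- `G` contains a subgraph isomorphic to `H`. -/
def ContainsSub {W V : Type} (H : SimpleGraph W) (G : SimpleGraph V) : Prop :=
  ∃ f : H →g G, Function.Injective f

/-- `f(r,H)`: the minimum `k` for which there exists an `H`-free `(r,k)`-graph. -/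
noncomputable def fGraph {W : Type} (H : SimpleGraph W) (r : ℕ) : ℕ :=
  sInf {k | ∃ (n : ℕ) (G : SimpleGraph (Fin n)), ¬ ContainsSub H G ∧ IsRKGraph G r k}


/-- compactly supported frequency-side kernel -/
noncomputable def kk (t : ℝ) : ℝ :=
  1 - min |t| 1 + Real.sin (2 * Real.pi * min |t| 1) / (2 * Real.pi)

/-- its Fourier transform -/
noncomputable def KK (u : ℝ) : ℝ :=
  2 * ∫ t in (0:ℝ)..1, kk t * Real.cos (2 * Real.pi * t * u)

lemma kk_cont : Continuous kk := by unfold kk; fun_prop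

lemma kk_even (t : ℝ) : kk (-t) = kk t := by simp [kk]

lemma kk_zero : kk 0 = 1 := by simp [kk]

lemma kk_out {t : ℝ} (ht : 1 ≤ |t|) : kk t = 0 := by
  simp [kk, min_eq_right ht]

lemma kk_in {t : ℝ} (h0 : 0 ≤ t) (h1 : t ≤ 1) :
    kk t = 1 - t + Real.sin (2 * Real.pi * t) / (2 * Real.pi) := by
  simp [kk, abs_of_nonneg h0, min_eq_left h1]

lemma kk_compact : HasCompactSupport kk := by
  refine HasCompactSupport.intro (K := Set.Icc (-1) 1) isCompact_Icc ?_
  intro t ht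
  apply kk_out
  by_contra h
  exact ht (abs_le.mp (not_le.mp h).le)

lemma kk_int : MeasureTheory.Integrable kk :=
  kk_cont.integrable_of_hasCompactSupport kk_compact

lemma kk_intC : MeasureTheory.Integrable (fun t => (kk t : ℂ)) := kk_int.ofReal

lemma kk_abs_le (t : ℝ) : |kk t| ≤ 2 := by
  unfold kk
  have h1 : 0 ≤ min |t| 1 := le_min (abs_nonneg _) zero_le_one
  have h2 : min |t| 1 ≤ 1 := min_le_right _ _
  have hpi := Real.pi_gt_three
  have h3 : |Real.sin (2 * Real.pi * min |t| 1) / (2 * Real.pi)| ≤ 1 := by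
    rw [abs_div, abs_of_pos (by positivity : 0 < 2 * Real.pi), div_le_one (by positivity)]
    have := Real.abs_sin_le_one (2 * Real.pi * min |t| 1)
    linarith
  rw [abs_le] at *
  constructor <;> linarith

lemma KK_ident (u : ℝ) :
    Real.pi ^ 2 * u ^ 2 * (1 - u ^ 2) * KK u = Real.sin (Real.pi * u) ^ 2 := by
  have hpi : Real.pi ≠ 0 := Real.pi_ne_zero
  have hd : ∀ t : ℝ, HasDerivAt
      (fun t => Real.pi * u * (1 - u ^ 2) * (1 - t) * Real.sin (2 * Real.pi * t * u)
      - (1 - u ^ 2) / 2 * Real.cos (2 * Real.pi * t * u)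
      - u ^ 2 / 2 * Real.cos (2 * Real.pi * t) * Real.cos (2 * Real.pi * t * u)
      - u ^ 3 / 2 * Real.sin (2 * Real.pi * t) * Real.sin (2 * Real.pi * t * u))
      (2 * Real.pi ^ 2 * u ^ 2 * (1 - u ^ 2) *
        ((1 - t + Real.sin (2 * Real.pi * t) / (2 * Real.pi)) *
          Real.cos (2 * Real.pi * t * u))) t := by
    intro t
    have e1 : HasDerivAt (fun t : ℝ => 2 * Real.pi * t * u) (2 * Real.pi * u) t := by
      simpa using ((hasDerivAt_id t).const_mul (2 * Real.pi)).mul_const u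
    have e2 : HasDerivAt (fun t : ℝ => 2 * Real.pi * t) (2 * Real.pi) t := by
      simpa using ((hasDerivAt_id t).const_mul (2 * Real.pi))
    have e3 : HasDerivAt (fun t : ℝ => Real.pi * u * (1 - u ^ 2) * (1 - t))
        (Real.pi * u * (1 - u ^ 2) * (-1)) t := by
      simpa using ((hasDerivAt_id t).const_sub 1).const_mul (Real.pi * u * (1 - u ^ 2))
    have := (((e3.mul e1.sin).sub (e1.cos.const_mul ((1 - u ^ 2) / 2))).sub
      ((e2.cos.const_mul (u ^ 2 / 2)).mul e1.cos)).sub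
      ((e2.sin.const_mul (u ^ 3 / 2)).mul e1.sin)
    convert! this using 1
    field_simp
    ring
  have hInt0 : ∫ t in (0:ℝ)..1, (2 * Real.pi ^ 2 * u ^ 2 * (1 - u ^ 2) *
        ((1 - t + Real.sin (2 * Real.pi * t) / (2 * Real.pi)) *
          Real.cos (2 * Real.pi * t * u))) = _ :=
    intervalIntegral.integral_eq_sub_of_hasDerivAt (fun t _ => hd t)
      (Continuous.intervalIntegrable (by fun_prop) _ _)
  have hk : KK u = 2 * ∫ t in (0:ℝ)..1, ((1 - t + Real.sin (2 * Real.pi * t) / (2 * Real.pi)) *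
          Real.cos (2 * Real.pi * t * u)) := by
    unfold KK
    congr 1
    apply intervalIntegral.integral_congr
    intro t ht
    rw [Set.uIcc_of_le zero_le_one] at ht
    simp only [kk_in ht.1 ht.2]
  rw [intervalIntegral.integral_const_mul] at hInt0
  rw [hk]
  have e : Real.cos (2 * Real.pi * 1 * u) = 1 - 2 * Real.sin (Real.pi * u) ^ 2 := by
    rw [show 2 * Real.pi * 1 * u = 2 * (Real.pi * u) by ring, Real.cos_two_mul, Real.cos_sq']
    ring
  simp only [e] at hInt0
  simp at hInt0
  linear_combination hInt0

lemma KK_nonpos {u : ℝ} (hu : 1 < |u|) : KK u ≤ 0 := by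
  have h := KK_ident u
  have h1 : 1 < u ^ 2 := by
    rw [← sq_abs]; nlinarith
  by_contra hc
  push Not at hc
  have : 0 < Real.pi ^ 2 * u ^ 2 * (u ^ 2 - 1) * KK u := by
    have := Real.pi_pos
    have : 0 < u ^ 2 - 1 := by linarith
    positivity
  nlinarith [sq_nonneg (Real.sin (Real.pi * u))]

lemma KK_abs_le (u : ℝ) : |KK u| ≤ 4 := by
  unfold KK
  rw [abs_mul, abs_of_pos (by norm_num : (0:ℝ) < 2)]
  have := intervalIntegral.norm_integral_le_of_norm_le_const (a := (0:ℝ)) (b := 1) (C := 2)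
    (f := fun t => kk t * Real.cos (2 * Real.pi * t * u)) (by
      intro t _
      rw [norm_mul]
      calc _ ≤ (2:ℝ) * 1 := by
            gcongr
            · exact kk_abs_le t
            · exact Real.abs_cos_le_one _
        _ = 2 := by ring)
  rw [Real.norm_eq_abs] at this
  simp at this
  linarith

lemma KK_bound (u : ℝ) : |KK u| ≤ 20 * (1 + u ^ 2)⁻¹ := by
  rw [← div_eq_mul_inv, le_div_iff₀ (by positivity)]
  rcases le_or_gt (u ^ 2) 4 with h | h
  · have := KK_abs_le u
    nlinarith [abs_nonneg (KK u)]
  · have h1 := KK_ident u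
    have h2 : Real.pi ^ 2 * u ^ 2 * (u ^ 2 - 1) * |KK u| ≤ 1 := by
      have : |Real.pi ^ 2 * u ^ 2 * (1 - u ^ 2) * KK u| ≤ 1 := by
        rw [h1, abs_of_nonneg (sq_nonneg _)]
        exact Real.sin_sq_le_one _
      rw [abs_mul, abs_mul, abs_of_nonneg (by positivity), abs_of_neg (by linarith : 1 - u ^ 2 < 0)]
        at this
      linarith
    have h3 : (1 + u ^ 2) ≤ Real.pi ^ 2 * u ^ 2 * (u ^ 2 - 1) := by
      have hpi := Real.pi_gt_three
      have : 9 ≤ Real.pi ^ 2 := by nlinarith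
      have h4 : 1 + u ^ 2 ≤ u ^ 2 * (u ^ 2 - 1) := by nlinarith
      have h5 : 0 ≤ u ^ 2 * (u ^ 2 - 1) := by nlinarith
      nlinarith
    nlinarith [abs_nonneg (KK u)]

lemma KK_fourier (u : ℝ) :
    ∫ t : ℝ, (kk t : ℂ) * Complex.exp (-(2 * Real.pi * t * u : ℝ) * Complex.I) = (KK u : ℂ) := by
  have h1 : ∫ t : ℝ, (kk t : ℂ) * Complex.exp (-(2 * Real.pi * t * u : ℝ) * Complex.I)
      = ∫ t in (-1:ℝ)..1, (kk t : ℂ) * Complex.exp (-(2 * Real.pi * t * u : ℝ) * Complex.I) := by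
    rw [intervalIntegral.integral_of_le (by norm_num)]
    symm
    apply MeasureTheory.setIntegral_eq_integral_of_forall_compl_eq_zero
    intro t ht
    rw [kk_out]; · simp
    by_contra hc
    push Not at hc
    rw [abs_lt] at hc
    exact ht ⟨hc.1, hc.2.le⟩
  have hc : Continuous fun t : ℝ =>
      (kk t : ℂ) * Complex.exp (-(2 * Real.pi * t * u : ℝ) * Complex.I) := by
    have := kk_cont
    fun_prop
  rw [h1, ← intervalIntegral.integral_add_adjacent_intervals (b := 0)
    (hc.intervalIntegrable _ _) (hc.intervalIntegrable _ _)]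
  have h2 := intervalIntegral.integral_comp_neg (a := 0) (b := 1)
    (fun t : ℝ => (kk t : ℂ) * Complex.exp (-(2 * Real.pi * t * u : ℝ) * Complex.I))
  rw [neg_zero] at h2
  have hc2 : Continuous fun t : ℝ =>
      (kk (-t) : ℂ) * Complex.exp (-(2 * Real.pi * (-t) * u : ℝ) * Complex.I) :=
    hc.comp continuous_neg
  rw [← h2, ← intervalIntegral.integral_add (hc2.intervalIntegrable _ _)
    (hc.intervalIntegrable _ _)]
  unfold KK
  rw [← intervalIntegral.integral_const_mul, ← intervalIntegral.integral_ofReal]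
  congr 1
  ext t
  rw [kk_even]
  push_cast
  rw [Complex.cos]
  ring_nf

lemma KK_cont : Continuous KK := by
  unfold KK
  refine continuous_const.mul ?_
  refine intervalIntegral.continuous_parametric_intervalIntegral_of_continuous' ?_ _ _
  have := kk_cont
  fun_prop

lemma KK_int : MeasureTheory.Integrable KK := by
  refine (integrable_inv_one_add_sq.const_mul 20).mono' KK_cont.aestronglyMeasurable ?_
  exact Filter.Eventually.of_forall KK_bound

open FourierTransform in
lemma KK_integral : ∫ u, KK u = 1 := by
  have hF : (𝓕 (fun t => (kk t : ℂ)) : ℝ → ℂ) = fun u => (KK u : ℂ) := by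
    ext u
    rw [Real.fourier_eq', ← KK_fourier]
    congr 1; ext t
    simp [mul_comm]
    left
    congr 1
    ring
  have h := kk_intC.fourierInv_fourier_eq (v := 0) (by rw [hF]; exact KK_int.ofReal)
    (Complex.continuous_ofReal.comp kk_cont).continuousAt
  rw [hF, Real.fourierInv_eq'] at h
  simp [kk_zero] at h
  rw [integral_complex_ofReal] at h
  exact_mod_cast h

lemma term_formula (f : ℕ → ℝ) (η y : ℝ) (n : ℕ) :
    LSeries.term (fun n => (f n : ℂ)) (1 + η + y * Complex.I) n =
      ((if n = 0 then 0 else f n * Real.exp (-((1 + η) * Real.log n)) : ℝ) : ℂ) *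
        Complex.exp (-(y * Real.log n : ℝ) * Complex.I) := by
  rcases eq_or_ne n 0 with rfl | hn
  · simp
  · rw [LSeries.term_of_ne_zero hn, Complex.cpow_def_of_ne_zero (by exact_mod_cast hn),
      ← Complex.natCast_log, if_neg hn, div_eq_mul_inv, ← Complex.exp_neg]
    push_cast
    rw [mul_assoc, ← Complex.exp_add]
    congr 2
    ring

lemma tau_sum (f : ℕ → ℝ)
    (hsum : ∀ s : ℂ, 1 < s.re → LSeriesSummable (fun n => (f n : ℂ)) s)
    (l L η : ℝ) (hη : 0 < η) :
    ∫ t : ℝ, (kk t : ℂ) * Complex.exp ((2 * Real.pi * t * (l * L) : ℝ) * Complex.I) *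
      LSeries (fun n => (f n : ℂ)) (1 + η + (2 * Real.pi * t * l : ℝ) * Complex.I) =
    ((∑' n : ℕ, (if n = 0 then 0 else f n * Real.exp (-((1 + η) * Real.log n))) *
      KK (l * (Real.log n - L)) : ℝ) : ℂ) := by
  set c : ℕ → ℝ := fun n => if n = 0 then 0 else f n * Real.exp (-((1 + η) * Real.log n)) with hc
  let F : ℕ → ℝ → ℂ := fun n t => (kk t : ℂ) *
    Complex.exp ((2 * Real.pi * t * (l * L) : ℝ) * Complex.I) *
    LSeries.term (fun n => (f n : ℂ)) (1 + η + (2 * Real.pi * t * l : ℝ) * Complex.I) n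
  have hF : ∀ n t, F n t = (c n : ℂ) * ((kk t : ℂ) *
      Complex.exp (-(2 * Real.pi * t * (l * (Real.log n - L)) : ℝ) * Complex.I)) := by
    intro n t
    simp only [F]
    rw [term_formula]
    rw [show -((2 * Real.pi * t * (l * (Real.log n - L)) : ℝ) : ℂ) * Complex.I =
      ((2 * Real.pi * t * (l * L) : ℝ) : ℂ) * Complex.I +
        -((2 * Real.pi * t * l * Real.log n : ℝ) : ℂ) * Complex.I by push_cast; ring,
        Complex.exp_add]
    ring
  have hcs : Summable fun n => ‖(c n : ℂ)‖ := by
    have := (hsum (1 + η + (0:ℝ) * Complex.I) (by simp [hη])).norm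
    refine this.congr ?_
    intro n
    rw [term_formula]
    simp [hc]
  have hFn : ∀ n t, ‖F n t‖ = ‖(c n : ℂ)‖ * |kk t| := by
    intro n t
    rw [hF, norm_mul, norm_mul, ← Complex.ofReal_neg, Complex.norm_exp_ofReal_mul_I]
    simp
  have hFc : ∀ n, Continuous (F n) := by
    intro n
    have : F n = _ := funext (hF n)
    rw [this]
    have := kk_cont
    fun_prop
  have hFi : ∀ n, MeasureTheory.Integrable (F n) := by
    intro n
    refine (kk_int.abs.const_mul ‖(c n : ℂ)‖).mono' (hFc n).aestronglyMeasurable ?_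
    exact Filter.Eventually.of_forall fun t => (hFn n t).le
  have hs : Summable fun n => ∫ t, ‖F n t‖ := by
    simp_rw [hFn, MeasureTheory.integral_const_mul]
    exact hcs.mul_right _
  have h := MeasureTheory.hasSum_integral_of_summable_integral_norm hFi hs
  have h2 : ∀ n, ∫ t, F n t = ((c n * KK (l * (Real.log n - L)) : ℝ) : ℂ) := by
    intro n
    simp_rw [hF]
    rw [MeasureTheory.integral_const_mul, KK_fourier]
    push_cast; rfl
  have h3 : ∀ t : ℝ, ∑' n, F n t = (kk t : ℂ) *
      Complex.exp ((2 * Real.pi * t * (l * L) : ℝ) * Complex.I) *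
      LSeries (fun n => (f n : ℂ)) (1 + η + (2 * Real.pi * t * l : ℝ) * Complex.I) := by
    intro t
    simp only [F]
    rw [tsum_mul_left]; rfl
  simp_rw [h3, h2] at h
  rw [Complex.ofReal_tsum]
  exact h.tsum_eq.symm

lemma tau_int (l L η : ℝ) (hη : 0 < η) :
    ∫ t : ℝ, (kk t : ℂ) * Complex.exp ((2 * Real.pi * t * (l * L) : ℝ) * Complex.I) *
      (1 / (η + (2 * Real.pi * t * l : ℝ) * Complex.I)) =
    ((∫ v in Set.Ioi (0:ℝ), Real.exp (-η * v) * KK (l * (v - L)) : ℝ) : ℂ) := by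
  have h1 : ∀ t : ℝ, (kk t : ℂ) * Complex.exp ((2 * Real.pi * t * (l * L) : ℝ) * Complex.I) *
      (1 / (η + (2 * Real.pi * t * l : ℝ) * Complex.I)) =
      ∫ v in Set.Ioi (0:ℝ), ((kk t : ℂ) * (Real.exp (-η * v) : ℂ)) *
        Complex.exp (-(2 * Real.pi * t * (l * (v - L)) : ℝ) * Complex.I) := by
    intro t
    have := integral_exp_mul_complex_Ioi
      (a := -(η + (2 * Real.pi * t * l : ℝ) * Complex.I)) (by simp [hη]) 0
    rw [neg_div_neg_eq, Complex.ofReal_zero, mul_zero, Complex.exp_zero] at this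
    rw [← this, ← MeasureTheory.integral_const_mul]
    congr 1; ext v
    rw [Complex.ofReal_exp, mul_assoc (kk t : ℂ), mul_assoc (kk t : ℂ), ← Complex.exp_add,
      ← Complex.exp_add]
    congr 2
    push_cast
    ring
  simp_rw [h1]
  rw [MeasureTheory.integral_integral_swap]
  · rw [← integral_complex_ofReal]
    congr 1; ext v
    rw [Complex.ofReal_mul, ← KK_fourier, ← MeasureTheory.integral_const_mul]
    congr 1; ext t
    ring
  · have hb : MeasureTheory.Integrable (fun z : ℝ × ℝ => (kk z.1 : ℂ) * (Real.exp (-η * z.2) : ℂ))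
        (MeasureTheory.volume.prod (MeasureTheory.volume.restrict (Set.Ioi (0:ℝ)))) := by
      refine kk_intC.mul_prod (g := fun v : ℝ => (Real.exp (-η * v) : ℂ)) ?_
      have := integrableOn_exp_mul_Ioi (a := -η) (by linarith) 0
      exact MeasureTheory.Integrable.ofReal this
    refine hb.mono ?_ ?_
    · apply Continuous.aestronglyMeasurable
      have := kk_cont
      simp only [Function.uncurry_def]
      fun_prop
    · refine Filter.Eventually.of_forall fun z => ?_
      simp only [Function.uncurry_def]
      rw [norm_mul _ (Complex.exp _), ← Complex.ofReal_neg, Complex.norm_exp_ofReal_mul_I, mul_one]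

lemma kk_mul_int {h : ℝ → ℂ} (hh : Continuous h) :
    MeasureTheory.Integrable (fun t => (kk t : ℂ) * h t) := by
  apply Continuous.integrable_of_hasCompactSupport
  · have := kk_cont
    fun_prop
  · apply HasCompactSupport.mul_right
    exact kk_compact.comp_left (g := fun x : ℝ => (x : ℂ)) (by simp)

lemma KK_scaled_int (l L : ℝ) (hl : 0 < l) :
    MeasureTheory.Integrable (fun v => KK (l * (v - L))) := by
  have := (KK_int.comp_mul_left' hl.ne').comp_sub_right L
  exact this

lemma KK_tail_tendsto (l : ℝ) (hl : 0 < l) :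
    Filter.Tendsto (fun L : ℝ => ∫ v in Set.Ioi (0:ℝ), KK (l * (v - L))) Filter.atTop
      (nhds (1 / l)) := by
  have h1 : ∀ L : ℝ, ∫ v in Set.Ioi (0:ℝ), KK (l * (v - L)) =
      ∫ v, (Set.Ioi (-L)).indicator (fun v => KK (l * v)) v := by
    intro L
    rw [← MeasureTheory.integral_indicator measurableSet_Ioi,
      ← MeasureTheory.integral_sub_right_eq_self
        ((Set.Ioi (-L)).indicator (fun v => KK (l * v))) L]
    congr 1; ext v
    simp [Set.indicator]
  have h2 : (1 / l : ℝ) = ∫ v, KK (l * v) := by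
    rw [MeasureTheory.Measure.integral_comp_mul_left, KK_integral, abs_of_pos (by positivity)]
    simp
  simp_rw [h1]
  rw [h2]
  have hi : MeasureTheory.Integrable (fun v => KK (l * v)) := KK_int.comp_mul_left' hl.ne'
  refine MeasureTheory.tendsto_integral_filter_of_dominated_convergence (fun v => ‖KK (l * v)‖)
    ?_ ?_ hi.norm ?_
  · exact Filter.Eventually.of_forall fun L => hi.aestronglyMeasurable.indicator measurableSet_Ioi
  · exact Filter.Eventually.of_forall fun L => Filter.Eventually.of_forall fun v =>
      norm_indicator_le_norm_self _ _
  · refine Filter.Eventually.of_forall fun v => ?_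
    apply tendsto_const_nhds.congr'
    filter_upwards [Filter.eventually_gt_atTop (-v)] with L hL
    rw [Set.indicator_of_mem]
    simp; linarith

lemma tau_ineq (f : ℕ → ℝ) (hf : ∀ n, 0 ≤ f n)
    (hsum : ∀ s : ℂ, 1 < s.re → LSeriesSummable (fun n => (f n : ℂ)) s)
    (G : ℂ → ℂ) (A : ℝ) (hG : ContinuousOn G {s | 1 ≤ s.re})
    (hGe : ∀ s : ℂ, 1 < s.re → G s = LSeries (fun n => (f n : ℂ)) s - A / (s - 1))
    (l L : ℝ) (hl : 0 < l)
    (hno : ∀ n : ℕ, n ≠ 0 → f n ≠ 0 → 1 < |l * (Real.log n - L)|) :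
    (∫ t : ℝ, (kk t : ℂ) * Complex.exp ((2 * Real.pi * t * (l * L) : ℝ) * Complex.I) *
      G (1 + (2 * Real.pi * t * l : ℝ) * Complex.I)).re +
      A * ∫ v in Set.Ioi (0:ℝ), KK (l * (v - L)) ≤ 0 := by
  have hGc : ∀ η : ℝ, 0 ≤ η →
      Continuous fun t : ℝ => G (1 + η + (2 * Real.pi * t * l : ℝ) * Complex.I) := by
    intro η hη
    refine hG.comp_continuous (by fun_prop) ?_
    intro t
    simp [hη]
  -- the inequality for positive η
  have key : ∀ η : ℝ, 0 < η →
      (∫ t : ℝ, (kk t : ℂ) * Complex.exp ((2 * Real.pi * t * (l * L) : ℝ) * Complex.I) *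
        G (1 + η + (2 * Real.pi * t * l : ℝ) * Complex.I)).re +
        A * ∫ v in Set.Ioi (0:ℝ), Real.exp (-η * v) * KK (l * (v - L)) ≤ 0 := by
    intro η hη
    have e1 := tau_sum f hsum l L η hη
    have e2 := tau_int l L η hη
    have hre : ∀ t : ℝ, 1 < (1 + η + (2 * Real.pi * t * l : ℝ) * Complex.I : ℂ).re := by
      intro t; simp [hη]
    have hdec : ∀ t : ℝ, (kk t : ℂ) * Complex.exp ((2 * Real.pi * t * (l * L) : ℝ) * Complex.I) *
        LSeries (fun n => (f n : ℂ)) (1 + η + (2 * Real.pi * t * l : ℝ) * Complex.I) =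
        (kk t : ℂ) * Complex.exp ((2 * Real.pi * t * (l * L) : ℝ) * Complex.I) *
        G (1 + η + (2 * Real.pi * t * l : ℝ) * Complex.I) +
        A * ((kk t : ℂ) * Complex.exp ((2 * Real.pi * t * (l * L) : ℝ) * Complex.I) *
      (1 / (η + (2 * Real.pi * t * l : ℝ) * Complex.I))) := by
      intro t
      rw [hGe _ (hre t)]
      rw [show (1 + η + (2 * Real.pi * t * l : ℝ) * Complex.I - 1 : ℂ) =
        η + (2 * Real.pi * t * l : ℝ) * Complex.I by ring]
      ring
    simp_rw [hdec] at e1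
    rw [MeasureTheory.integral_add, MeasureTheory.integral_const_mul, e2] at e1
    · have e3 := congrArg Complex.re e1
      rw [Complex.add_re, ← Complex.ofReal_mul, Complex.ofReal_re, Complex.ofReal_re] at e3
      rw [e3]
      apply tsum_nonpos
      intro n
      split_ifs with hn
      · simp
      · by_cases hfn : f n = 0
        · simp [hfn]
        · apply mul_nonpos_of_nonneg_of_nonpos
          · have := hf n
            positivity
          · exact KK_nonpos (hno n hn hfn)
    · simp_rw [mul_assoc]
      refine kk_mul_int ?_
      have := hGc η hη.le
      simp_rw [mul_assoc] at this
      exact Continuous.mul (by fun_prop) this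
    · apply MeasureTheory.Integrable.const_mul
      simp_rw [mul_assoc]
      refine kk_mul_int ?_
      refine Continuous.mul (by fun_prop) (Continuous.div continuous_const (by fun_prop) ?_)
      intro t h0
      have := congrArg Complex.re h0
      simp at this
      linarith
  -- limits
  have lim1 : Filter.Tendsto (fun η : ℝ => ∫ t : ℝ, (kk t : ℂ) *
      Complex.exp ((2 * Real.pi * t * (l * L) : ℝ) * Complex.I) *
        G (1 + η + (2 * Real.pi * t * l : ℝ) * Complex.I)) (nhdsWithin 0 (Set.Ioi 0))
      (nhds (∫ t : ℝ, (kk t : ℂ) * Complex.exp ((2 * Real.pi * t * (l * L) : ℝ) * Complex.I) *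
      G (1 + (2 * Real.pi * t * l : ℝ) * Complex.I))) := by
    obtain ⟨C, hC⟩ : ∃ C, ∀ s ∈ Set.Icc (1:ℝ) 2 ×ℂ Set.Icc (-(2 * Real.pi * l)) (2 * Real.pi * l),
        ‖G s‖ ≤ C := by
      apply IsCompact.exists_bound_of_continuousOn (isCompact_Icc.reProdIm isCompact_Icc)
      refine hG.mono ?_
      intro s hs
      exact hs.1.1
    refine MeasureTheory.tendsto_integral_filter_of_dominated_convergence
      (fun t => |kk t| * C) ?_ ?_ (kk_int.abs.mul_const C) ?_
    · filter_upwards [self_mem_nhdsWithin] with η hη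
      have := kk_cont
      apply Continuous.aestronglyMeasurable
      exact Continuous.mul (by fun_prop) (hGc η (le_of_lt hη))
    · filter_upwards [Ioc_mem_nhdsGT (show (0:ℝ) < 1 by norm_num)] with η hη
      refine Filter.Eventually.of_forall fun t => ?_
      rw [norm_mul, norm_mul, Complex.norm_exp_ofReal_mul_I, mul_one, Complex.norm_real,
        Real.norm_eq_abs]
      rcases le_or_gt 1 |t| with ht | ht
      · simp [kk_out ht]
      · apply mul_le_mul_of_nonneg_left _ (abs_nonneg _)
        apply hC
        rw [Complex.mem_reProdIm]
        have hp : 0 < 2 * Real.pi * l := by have := Real.pi_pos; positivity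
        rw [abs_lt] at ht
        constructor
        · simp; exact ⟨hη.1.le, by linarith [hη.2]⟩
        · simp
          constructor <;> nlinarith
    · refine Filter.Eventually.of_forall fun t => ?_
      apply Filter.Tendsto.const_mul
      have hcw : ContinuousWithinAt G {s | 1 ≤ s.re} (1 + (2 * Real.pi * t * l : ℝ) * Complex.I) :=
        hG _ (by simp)
      refine hcw.tendsto.comp ?_
      apply tendsto_nhdsWithin_of_tendsto_nhds_of_eventually_within
      · have : Continuous fun η : ℝ => (1 + η + (2 * Real.pi * t * l : ℝ) * Complex.I : ℂ) := by
          fun_prop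
        have := this.tendsto 0
        simp only [Complex.ofReal_zero, add_zero] at this
        exact this.mono_left nhdsWithin_le_nhds
      · filter_upwards [self_mem_nhdsWithin] with η hη
        simpa using le_of_lt hη
  have lim2 : Filter.Tendsto (fun η : ℝ => ∫ v in Set.Ioi (0:ℝ), Real.exp (-η * v) *
      KK (l * (v - L))) (nhdsWithin 0 (Set.Ioi 0))
      (nhds (∫ v in Set.Ioi (0:ℝ), KK (l * (v - L)))) := by
    have hi := (KK_scaled_int l L hl).restrict (s := Set.Ioi (0:ℝ))
    refine MeasureTheory.tendsto_integral_filter_of_dominated_convergence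
      (fun v => ‖KK (l * (v - L))‖) ?_ ?_ hi.norm ?_
    · refine Filter.Eventually.of_forall fun η => ?_
      apply Continuous.aestronglyMeasurable
      have := KK_cont
      fun_prop
    · filter_upwards [self_mem_nhdsWithin] with η hη
      filter_upwards [MeasureTheory.ae_restrict_mem measurableSet_Ioi] with v hv
      rw [norm_mul]
      apply mul_le_of_le_one_left (norm_nonneg _)
      rw [Real.norm_eq_abs, Real.abs_exp, Real.exp_le_one_iff]
      have h1 : (0:ℝ) < η := hη
      have h2 : (0:ℝ) < v := hv
      nlinarith
    · refine Filter.Eventually.of_forall fun v => ?_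
      have : Continuous fun η : ℝ => Real.exp (-η * v) * KK (l * (v - L)) := by fun_prop
      have := this.tendsto 0
      simp only [neg_zero, zero_mul, Real.exp_zero, one_mul] at this
      exact this.mono_left nhdsWithin_le_nhds
  refine le_of_tendsto (((Complex.continuous_re.tendsto _).comp lim1).add (lim2.const_mul A)) ?_
  filter_upwards [self_mem_nhdsWithin] with η hη
  exact key η hη

theorem tauber (f : ℕ → ℝ) (hf : ∀ n, 0 ≤ f n)
    (hsum : ∀ s : ℂ, 1 < s.re → LSeriesSummable (fun n => (f n : ℂ)) s)
    (G : ℂ → ℂ) (A : ℝ) (hA : 0 < A) (hG : ContinuousOn G {s | 1 ≤ s.re})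
    (hGe : ∀ s : ℂ, 1 < s.re → G s = LSeries (fun n => (f n : ℂ)) s - A / (s - 1))
    (l : ℝ) (hl : 0 < l) :
    ∃ L₀ : ℝ, ∀ L ≥ L₀, ∃ n : ℕ, n ≠ 0 ∧ f n ≠ 0 ∧ |l * (Real.log n - L)| ≤ 1 := by
  have hR : Filter.Tendsto (fun L : ℝ => ∫ t : ℝ, (kk t : ℂ) *
      Complex.exp ((2 * Real.pi * t * (l * L) : ℝ) * Complex.I) *
      G (1 + (2 * Real.pi * t * l : ℝ) * Complex.I)) Filter.atTop (nhds 0) := by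
    have h := Real.tendsto_integral_exp_smul_cocompact
      (fun t : ℝ => (kk t : ℂ) * G (1 + (2 * Real.pi * t * l : ℝ) * Complex.I))
    have h2 : Filter.Tendsto (fun L : ℝ => -(l * L)) Filter.atTop (Filter.cocompact ℝ) := by
      refine Filter.Tendsto.mono_right ?_ atBot_le_cocompact
      exact Filter.tendsto_neg_atTop_atBot.comp (Filter.tendsto_id.const_mul_atTop hl)
    refine (h.comp h2).congr ?_
    intro L
    simp only [Function.comp]
    congr 1; ext t
    rw [Circle.smul_def, Real.fourierChar_apply, smul_eq_mul]
    rw [show 2 * Real.pi * -(t * -(l * L)) = 2 * Real.pi * t * (l * L) by ring]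
    ring
  have hT := ((Complex.continuous_re.tendsto _).comp hR).add
    ((KK_tail_tendsto l hl).const_mul A)
  have hpos : (0:ℝ) < Complex.re 0 + A * (1 / l) := by
    simp only [Complex.zero_re, zero_add]; positivity
  obtain ⟨L₀, hL₀⟩ := Filter.eventually_atTop.mp (hT.eventually (lt_mem_nhds hpos))
  refine ⟨L₀, fun L hL => ?_⟩
  by_contra hcon
  push Not at hcon
  have := tau_ineq f hf hsum G A hG hGe l L hl hcon
  exact absurd (hL₀ L hL) (not_lt.mpr this)

/-- Prime powers in arithmetic progressions are asymptotically dense. -/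
theorem primePow_AP (M a : ℕ) (hM : M ≠ 0) (ha : a.Coprime M) (c : ℝ) (hc : 0 < c) :
    ∃ X₀ : ℝ, ∀ X ≥ X₀, ∃ q : ℕ, IsPrimePow q ∧ q ≡ a [MOD M] ∧ X ≤ q ∧ (q : ℝ) ≤ (1 + c) * X := by
  have : NeZero M := ⟨hM⟩
  have hu : IsUnit (a : ZMod M) := (ZMod.isUnit_iff_coprime a M).mpr ha
  have hlc : 0 < Real.log (1 + c) := Real.log_pos (by linarith)
  obtain ⟨L₀, hL₀⟩ := tauber (ArithmeticFunction.vonMangoldt.residueClass (a : ZMod M))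
    (fun n => ArithmeticFunction.vonMangoldt.residueClass_nonneg _ n)
    (fun s hs => LSeriesSummable_of_abscissaOfAbsConv_lt_re <|
      (ArithmeticFunction.vonMangoldt.abscissaOfAbsConv_residueClass_le_one _).trans_lt
        (by exact_mod_cast hs))
    (ArithmeticFunction.vonMangoldt.LFunctionResidueClassAux (a : ZMod M))
    ((M.totient : ℝ)⁻¹) (by have := Nat.totient_pos.mpr (Nat.pos_of_ne_zero hM); positivity)
    (ArithmeticFunction.vonMangoldt.continuousOn_LFunctionResidueClassAux _)
    (fun s hs => by
      rw [ArithmeticFunction.vonMangoldt.eqOn_LFunctionResidueClassAux hu hs]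
      push_cast; rfl)
    (2 / Real.log (1 + c)) (by positivity)
  refine ⟨max 1 (Real.exp L₀), fun X hX => ?_⟩
  have hX1 : 1 ≤ X := (le_max_left _ _).trans hX
  have hX2 : L₀ ≤ Real.log X := by
    rw [Real.le_log_iff_exp_le (by linarith)]; exact (le_max_right _ _).trans hX
  obtain ⟨n, hn0, hfn, hn⟩ := hL₀ (Real.log X + Real.log (1 + c) / 2) (by linarith)
  have hn' : (0:ℝ) < n := by exact_mod_cast Nat.pos_of_ne_zero hn0
  have hmem : (n : ZMod M) = a ∧ ArithmeticFunction.vonMangoldt n ≠ 0 := by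
    unfold ArithmeticFunction.vonMangoldt.residueClass at hfn
    have := Set.indicator_apply_ne_zero.mp hfn
    exact ⟨this.1, this.2⟩
  refine ⟨n, ArithmeticFunction.vonMangoldt_ne_zero_iff.mp hmem.2,
    (ZMod.natCast_eq_natCast_iff _ _ _).mp hmem.1, ?_⟩
  have h3 : |Real.log n - (Real.log X + Real.log (1 + c) / 2)| ≤ Real.log (1 + c) / 2 := by
    rw [abs_mul, abs_of_pos (by positivity), div_mul_eq_mul_div, div_le_one hlc] at hn
    linarith
  rw [abs_le] at h3
  constructor
  · rw [← Real.log_le_log_iff (by linarith) hn']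
    linarith
  · rw [← Real.log_le_log_iff hn' (by positivity), Real.log_mul (by positivity) (by linarith)]
    linarith

lemma exists_chi (F : Type) [Field F] [Fintype F] [DecidableEq F] (a b h : ℕ) (ha : a ≠ 0)
    (hb : b ≠ 0) (hh : h ≠ 0) (hab : a.Coprime b) (hN : Nat.card Fˣ = a * b * h) :
    ∃ χ : Fˣ →* Multiplicative (ZMod a × ZMod b), ∀ (y : Multiplicative (ZMod a × ZMod b))
      (s : Finset Fˣ), (∀ z ∈ s, χ z = y) → s.card ≤ h := by
  have : NeZero (a * b * h) := ⟨by positivity⟩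
  have : NeZero a := ⟨ha⟩
  have : NeZero b := ⟨hb⟩
  let φ : Fˣ ≃* Multiplicative (ZMod (a * b * h)) :=
    mulEquivOfCyclicCardEq (by rw [hN]; simp)
  let ρ : ZMod (a * b * h) →+* ZMod a × ZMod b :=
    (ZMod.castHom (show a ∣ a * b * h from ⟨b * h, by ring⟩) (ZMod a)).prod
      (ZMod.castHom (show b ∣ a * b * h from ⟨a * h, by ring⟩) (ZMod b))
  refine ⟨(AddMonoidHom.toMultiplicative ρ.toAddMonoidHom).comp φ.toMonoidHom, ?_⟩
  intro y s hs
  let g : Fˣ → ℕ := fun z => (φ z).toAdd.val / (a * b)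
  have hle : s.card ≤ (Finset.range h).card := by
    apply Finset.card_le_card_of_injOn g
    · intro z _
      simp only [Finset.coe_range, Set.mem_Iio, g]
      apply Nat.div_lt_of_lt_mul
      exact ZMod.val_lt _
    · intro z hz w hw hzw
      have e : ρ (φ z).toAdd = ρ (φ w).toAdd := by
        have := (hs z hz).trans (hs w hw).symm
        exact this
      have e1 : (φ z).toAdd.val ≡ (φ w).toAdd.val [MOD a] := by
        have := congrArg Prod.fst e
        simp only [ρ, RingHom.prod_apply, ZMod.castHom_apply] at this
        rw [ZMod.cast_eq_val, ZMod.cast_eq_val] at this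
        exact (ZMod.natCast_eq_natCast_iff _ _ _).mp this
      have e2 : (φ z).toAdd.val ≡ (φ w).toAdd.val [MOD b] := by
        have := congrArg Prod.snd e
        simp only [ρ, RingHom.prod_apply, ZMod.castHom_apply] at this
        rw [ZMod.cast_eq_val, ZMod.cast_eq_val] at this
        exact (ZMod.natCast_eq_natCast_iff _ _ _).mp this
      have e3 : (φ z).toAdd.val ≡ (φ w).toAdd.val [MOD a * b] :=
        (Nat.modEq_and_modEq_iff_modEq_mul hab).mp ⟨e1, e2⟩
      have e4 : (φ z).toAdd.val = (φ w).toAdd.val := by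
        rw [← Nat.div_add_mod (φ z).toAdd.val (a * b), ← Nat.div_add_mod (φ w).toAdd.val (a * b)]
        have e5 : (φ z).toAdd.val / (a * b) = (φ w).toAdd.val / (a * b) := hzw
        rw [e5, e3]
      have e6 := ZMod.val_injective _ e4
      exact φ.injective (Multiplicative.toAdd.injective e6)
  simpa using hle

/-- incidence relation of the algebraic construction -/
def relE {F : Type} [Field F] {a b : ℕ} (χ : Fˣ →* Multiplicative (ZMod a × ZMod b))
    (p p' : F × (ZMod a × ZMod b)) : Prop :=
  ∃ z : Fˣ, (z : F) = p.1 + p'.1 ∧ χ z = Multiplicative.ofAdd (p.2 + p'.2)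

lemma relE_symm {F : Type} [Field F] {a b : ℕ} (χ : Fˣ →* Multiplicative (ZMod a × ZMod b))
    {p p' : F × (ZMod a × ZMod b)} (h : relE χ p p') : relE χ p' p := by
  obtain ⟨z, h1, h2⟩ := h
  exact ⟨z, by rw [h1, add_comm], by rw [h2, add_comm]⟩

lemma relE_common {F : Type} [Field F] [DecidableEq F] {a b h : ℕ}
    (χ : Fˣ →* Multiplicative (ZMod a × ZMod b))
    (hχ : ∀ (y : Multiplicative (ZMod a × ZMod b))
      (s : Finset Fˣ), (∀ z ∈ s, χ z = y) → s.card ≤ h)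
    (p₁ p₂ : F × (ZMod a × ZMod b)) (hne : p₁ ≠ p₂) (s : Finset (F × (ZMod a × ZMod b)))
    (hs : ∀ p ∈ s, relE χ p₁ p ∧ relE χ p₂ p) : s.card ≤ h := by
  choose! f1 hf1 using fun p hp => (hs p hp).1
  choose! f2 hf2 using fun p hp => (hs p hp).2
  have hx : s.Nonempty → p₁.1 ≠ p₂.1 := by
    rintro ⟨p, hp⟩ he
    apply hne
    have hz : f1 p = f2 p := by
      apply Units.ext
      rw [(hf1 p hp).1, (hf2 p hp).1, he]
    have := (hf1 p hp).2.symm.trans ((congrArg χ hz).trans (hf2 p hp).2)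
    have := Multiplicative.ofAdd.injective this
    exact Prod.ext he (add_right_cancel this)
  have hinj : Set.InjOn (fun p => f1 p / f2 p) s := by
    intro p hp w hw hpw
    have hpw' : f1 p * f2 w = f1 w * f2 p := by
      have : f1 p / f2 p = f1 w / f2 w := hpw
      rwa [div_eq_div_iff_mul_eq_mul] at this
    have h1 : (p₁.1 + p.1) * (p₂.1 + w.1) = (p₁.1 + w.1) * (p₂.1 + p.1) := by
      rw [← (hf1 p hp).1, ← (hf2 w hw).1, ← (hf1 w hw).1, ← (hf2 p hp).1]
      exact_mod_cast congrArg Units.val hpw'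
    have h2 : (p₁.1 - p₂.1) * (w.1 - p.1) = 0 := by linear_combination h1
    have h3 : p.1 = w.1 := by
      rcases mul_eq_zero.mp h2 with h | h
      · exact absurd (sub_eq_zero.mp h) (hx ⟨p, hp⟩)
      · exact (sub_eq_zero.mp h).symm
    have hz : f1 p = f1 w := by
      apply Units.ext
      rw [(hf1 p hp).1, (hf1 w hw).1, h3]
    have := (hf1 p hp).2.symm.trans ((congrArg χ hz).trans (hf1 w hw).2)
    have := Multiplicative.ofAdd.injective this
    exact Prod.ext h3 (add_left_cancel this)
  rw [← Finset.card_image_of_injOn hinj]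
  apply hχ (Multiplicative.ofAdd (p₁.2 - p₂.2))
  intro z hz
  obtain ⟨p, hp, rfl⟩ := Finset.mem_image.mp hz
  rw [map_div, (hf1 p hp).2, (hf2 p hp).2, ← ofAdd_sub]
  congr 1
  abel

lemma transport_fin {W V : Type} [Fintype V] (H : SimpleGraph W) (G : SimpleGraph V) (r k : ℕ)
    (hfree : ¬ ContainsSub H G) (hrk : IsRKGraph G r k) :
    ∃ (n : ℕ) (G' : SimpleGraph (Fin n)), ¬ ContainsSub H G' ∧ IsRKGraph G' r k := by
  classical
  let e := Fintype.equivFin V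
  refine ⟨Fintype.card V, G.comap e.symm, ?_, ?_⟩
  · rintro ⟨f, hf⟩
    apply hfree
    refine ⟨⟨fun w => e.symm (f w), fun {x y} hxy => f.map_rel hxy⟩, ?_⟩
    exact e.symm.injective.comp hf
  · obtain ⟨P, h1, h2, h3⟩ := hrk
    refine ⟨fun i => (P i).map e.toEmbedding, ?_, ?_, ?_⟩
    · intro v
      obtain ⟨i, hi, hu⟩ := h1 (e.symm v)
      refine ⟨i, ?_, ?_⟩
      · simpa [Finset.mem_map_equiv] using hi
      · intro j hj
        apply hu
        simpa [Finset.mem_map_equiv] using hj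
    · intro i; simpa using h2 i
    · intro i j hij
      obtain ⟨u, hu, w, hw, ha⟩ := h3 i j hij
      exact ⟨e u, by simpa using hu, e w, by simpa using hw, by simpa using ha⟩

/-- The algebraic construction. -/
theorem construction (F : Type) [Field F] [Fintype F] (a b h d r : ℕ) (ha : a ≠ 0)
    (hb : b ≠ 0) (hh : h ≠ 0) (hhd : h ≤ d) (hab : a.Coprime b) (hN : Nat.card Fˣ = a * b * h)
    (h2 : (2 : F) ≠ 0) (hr : r ≤ Fintype.card F * min a b) :
    ∃ (n : ℕ) (G : SimpleGraph (Fin n)),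
      ¬ ContainsSub (completeBipartiteGraph (Fin 2) (Fin (d + 1))) G ∧ IsRKGraph G r (a + b) := by
  classical
  have : NeZero a := ⟨ha⟩
  have : NeZero b := ⟨hb⟩
  obtain ⟨χ, hχ⟩ := exists_chi F a b h ha hb hh hab hN
  obtain ⟨g⟩ : Nonempty (Fin r ↪ F × Fin (min a b)) := by
    apply Function.Embedding.nonempty_of_card_le
    simpa using hr
  have cast_inj : ∀ (m : ℕ), min a b ≤ m → ∀ i j : Fin (min a b),
      ((i : ℕ) : ZMod m) = ((j : ℕ) : ZMod m) → i = j := by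
    intro m hm i j hij
    have := (ZMod.natCast_eq_natCast_iff' _ _ _).mp hij
    rw [Nat.mod_eq_of_lt (i.2.trans_le hm), Nat.mod_eq_of_lt (j.2.trans_le hm)] at this
    exact Fin.ext this
  let lab : Fin r × (ZMod a ⊕ ZMod b) → F × (ZMod a × ZMod b) := fun v =>
    match v.2 with
    | Sum.inl α => ((g v.1).1, (α, (((g v.1).2 : ℕ) : ZMod b)))
    | Sum.inr β => (-(g v.1).1 - 1, ((((g v.1).2 : ℕ) : ZMod a), β))
  let side : Fin r × (ZMod a ⊕ ZMod b) → Bool := fun v => v.2.isLeft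
  have lab_inj : ∀ v w, side v = side w → lab v = lab w → v = w := by
    rintro ⟨i, α | β⟩ ⟨j, α' | β'⟩ hs hl
    · simp only [lab, Prod.mk.injEq] at hl
      obtain ⟨h1, h2, h3⟩ := hl
      have : i = j := g.injective (Prod.ext h1 (cast_inj b (min_le_right _ _) _ _ h3))
      rw [this, h2]
    · simp [side] at hs
    · simp [side] at hs
    · simp only [lab, Prod.mk.injEq] at hl
      obtain ⟨h1, h2, h3⟩ := hl
      have h1' : (g i).1 = (g j).1 := by linear_combination -h1
      have : i = j := g.injective (Prod.ext h1' (cast_inj a (min_le_left _ _) _ _ h2))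
      rw [this, h3]
  let G : SimpleGraph (Fin r × (ZMod a ⊕ ZMod b)) :=
    { Adj := fun v w => side v ≠ side w ∧ relE χ (lab v) (lab w)
      symm := ⟨fun v w h => ⟨h.1.symm, relE_symm χ h.2⟩⟩
      loopless := ⟨fun v h => h.1 rfl⟩ }
  have hmain : ∀ i j : Fin r, (g i).1 - (g j).1 - 1 ≠ 0 →
      ∃ α β, G.Adj (i, Sum.inl α) (j, Sum.inr β) := by
    intro i j hz
    let z : Fˣ := Units.mk0 _ hz
    let c := (χ z).toAdd
    refine ⟨c.1 - (((g j).2 : ℕ) : ZMod a), c.2 - (((g i).2 : ℕ) : ZMod b), ?_, z, ?_, ?_⟩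
    · simp [side]
    · simp [z, lab]; ring
    · simp [lab, c]
  apply transport_fin _ G
  · rintro ⟨f, hf⟩
    have hadj : ∀ (i : Fin 2) (k : Fin (d + 1)), G.Adj (f (Sum.inl i)) (f (Sum.inr k)) := by
      intro i k
      apply f.map_rel
      simp
    have hside : ∀ k, side (f (Sum.inr k)) = ! side (f (Sum.inl 0)) := by
      intro k
      have := (hadj 0 k).1
      revert this
      cases side (f (Sum.inr k)) <;> cases side (f (Sum.inl 0)) <;> simp
    have hs01 : side (f (Sum.inl 0)) = side (f (Sum.inl 1)) := by
      have h0 := (hadj 0 0).1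
      have h1 := (hadj 1 0).1
      revert h0 h1
      cases side (f (Sum.inr 0)) <;> cases side (f (Sum.inl 0)) <;>
        cases side (f (Sum.inl 1)) <;> simp
    have hne : lab (f (Sum.inl 0)) ≠ lab (f (Sum.inl 1)) := by
      intro he
      have := hf (lab_inj _ _ hs01 he)
      simp at this
    have hinj : Function.Injective fun k : Fin (d + 1) => lab (f (Sum.inr k)) := by
      intro k k' hk
      have := hf (lab_inj _ _ ((hside k).trans (hside k').symm) hk)
      simpa using this
    have := relE_common χ hχ _ _ hne
      (Finset.univ.image fun k : Fin (d + 1) => lab (f (Sum.inr k))) (by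
        intro p hp
        obtain ⟨k, _, rfl⟩ := Finset.mem_image.mp hp
        exact ⟨(hadj 0 k).2, (hadj 1 k).2⟩)
    rw [Finset.card_image_of_injective _ hinj] at this
    simp at this
    omega
  · refine ⟨fun i => Finset.univ.map ⟨fun s => (i, s), Prod.mk_right_injective i⟩, ?_, ?_, ?_⟩
    · rintro ⟨i, s⟩
      refine ⟨i, by simp, ?_⟩
      intro j hj
      simpa using hj
    · intro i
      simp [ZMod.card]
    · intro i j hij
      by_cases hz : (g i).1 - (g j).1 - 1 = 0
      · have hz' : (g j).1 - (g i).1 - 1 ≠ 0 := by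
          intro h0
          apply h2
          linear_combination -hz - h0
        obtain ⟨α, β, hA⟩ := hmain j i hz'
        exact ⟨_, by simp, _, by simp, hA.symm⟩
      · obtain ⟨α, β, hA⟩ := hmain i j hz
        exact ⟨_, by simp, _, by simp, hA⟩

/-- Kővári–Sós–Turán type inequality for `(r,k)`-graphs. -/
theorem lower_ineq (d n r k : ℕ) (G : SimpleGraph (Fin n))
    (hfree : ¬ ContainsSub (completeBipartiteGraph (Fin 2) (Fin (d + 1))) G)
    (hrk : IsRKGraph G r k) :
    ∃ S : ℕ, r * (r - 1) ≤ S ∧ S * S ≤ n * S + d * n ^ 3 ∧ n ≤ r * k := by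
  classical
  obtain ⟨P, h1, h2, h3⟩ := hrk
  let dg : Fin n → ℕ := fun v => (Finset.univ.filter fun w => G.Adj v w).card
  have hS : ∑ v, dg v = (Finset.univ.filter fun p : Fin n × Fin n => G.Adj p.1 p.2).card := by
    rw [Finset.card_filter, Fintype.sum_prod_type]
    simp only [dg, Finset.card_filter]
  have hcom : ∀ u w, u ≠ w → (Finset.univ.filter fun v => G.Adj v u ∧ G.Adj v w).card ≤ d := by
    intro u w huw
    by_contra hc
    push Not at hc
    obtain ⟨t, ht, htc⟩ := Finset.exists_subset_card_eq (Nat.succ_le_of_lt hc)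
    let e := (Finset.equivFinOfCardEq htc).symm
    have he : ∀ k, G.Adj (e k : Fin n) u ∧ G.Adj (e k : Fin n) w := by
      intro k
      have := ht (e k).2
      simpa using this
    apply hfree
    refine ⟨⟨Sum.elim (fun i : Fin 2 => if i = 0 then u else w) (fun k => (e k : Fin n)), ?_⟩, ?_⟩
    · rintro (i | k) (j | l) hA
      · simp at hA
      · simp only [Sum.elim_inl, Sum.elim_inr]
        split_ifs
        · exact (he l).1.symm
        · exact (he l).2.symm
      · simp only [Sum.elim_inl, Sum.elim_inr]
        split_ifs
        · exact (he k).1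
        · exact (he k).2
      · simp at hA
    · rintro (i | k) (j | l) hA
      · fin_cases i <;> fin_cases j <;> simp_all
      · exfalso
        have hA' : (if i = 0 then u else w) = (e l : Fin n) := hA
        split_ifs at hA'
        · exact (he l).1.ne hA'.symm
        · exact (he l).2.ne hA'.symm
      · exfalso
        have hA' : (e k : Fin n) = (if j = 0 then u else w) := hA
        split_ifs at hA'
        · exact (he k).1.ne hA'
        · exact (he k).2.ne hA'
      · have hA' : (e k : Fin n) = (e l : Fin n) := hA
        rw [e.injective (Subtype.ext hA')]
  refine ⟨∑ v, dg v, ?_, ?_, ?_⟩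
  · rw [hS]
    choose pt hpt using fun v => (h1 v).exists
    have : (Finset.univ.filter fun p : Fin r × Fin r => p.1 ≠ p.2).card = r * (r - 1) := by
      have := Finset.offDiag_card (Finset.univ : Finset (Fin r))
      rw [Finset.card_univ, Fintype.card_fin] at this
      rw [Nat.mul_sub_one, ← this]
      congr 1
      ext p; simp
    rw [← this]
    apply Finset.card_le_card_of_surjOn (fun p => (pt p.1, pt p.2))
    rintro ⟨i, j⟩ hij
    simp at hij
    obtain ⟨u, hu, w, hw, hA⟩ := h3 i j hij
    refine ⟨(u, w), by simpa using hA, ?_⟩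
    exact Prod.ext ((h1 u).unique (hpt u) hu) ((h1 w).unique (hpt w) hw)
  · have c1 : (∑ v, dg v) * (∑ v, dg v) ≤ n * ∑ v, dg v ^ 2 := by
      have := sq_sum_le_card_mul_sum_sq (s := (Finset.univ : Finset (Fin n))) (f := dg)
      rw [Finset.card_univ, Fintype.card_fin] at this
      nlinarith
    have c2 : ∑ v, dg v ^ 2 = ∑ u, ∑ w, (Finset.univ.filter fun v => G.Adj v u ∧ G.Adj v w).card := by
      have : ∀ v, dg v ^ 2 = ∑ u, ∑ w, if G.Adj v u ∧ G.Adj v w then 1 else 0 := by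
        intro v
        simp only [dg, Finset.card_filter, sq, Finset.sum_mul_sum]
        refine Finset.sum_congr rfl fun u _ => Finset.sum_congr rfl fun w _ => ?_
        by_cases hu : G.Adj v u <;> by_cases hw : G.Adj v w <;> simp [hu, hw]
      simp_rw [this, Finset.card_filter]
      rw [Finset.sum_comm]
      refine Finset.sum_congr rfl fun u _ => ?_
      rw [Finset.sum_comm]
    have c3 : ∑ v, dg v ^ 2 ≤ ∑ v, dg v + d * n ^ 2 := by
      rw [c2]
      calc _ ≤ ∑ u : Fin n, ∑ w : Fin n, ((if u = w then dg u else 0) + d) := by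
            refine Finset.sum_le_sum fun u _ => Finset.sum_le_sum fun w _ => ?_
            by_cases huw : u = w
            · subst huw
              simp only [and_self, if_true, dg, G.adj_comm]
              exact Nat.le_add_right _ _
            · simp only [huw, if_false, zero_add]
              exact hcom u w huw
        _ = ∑ v, dg v + d * n ^ 2 := by
            simp [Finset.sum_add_distrib]
            ring
    calc _ ≤ n * ∑ v, dg v ^ 2 := c1
      _ ≤ n * (∑ v, dg v + d * n ^ 2) := Nat.mul_le_mul_left _ c3
      _ = _ := by ring
  · have : (Finset.univ : Finset (Fin n)) ⊆ Finset.univ.biUnion P := by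
      intro v _
      obtain ⟨i, hi, _⟩ := h1 v
      exact Finset.mem_biUnion.mpr ⟨i, Finset.mem_univ _, hi⟩
    calc n = (Finset.univ : Finset (Fin n)).card := by simp
      _ ≤ _ := Finset.card_le_card this
      _ ≤ (Finset.univ : Finset (Fin r)).card * k :=
        Finset.card_biUnion_le_card_mul _ _ _ fun i _ => h2 i
      _ = r * k := by simp

lemma upper_q (d m e o a b q r : ℕ) (heo : e * o = m * (m + 1)) (hsum : e + o = 2 * m + 1)
    (he : e ≤ m + 1) (ho : o ≤ m + 1) (hm : 1 ≤ m) (hmd : m * (m + 1) ≤ d)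
    (hq : IsPrimePow q) (ha : Odd a) (hodd : Odd q) (hqa : q = e * a + 1) (hqb : q + 1 = o * b)
    (hr : (m + 1) * r ≤ (q - 1) ^ 3) :
    ∃ k n : ℕ, ∃ G : SimpleGraph (Fin n),
      ¬ ContainsSub (completeBipartiteGraph (Fin 2) (Fin (d + 1))) G ∧ IsRKGraph G r k ∧
      k * (m * (m + 1)) ≤ (q + 1) * (2 * m + 1) := by
  obtain ⟨p, j, hp, hj, hpq⟩ := hq
  have hp' : p.Prime := hp.nat_prime
  have : Fact p.Prime := ⟨hp'⟩
  have hcard : Nat.card (GaloisField p (2 * j)) = q ^ 2 := by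
    rw [GaloisField.card p (2 * j) (by omega), mul_comm 2 j, pow_mul, hpq]
  have : Fintype (GaloisField p (2 * j)) := Fintype.ofFinite _
  have hcard' : Fintype.card (GaloisField p (2 * j)) = q ^ 2 := by
    rw [← Nat.card_eq_fintype_card, hcard]
  have hb0 : b ≠ 0 := by rintro rfl; simp at hqb
  have ha0 : a ≠ 0 := by rintro rfl; simp at ha
  have hpodd : p ≠ 2 := by
    rintro rfl
    rw [← hpq] at hodd
    have : Even (2 ^ j) := (even_two).pow_of_ne_zero (by omega)
    exact (Nat.not_even_iff_odd.2 hodd) this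
  have h2 : (2 : GaloisField p (2 * j)) ≠ 0 := by
    intro h
    have : ((2 : ℕ) : GaloisField p (2 * j)) = 0 := by exact_mod_cast h
    rw [CharP.cast_eq_zero_iff (GaloisField p (2 * j)) p] at this
    exact hpodd ((Nat.prime_dvd_prime_iff_eq hp' Nat.prime_two).1 this)
  have hab : a.Coprime b := by
    have hg1 : Nat.gcd a b ∣ 2 := by
      have h1 : Nat.gcd a b ∣ e * a := (Nat.gcd_dvd_left a b).mul_left e
      have h3 : Nat.gcd a b ∣ e * a + 2 := by
        have : e * a + 2 = o * b := by omega
        rw [this]; exact (Nat.gcd_dvd_right a b).mul_left o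
      exact (Nat.dvd_add_right h1).1 h3
    rcases (Nat.dvd_prime Nat.prime_two).1 hg1 with h | h
    · exact h
    · exfalso
      have : 2 ∣ a := h ▸ Nat.gcd_dvd_left a b
      exact (Nat.not_even_iff_odd.2 ha) (even_iff_two_dvd.2 this)
  have hN : Nat.card (GaloisField p (2 * j))ˣ = a * b * (m * (m + 1)) := by
    rw [Nat.card_units, hcard, ← heo]
    have : q ^ 2 = (e * a) * (o * b) + 1 := by
      rw [← hqb, hqa]; ring
    rw [this, Nat.add_sub_cancel]; ring
  have hrr : r ≤ Fintype.card (GaloisField p (2 * j)) * min a b := by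
    rw [hcard']
    have h1 : q - 1 = e * a := by omega
    have hmin : q - 1 ≤ (m + 1) * min a b := by
      rcases min_choice a b with h | h <;> rw [h]
      · rw [h1]; exact Nat.mul_le_mul_right a he
      · have := Nat.mul_le_mul_right b ho
        omega
    have h3 : (q - 1) ^ 3 ≤ q ^ 2 * ((m + 1) * min a b) := by
      calc (q - 1) ^ 3 = (q - 1) ^ 2 * (q - 1) := by ring
        _ ≤ _ := Nat.mul_le_mul (Nat.pow_le_pow_left (by omega) 2) hmin
    have h4 : (m + 1) * r ≤ (m + 1) * (q ^ 2 * min a b) := by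
      calc _ ≤ _ := hr.trans h3
        _ = _ := by ring
    exact Nat.le_of_mul_le_mul_left h4 (by omega)
  obtain ⟨n, G, hG, hG'⟩ := construction (GaloisField p (2 * j)) a b (m * (m + 1)) d r ha0 hb0
    (by positivity) hmd hab hN h2 hrr
  refine ⟨a + b, n, G, hG, hG', ?_⟩
  have : (a + b) * (m * (m + 1)) = o * (e * a) + e * (o * b) := by rw [← heo]; ring
  rw [this, ← hqb, ← hsum]
  nlinarith

lemma exists_m (d : ℕ) (hd : 2 ≤ d) : ∃ m, 1 ≤ m ∧ m * (m + 1) ≤ d ∧ d < (m + 1) * (m + 2) := by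
  classical
  have hex : ∃ m, d < (m + 1) * (m + 2) := ⟨d, by nlinarith⟩
  have hs := Nat.find_spec hex
  have h0 : Nat.find hex ≠ 0 := by
    intro h; rw [h] at hs; omega
  obtain ⟨j, hj⟩ := Nat.exists_eq_succ_of_ne_zero h0
  have hmin := Nat.find_min hex (m := j) (by omega)
  refine ⟨Nat.find hex, by omega, ?_, hs⟩
  rw [hj]; simp only [Nat.succ_eq_add_one]; nlinarith

lemma exists_res (m : ℕ) (hm : 1 ≤ m) : ∃ e o a0 : ℕ, e * o = m * (m + 1) ∧ e + o = 2 * m + 1 ∧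
    e ≤ m + 1 ∧ o ≤ m + 1 ∧ 0 < e ∧ 0 < o ∧ a0.Coprime (2 * e * o) ∧
    ∀ q, 2 ≤ q → q ≡ a0 [MOD 2 * e * o] →
      ∃ a b, Odd a ∧ Odd q ∧ q = e * a + 1 ∧ q + 1 = o * b := by
  obtain ⟨e, o, heo, hs, he, ho, h0e, h0o, heven, hodd, hc⟩ : ∃ e o : ℕ, e * o = m * (m + 1) ∧
      e + o = 2 * m + 1 ∧ e ≤ m + 1 ∧ o ≤ m + 1 ∧ 0 < e ∧ 0 < o ∧ Even e ∧ Odd o ∧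
      Nat.Coprime e o := by
    rcases Nat.even_or_odd m with h | h
    · exact ⟨m, m + 1, rfl, by ring, by omega, by omega, by omega, by omega, h, h.add_one,
        by simp⟩
    · exact ⟨m + 1, m, by ring, by ring, by omega, by omega, by omega, by omega, h.add_one, h,
        by simp⟩
  have hc2 : Nat.Coprime (2 * e) o :=
    Nat.Coprime.mul_left (Nat.coprime_two_left.2 hodd) hc
  obtain ⟨a0, h1, h2⟩ := Nat.chineseRemainder hc2 (1 + e) (o - 1)
  obtain ⟨e', he'⟩ := heven
  have key : ∀ q, 2 ≤ q → q ≡ a0 [MOD 2 * e * o] →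
      ∃ a b, Odd a ∧ Odd q ∧ q = e * a + 1 ∧ q + 1 = o * b := by
    intro q hq hqa
    have g1 : q ≡ 1 + e [MOD 2 * e] := (Nat.ModEq.of_mul_right o hqa).trans h1
    have g2 : q ≡ o - 1 [MOD o] := (Nat.ModEq.of_mul_left (2 * e) hqa).trans h2
    have g2' : o ∣ q + 1 := by
      have := g2.add_right 1
      rw [Nat.sub_add_cancel h0o] at this
      exact (Nat.modEq_zero_iff_dvd).1 (this.trans (by simp [Nat.ModEq]))
    obtain ⟨b, hb⟩ := g2'
    have g3 : (1 + e) % (2 * e) = 1 + e ∨ e = 1 := by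
      by_cases h : e = 1
      · exact Or.inr h
      · left; exact Nat.mod_eq_of_lt (by omega)
    rcases g3 with g3 | g3
    swap
    · omega
    have g4 : q % (2 * e) = 1 + e := by rw [← g3]; exact g1
    have g5 := Nat.div_add_mod q (2 * e)
    rw [g4] at g5
    generalize q / (2 * e) = t at g5
    refine ⟨2 * t + 1, b, ⟨_, rfl⟩, ?_, ?_, hb⟩
    · refine ⟨e * t + e', ?_⟩
      rw [← g5, mul_add 2, ← mul_assoc]; omega
    · rw [← g5]; ring
  refine ⟨e, o, a0, heo, hs, he, ho, h0e, h0o, ?_, key⟩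
  apply Nat.Coprime.mul_right
  · have : Nat.gcd a0 (2 * e) = Nat.gcd (1 + e) (2 * e) := h1.gcd_eq
    rw [Nat.Coprime, this]
    apply Nat.Coprime.mul_right
    · apply Nat.Coprime.symm
      rw [Nat.coprime_two_left]
      exact ⟨e', by omega⟩
    · simp
  · have : Nat.gcd a0 o = Nat.gcd (o - 1) o := h2.gcd_eq
    rw [Nat.Coprime, this]
    obtain ⟨t, rfl⟩ := Nat.exists_eq_succ_of_ne_zero h0o.ne'
    simp

lemma cube_root_cube (r : ℕ) : ((r : ℝ) ^ ((1 : ℝ) / 3)) ^ 3 = r := by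
  rw [← Real.rpow_natCast, ← Real.rpow_mul (by positivity)]; norm_num

lemma cube_root_large (B : ℝ) : ∃ R : ℕ, ∀ r : ℕ, R ≤ r → B ≤ (r : ℝ) ^ ((1 : ℝ) / 3) := by
  refine ⟨⌈|B| ^ 3⌉₊, fun r hr => ?_⟩
  have h1 : |B| ^ 3 ≤ (r : ℝ) := (Nat.le_ceil _).trans (by exact_mod_cast hr)
  rw [← cube_root_cube r] at h1
  exact (le_abs_self B).trans ((pow_le_pow_iff_left₀ (abs_nonneg B) (by positivity)
    (by norm_num)).1 h1)

lemma const_le (d m : ℕ) (hd : 12 ≤ d) (hm : 1 ≤ m) (hdm : d < (m + 1) * (m + 2)) :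
    ((2 * m + 1 : ℝ) / (m * (m + 1))) * (((m + 1 : ℕ) : ℝ) ^ ((1 : ℝ) / 3)) ≤
      2 * (d : ℝ) ^ (-(1 / 3 : ℝ)) * (1 - 1.5 * (d : ℝ) ^ (-(1 / 2 : ℝ))) ^ (-(5 / 3 : ℝ)) := by
  have hd' : (12 : ℝ) ≤ d := by exact_mod_cast hd
  have hm' : (1 : ℝ) ≤ m := by exact_mod_cast hm
  have hdm' : (d : ℝ) < (m + 1) * (m + 2) := by exact_mod_cast hdm
  obtain ⟨y, hy⟩ : ∃ y, y = √(d : ℝ) := ⟨_, rfl⟩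
  have hyd : y ^ 2 = d := by rw [hy]; exact Real.sq_sqrt (by positivity)
  have hy3 : 3 < y := by
    rw [hy]; exact Real.lt_sqrt_of_sq_lt (by linarith)
  have hhalf : (d : ℝ) ^ (-(1 / 2 : ℝ)) = y⁻¹ := by
    rw [Real.rpow_neg (by positivity), ← Real.sqrt_eq_rpow, hy]
  obtain ⟨s, hs⟩ : ∃ s, s = y - 3 / 2 := ⟨_, rfl⟩
  have hs0 : 0 < s := by linarith
  have hsm : s ≤ m := by
    by_contra h
    push Not at h
    nlinarith
  have hb : 1 - 1.5 * (d : ℝ) ^ (-(1 / 2 : ℝ)) = s / y := by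
    rw [hhalf, hs]; field_simp; norm_num; ring
  rw [hb]
  refine (pow_le_pow_iff_left₀ (n := 3) (by positivity) (by positivity) (by norm_num)).1 ?_
  rw [mul_pow, cube_root_cube, mul_pow, mul_pow]
  have e1 : ((d : ℝ) ^ (-(1 / 3 : ℝ))) ^ 3 = (d : ℝ)⁻¹ := by
    rw [← Real.rpow_natCast, ← Real.rpow_mul (by positivity)]
    norm_num
    rw [Real.rpow_neg_one]
  have e2 : ((s / y) ^ (-(5 / 3 : ℝ))) ^ 3 = ((s / y) ^ 5)⁻¹ := by
    rw [← Real.rpow_natCast, ← Real.rpow_mul (by positivity),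
      ← Real.rpow_natCast (s / y) 5, ← Real.rpow_neg (by positivity)]
    norm_num
  rw [e1, e2, ← hyd]
  have e3 : 2 ^ 3 * (y ^ 2)⁻¹ * ((s / y) ^ 5)⁻¹ = (2 + 3 / s) ^ 3 / s ^ 2 := by
    have : y = s + 3 / 2 := by linarith
    have hy0 : y ≠ 0 := by linarith
    have : 2 + 3 / s = 2 * y / s := by rw [this]; field_simp
    rw [this]; field_simp
  have e4 : ((2 * m + 1 : ℝ) / (m * (m + 1))) ^ 3 * ((m + 1 : ℕ) : ℝ) =
      (2 + 1 / m) ^ 3 / (m + 1) ^ 2 := by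
    push_cast; field_simp
  rw [e3, e4]
  have h13 : (1 : ℝ) / m ≤ 3 / s := by
    rw [div_le_div_iff₀ (by linarith) hs0]; linarith
  gcongr
  linarith

lemma upper_ex (d : ℕ) (hd : 12 ≤ d) (ε : ℝ) (hε : 0 < ε) : ∃ R : ℕ, ∀ r : ℕ, R ≤ r →
    ∃ k n : ℕ, ∃ G : SimpleGraph (Fin n),
      ¬ ContainsSub (completeBipartiteGraph (Fin 2) (Fin (d + 1))) G ∧ IsRKGraph G r k ∧
      (k : ℝ) ≤ (2 * (d : ℝ) ^ (-(1 / 3 : ℝ)) *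
        (1 - 1.5 * (d : ℝ) ^ (-(1 / 2 : ℝ))) ^ (-(5 / 3 : ℝ)) + ε) * (r : ℝ) ^ ((1 : ℝ) / 3) := by
  obtain ⟨m, hm, hmd, hdm⟩ := exists_m d (by omega)
  obtain ⟨e, o, a0, heo, hsum, he, ho, h0e, h0o, hcop, hres⟩ := exists_res m hm
  have hT := const_le d m hd hm hdm
  generalize 2 * (d : ℝ) ^ (-(1 / 3 : ℝ)) *
        (1 - 1.5 * (d : ℝ) ^ (-(1 / 2 : ℝ))) ^ (-(5 / 3 : ℝ)) = T at hT ⊢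
  have hm' : (1 : ℝ) ≤ m := by exact_mod_cast hm
  obtain ⟨K, hK⟩ : ∃ K : ℝ, K = (2 * m + 1 : ℝ) / (m * (m + 1)) := ⟨_, rfl⟩
  have hK0 : 0 < K := by rw [hK]; positivity
  obtain ⟨μ, hμ⟩ : ∃ μ : ℝ, μ = ((m + 1 : ℕ) : ℝ) ^ ((1 : ℝ) / 3) := ⟨_, rfl⟩
  have hμ0 : 0 < μ := by rw [hμ]; positivity
  have hμ3 : μ ^ 3 = ((m + 1 : ℕ) : ℝ) := by rw [hμ]; exact cube_root_cube _
  rw [← hK, ← hμ] at hT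
  obtain ⟨c, hc⟩ : ∃ c : ℝ, c = ε / (2 * K * μ) := ⟨_, rfl⟩
  have hc0 : 0 < c := by rw [hc]; positivity
  have hcK : c * K * μ = ε / 2 := by rw [hc]; field_simp
  obtain ⟨X₀, hX₀⟩ := primePow_AP (2 * e * o) a0 (by positivity) hcop c hc0
  obtain ⟨R, hR⟩ := cube_root_large (max (X₀ / μ) (2 * K * (2 + c) / ε))
  refine ⟨R, fun r hr => ?_⟩
  have hx := hR r hr
  have hx3 := cube_root_cube r
  have hxn : 0 ≤ (r : ℝ) ^ ((1 : ℝ) / 3) := by positivity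
  generalize (r : ℝ) ^ ((1 : ℝ) / 3) = x at hx hx3 hxn ⊢
  have hx1 := (le_max_left _ _).trans hx
  have hx2 := (le_max_right _ _).trans hx
  rw [div_le_iff₀ hμ0] at hx1
  rw [div_le_iff₀ hε] at hx2
  obtain ⟨q, hq, hqa, hq1, hq2⟩ := hX₀ (1 + μ * x) (by linarith)
  have hq2' : 2 ≤ q := hq.two_le
  obtain ⟨a, b, ha, hqo, hqa, hqb⟩ := hres q hq2' hqa
  have hrq : (m + 1) * r ≤ (q - 1) ^ 3 := by
    have h1 : ((q - 1 : ℕ) : ℝ) = (q : ℝ) - 1 := by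
      rw [Nat.cast_sub (by omega)]; norm_num
    have h2 : (((m + 1) * r : ℕ) : ℝ) ≤ (((q - 1) ^ 3 : ℕ) : ℝ) := by
      rw [Nat.cast_mul, ← hμ3, ← hx3, Nat.cast_pow, h1, ← mul_pow]
      exact pow_le_pow_left₀ (by positivity) (by linarith) 3
    exact_mod_cast h2
  obtain ⟨k, n, G, hG, hG', hk⟩ := upper_q d m e o a b q r heo hsum he ho hm hmd hq ha hqo hqa
    hqb hrq
  refine ⟨k, n, G, hG, hG', ?_⟩
  have hkK : (k : ℝ) ≤ K * (q + 1) := by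
    rw [hK, div_mul_eq_mul_div, le_div_iff₀ (by positivity)]
    have : ((k * (m * (m + 1)) : ℕ) : ℝ) ≤ (((q + 1) * (2 * m + 1) : ℕ) : ℝ) := by
      exact_mod_cast hk
    push_cast at this
    linarith
  have h3 : K * (q + 1) ≤ K * ((1 + c) * (1 + μ * x) + 1) := by gcongr
  have h4 : K * ((1 + c) * (1 + μ * x) + 1) = K * (2 + c) + (K * μ) * x + (c * K * μ) * x := by
    ring
  have h5 : (K * μ) * x ≤ T * x := by gcongr
  rw [hcK] at h4
  linarith

lemma lower_final (d : ℕ) (hd : 12 ≤ d) (ε : ℝ) (hε : 0 < ε) : ∃ R : ℕ, ∀ r : ℕ, R ≤ r →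
    ∀ k n : ℕ, ∀ G : SimpleGraph (Fin n),
      ¬ ContainsSub (completeBipartiteGraph (Fin 2) (Fin (d + 1))) G → IsRKGraph G r k →
      ((d : ℝ) ^ (-(1 / 3 : ℝ)) - ε) * (r : ℝ) ^ ((1 : ℝ) / 3) ≤ k := by
  have hd' : (12 : ℝ) ≤ d := by exact_mod_cast hd
  obtain ⟨c, hc⟩ : ∃ c : ℝ, c = (d : ℝ) ^ (-(1 / 3 : ℝ)) - ε := ⟨_, rfl⟩
  rw [← hc]
  rcases le_or_gt c 0 with hc0 | hc0
  · refine ⟨0, fun r _ k n G _ _ => ?_⟩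
    have h1 : c * (r : ℝ) ^ ((1 : ℝ) / 3) ≤ 0 :=
      mul_nonpos_of_nonpos_of_nonneg hc0 (by positivity)
    exact h1.trans (by positivity)
  have e1 : ((d : ℝ) ^ (-(1 / 3 : ℝ))) ^ 3 = (d : ℝ)⁻¹ := by
    rw [← Real.rpow_natCast, ← Real.rpow_mul (by positivity)]
    norm_num
    rw [Real.rpow_neg_one]
  have hdc : d * c ^ 3 < 1 := by
    have : c ^ 3 < (d : ℝ)⁻¹ := by
      rw [← e1]; exact pow_lt_pow_left₀ (by linarith) hc0.le (by norm_num)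
    calc d * c ^ 3 < d * (d : ℝ)⁻¹ := by gcongr
      _ = 1 := by field_simp
  obtain ⟨δ, hδ⟩ : ∃ δ : ℝ, δ = 1 - d * c ^ 3 := ⟨_, rfl⟩
  have hδ0 : 0 < δ := by linarith
  have hδ1 : δ ≤ 1 := by
    have : 0 ≤ d * c ^ 3 := by positivity
    linarith
  obtain ⟨R, hR⟩ := cube_root_large (max 1 ((3 + c) / δ))
  refine ⟨R, fun r hr k n G hG hG' => ?_⟩
  obtain ⟨S, hS1, hS2, hn⟩ := lower_ineq d n r k G hG hG'
  have hx := hR r hr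
  have hx3 := cube_root_cube r
  generalize (r : ℝ) ^ ((1 : ℝ) / 3) = x at hx hx3 ⊢
  have hx1 := (le_max_left _ _).trans hx
  have hx2 := (le_max_right _ _).trans hx
  rw [div_le_iff₀ hδ0] at hx2
  by_contra hlt
  push Not at hlt
  have hbig : 2 + c * x < δ * x ^ 3 := by
    have h1 : (3 + c) * x ≤ x * δ * x := by gcongr
    have h2 : x * δ * x ≤ δ * x ^ 3 := by
      have : 0 ≤ δ * x ^ 2 * (x - 1) := by
        apply mul_nonneg (by positivity); linarith
      nlinarith
    nlinarith
  have hr1 : (1 : ℝ) ≤ r := by rw [← hx3]; exact one_le_pow₀ hx1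
  have hr1' : 1 ≤ r := by exact_mod_cast hr1
  have hS1' : (r : ℝ) * (r - 1) ≤ S := by
    have : ((r * (r - 1) : ℕ) : ℝ) ≤ S := by exact_mod_cast hS1
    rw [Nat.cast_mul, Nat.cast_sub hr1'] at this
    simpa using this
  have hS2' : (S : ℝ) * S ≤ n * S + d * n ^ 3 := by exact_mod_cast hS2
  have hn' : (n : ℝ) ≤ r * k := by exact_mod_cast hn
  have hk0 : (0 : ℝ) ≤ k := by positivity
  have hn0 : (0 : ℝ) ≤ n := by positivity
  have hd0 : (0 : ℝ) ≤ d := by positivity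
  have hrk : (k : ℝ) + 2 < r := by
    have : δ * x ^ 3 ≤ x ^ 3 := by
      have : 0 ≤ x ^ 3 := by positivity
      nlinarith
    linarith
  have hk3 : (k : ℝ) ^ 3 ≤ c ^ 3 * r := by
    rw [← hx3, ← mul_pow]; exact pow_le_pow_left₀ hk0 hlt.le 3
  have hn3 : (n : ℝ) ^ 3 ≤ r ^ 3 * k ^ 3 := by
    rw [← mul_pow]; exact pow_le_pow_left₀ hn0 hn' 3
  have hA : (r : ℝ) * (r - 1) * (r * (r - 1 - k)) ≤ S * (S - n) := by
    apply mul_le_mul hS1' (by nlinarith) _ (by positivity)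
    apply mul_nonneg <;> linarith
  have hB : (r : ℝ) * (r - 1) * (r * (r - 1 - k)) ≤ d * (r ^ 3 * (c ^ 3 * r)) := by
    calc _ ≤ (S : ℝ) * (S - n) := hA
      _ ≤ d * n ^ 3 := by linarith
      _ ≤ d * (r ^ 3 * k ^ 3) := by gcongr
      _ ≤ _ := by gcongr
  have hC : (r : ℝ) ^ 2 * ((r - 1) * (r - 1 - k)) ≤ r ^ 2 * (d * c ^ 3 * r ^ 2) := by
    linarith
  have hD := le_of_mul_le_mul_left hC (by positivity)
  have hE : (r : ℝ) * (δ * r) ≤ r * (2 + k) := by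
    rw [hδ]; nlinarith
  have hF := le_of_mul_le_mul_left hE (by positivity)
  rw [hx3] at hbig
  linarith

/-- For every integer `d ≥ 12` and every `ε > 0`, for all sufficiently large `r`,
`(d^{−1/3} − ε)·r^{1/3} ≤ f(r, K_{2,d+1}) ≤ (2·d^{−1/3}·(1 − 1.5·d^{−1/2})^{−5/3} + ε)·r^{1/3}`. -/
theorem stmt1 (d : ℕ) (hd : 12 ≤ d) (ε : ℝ) (hε : 0 < ε) :
    ∃ r₀ : ℕ, ∀ r : ℕ, r₀ ≤ r →
      ((d : ℝ) ^ (-(1 / 3 : ℝ)) - ε) * (r : ℝ) ^ ((1 : ℝ) / 3)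
        ≤ (fGraph (completeBipartiteGraph (Fin 2) (Fin (d + 1))) r : ℝ) ∧
      (fGraph (completeBipartiteGraph (Fin 2) (Fin (d + 1))) r : ℝ)
        ≤ (2 * (d : ℝ) ^ (-(1 / 3 : ℝ)) * (1 - 1.5 * (d : ℝ) ^ (-(1 / 2 : ℝ))) ^ (-(5 / 3 : ℝ)) + ε) *
            (r : ℝ) ^ ((1 : ℝ) / 3) := by
  obtain ⟨R1, hR1⟩ := upper_ex d hd ε hε
  obtain ⟨R2, hR2⟩ := lower_final d hd ε hε
  refine ⟨max R1 R2, fun r hr => ?_⟩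
  obtain ⟨k, n, G, hG, hG', hk⟩ := hR1 r ((le_max_left _ _).trans hr)
  have hmem : k ∈ {k | ∃ (n : ℕ) (G : SimpleGraph (Fin n)),
      ¬ ContainsSub (completeBipartiteGraph (Fin 2) (Fin (d + 1))) G ∧ IsRKGraph G r k} :=
    ⟨n, G, hG, hG'⟩
  constructor
  · obtain ⟨n', G', hG1, hG2⟩ := Nat.sInf_mem ⟨k, hmem⟩
    exact hR2 r ((le_max_right _ _).trans hr) _ n' G' hG1 hG2
  · refine le_trans ?_ hk
    exact_mod_cast Nat.sInf_le hmem
end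

section
/- For every real ε > 0 there exists r₀ such that for all integers r ≥ r₀ one has f(r, C_6) ≤ (2 + ε) · r^{1/2}, where C_6 denotes the cycle of length 6. -/
open SimpleGraph

/-- A closed 6-cycle with distinct vertices does not exist. -/
def Free6 {V : Type} (G : SimpleGraph V) : Prop :=
  ∀ a b c d e f : V, G.Adj a b → G.Adj b c → G.Adj c d → G.Adj d e → G.Adj e f → G.Adj f a →
    a ≠ c → a ≠ e → c ≠ e → b ≠ d → b ≠ f → d ≠ f → False

theorem Free6.not_contains {V : Type} {G : SimpleGraph V} (h : Free6 G) :
    ¬ ContainsSub (SimpleGraph.cycleGraph 6) G := by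
  rintro ⟨f, hf⟩
  have hadj : ∀ i j : Fin 6, (SimpleGraph.cycleGraph 6).Adj i j → G.Adj (f i) (f j) :=
    fun i j hij => f.map_adj hij
  have hne : ∀ i j : Fin 6, i ≠ j → f i ≠ f j := fun i j hij => hf.ne hij
  refine h (f 0) (f 1) (f 2) (f 3) (f 4) (f 5) (hadj _ _ ?_) (hadj _ _ ?_) (hadj _ _ ?_)
    (hadj _ _ ?_) (hadj _ _ ?_) (hadj _ _ ?_) (hne _ _ ?_) (hne _ _ ?_) (hne _ _ ?_)
    (hne _ _ ?_) (hne _ _ ?_) (hne _ _ ?_)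
  all_goals decide

/-- There is a `C₆`-free graph whose parts are indexed by `I`, each part labelled injectively
by `K`, with an edge between any two distinct parts related by `R`. -/
def Cov (I : Type) (R : I → I → Prop) (K : Type) : Prop :=
  ∃ (V : Type) (_ : Finite V) (G : SimpleGraph V) (c : V → I) (g : V → K),
    Free6 G ∧ (∀ u v, c u = c v → g u = g v → u = v) ∧
    ∀ i j, i ≠ j → R i j → ∃ u w, c u = i ∧ c w = j ∧ G.Adj u w

theorem Cov.mono {I : Type} {R R' : I → I → Prop} {K K' : Type} (h : Cov I R K)
    (hR : ∀ i j, i ≠ j → R' i j → R i j) (φ : K → K') (hφ : Function.Injective φ) :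
    Cov I R' K' := by
  obtain ⟨V, hV, G, c, g, h1, h2, h3⟩ := h
  exact ⟨V, hV, G, c, φ ∘ g, h1, fun u v h h' => h2 u v h (hφ h'),
    fun i j hij hr => h3 i j hij (hR i j hij hr)⟩

/-- Disjoint union of graphs. -/
def dsum {V W : Type} (G : SimpleGraph V) (H : SimpleGraph W) : SimpleGraph (V ⊕ W) where
  Adj x y := match x, y with
    | Sum.inl u, Sum.inl v => G.Adj u v
    | Sum.inr u, Sum.inr v => H.Adj u v
    | _, _ => False
  symm := ⟨by rintro (x | x) (y | y) h <;> first | exact h.symm | exact h⟩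
  loopless := ⟨by rintro (x | x) h <;> exact h.ne rfl⟩

theorem Free6.sum {V W : Type} {G : SimpleGraph V} {H : SimpleGraph W} (hG : Free6 G)
    (hH : Free6 H) : Free6 (dsum G H) := by
  intro a b c d e f h1 h2 h3 h4 h5 h6 n1 n2 n3 n4 n5 n6
  rcases a with a | a <;> rcases b with b | b <;> first | exact h1.elim | skip
  all_goals rcases c with c | c <;> first | exact h2.elim | skip
  all_goals rcases d with d | d <;> first | exact h3.elim | skip
  all_goals rcases e with e | e <;> first | exact h4.elim | skip
  all_goals rcases f with f | f <;> first | exact h5.elim | skip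
  · exact hG a b c d e f h1 h2 h3 h4 h5 h6 (by simpa using n1) (by simpa using n2)
      (by simpa using n3) (by simpa using n4) (by simpa using n5) (by simpa using n6)
  · exact hH a b c d e f h1 h2 h3 h4 h5 h6 (by simpa using n1) (by simpa using n2)
      (by simpa using n3) (by simpa using n4) (by simpa using n5) (by simpa using n6)

theorem Cov.sum {I : Type} {R R' : I → I → Prop} {K K' : Type} (h : Cov I R K)
    (h' : Cov I R' K') : Cov I (fun i j => R i j ∨ R' i j) (K ⊕ K') := by
  obtain ⟨V, hV, G, c, g, h1, h2, h3⟩ := h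
  obtain ⟨V', hV', G', c', g', h1', h2', h3'⟩ := h'
  refine ⟨V ⊕ V', inferInstance, dsum G G', Sum.elim c c', Sum.map g g', h1.sum h1', ?_, ?_⟩
  · rintro (u | u) (v | v) h h'
    · simp only [Sum.elim_inl, Sum.map_inl, Sum.inl.injEq] at *
      exact h2 u v h h'
    · simp at h'
    · simp at h'
    · simp only [Sum.elim_inr, Sum.map_inr, Sum.inr.injEq] at *
      exact h2' u v h h'
  · rintro i j hij (hr | hr)
    · obtain ⟨u, w, a, b, e⟩ := h3 i j hij hr
      exact ⟨Sum.inl u, Sum.inl w, a, b, e⟩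
    · obtain ⟨u, w, a, b, e⟩ := h3' i j hij hr
      exact ⟨Sum.inr u, Sum.inr w, a, b, e⟩

/-- Disjoint copies of a graph. -/
def copies (I : Type) {V : Type} (G : SimpleGraph V) : SimpleGraph (I × V) where
  Adj x y := x.1 = y.1 ∧ G.Adj x.2 y.2
  symm := ⟨fun _ _ h => ⟨h.1.symm, h.2.symm⟩⟩
  loopless := ⟨fun _ h => G.loopless.irrefl _ h.2⟩

theorem Free6.copies {I V : Type} {G : SimpleGraph V} (h : Free6 G) : Free6 (copies I G) := by
  rintro ⟨a', a⟩ ⟨b', b⟩ ⟨c', c⟩ ⟨d', d⟩ ⟨e', e⟩ ⟨f', f⟩ ⟨i1, h1⟩ ⟨i2, h2⟩ ⟨i3, h3⟩ ⟨i4, h4⟩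
    ⟨i5, h5⟩ ⟨i6, h6⟩ n1 n2 n3 n4 n5 n6
  simp only at *
  subst i1 i2 i3 i4 i5
  exact h a b c d e f h1 h2 h3 h4 h5 h6 (by simpa using n1) (by simpa using n2)
      (by simpa using n3) (by simpa using n4) (by simpa using n5) (by simpa using n6)

theorem Cov.rows {J : Type} {K : Type} (I : Type) [Finite I]
    (h : Cov J (fun _ _ => True) K) : Cov (I × J) (fun x y => x.1 = y.1) K := by
  obtain ⟨V, hV, G, c, g, h1, h2, h3⟩ := h
  refine ⟨I × V, inferInstance, _root_.copies I G, fun x => (x.1, c x.2), fun x => g x.2,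
    h1.copies, ?_, ?_⟩
  · rintro ⟨a, u⟩ ⟨b, v⟩ h h'
    simp only [Prod.mk.injEq] at *
    exact ⟨h.1, h2 u v h.2 h'⟩
  · rintro ⟨a, i⟩ ⟨b, j⟩ hij hr
    simp only at hr
    subst hr
    obtain ⟨u, w, x, y, e⟩ := h3 i j (by simpa using hij) trivial
    exact ⟨(a, u), (a, w), by simp [x], by simp [y], rfl, e⟩

theorem Cov.comap {I J : Type} {R : J → J → Prop} {K : Type} (h : Cov J R K) (φ : I → J)
    (hφ : Function.Injective φ) : Cov I (fun x y => R (φ x) (φ y)) K := by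
  obtain ⟨V, hV, G, c, g, h1, h2, h3⟩ := h
  refine ⟨{v : V // ∃ i, φ i = c v}, inferInstance, G.comap Subtype.val, fun v => v.2.choose,
    fun v => g v.1, ?_, ?_, ?_⟩
  · rintro a b c d e f e1 e2 e3 e4 e5 e6 n1 n2 n3 n4 n5 n6
    exact h1 a b c d e f e1 e2 e3 e4 e5 e6 (Subtype.val_injective.ne n1)
      (Subtype.val_injective.ne n2) (Subtype.val_injective.ne n3) (Subtype.val_injective.ne n4)
      (Subtype.val_injective.ne n5) (Subtype.val_injective.ne n6)
  · rintro ⟨u, hu⟩ ⟨v, hv⟩ h h'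
    simp only at h h'
    have : c u = c v := by rw [← hu.choose_spec, ← hv.choose_spec, h]
    exact Subtype.ext (h2 u v this h')
  · intro i j hij hr
    obtain ⟨u, w, x, y, e⟩ := h3 (φ i) (φ j) (hφ.ne hij) hr
    have hu : ∃ i, φ i = c u := ⟨i, x.symm⟩
    have hw : ∃ i, φ i = c w := ⟨j, y.symm⟩
    refine ⟨⟨u, hu⟩, ⟨w, hw⟩, hφ ?_, hφ ?_, e⟩
    · rw [hu.choose_spec, x]
    · rw [hw.choose_spec, y]

/-- The matching on ordered pairs. -/
def matchG (I : Type) : SimpleGraph (I × I) where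
  Adj x y := x.1 ≠ x.2 ∧ y = x.swap
  symm := ⟨by rintro ⟨a, b⟩ ⟨c, d⟩ ⟨h, h'⟩; simp at *; exact ⟨by rw [h'.1, h'.2]; exact fun h'' => h h''.symm, h'.2.symm, h'.1.symm⟩⟩
  loopless := ⟨by rintro ⟨a, b⟩ ⟨h, h'⟩; simp at *; exact h h'.1⟩

theorem Cov.triv (I : Type) [Finite I] : Cov I (fun _ _ => True) I := by
  refine ⟨I × I, inferInstance, matchG I, Prod.fst, Prod.snd, ?_, ?_, ?_⟩
  · rintro a b c d e f e1 e2 e3 e4 e5 e6 n1 n2 n3 n4 n5 n6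
    exact n1 (by rw [e2.2, e1.2, Prod.swap_swap])
  · exact fun u v h h' => Prod.ext h h'
  · intro i j hij _
    exact ⟨(i, j), (j, i), rfl, rfl, hij, rfl⟩

theorem Cov.toR {r k : ℕ} (h : Cov (Fin r) (fun _ _ => True) (Fin k)) :
    fGraph (SimpleGraph.cycleGraph 6) r ≤ k := by
  obtain ⟨V, hV, G, c, g, h1, h2, h3⟩ := h
  classical
  apply Nat.sInf_le
  obtain ⟨n, ⟨φ⟩⟩ := Finite.exists_equiv_fin V
  have hs : Function.Injective φ.symm := φ.symm.injective
  refine ⟨n, G.comap φ.symm, ?_, ?_⟩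
  · apply Free6.not_contains
    rintro a b c d e f e1 e2 e3 e4 e5 e6 n1 n2 n3 n4 n5 n6
    exact h1 _ _ _ _ _ _ e1 e2 e3 e4 e5 e6 (hs.ne n1) (hs.ne n2) (hs.ne n3) (hs.ne n4)
      (hs.ne n5) (hs.ne n6)
  · refine ⟨fun i => Finset.univ.filter (fun v => c (φ.symm v) = i), ?_, ?_, ?_⟩
    · intro v
      exact ⟨c (φ.symm v), by simp, fun i hi => ((Finset.mem_filter.1 hi).2).symm⟩
    · intro i
      have := Finset.card_le_card_of_injOn (s := Finset.univ.filter (fun v => c (φ.symm v) = i))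
        (t := (Finset.univ : Finset (Fin k))) (fun v => g (φ.symm v)) (by simp) (by
          intro u hu v hv huv
          simp only [Finset.coe_filter, Finset.mem_univ, true_and, Set.mem_ofPred_eq] at hu hv
          exact hs (h2 _ _ (hu.trans hv.symm) huv))
      simpa using this
    · intro i j hij
      obtain ⟨u, w, x, y, e⟩ := h3 i j hij trivial
      exact ⟨φ u, by simp [x], φ w, by simp [y], by simpa using e⟩

/-- The incidence graph: points with first coordinate in `S`, and lines. -/
def incG {F : Type} [Field F] (S : Set F) : SimpleGraph ((S × F × F) ⊕ (F × F × F)) where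
  Adj x y := match x, y with
    | Sum.inl p, Sum.inr l =>
        (p.1 : F) * l.1 = p.2.1 - l.2.1 ∧ (p.1 : F) * l.1 ^ 2 = p.2.2 - l.2.2
    | Sum.inr l, Sum.inl p =>
        (p.1 : F) * l.1 = p.2.1 - l.2.1 ∧ (p.1 : F) * l.1 ^ 2 = p.2.2 - l.2.2
    | _, _ => False
  symm := ⟨by rintro (x | x) (y | y) h <;> exact h⟩
  loopless := ⟨by rintro (x | x) h <;> exact h⟩

theorem inc_free_aux {F : Type} [Field F] {S : Set F} (p p' p'' : S × F × F)
    (l l' l'' : F × F × F)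
    (h1 : (incG S).Adj (.inl p) (.inr l)) (h2 : (incG S).Adj (.inr l) (.inl p'))
    (h3 : (incG S).Adj (.inl p') (.inr l')) (h4 : (incG S).Adj (.inr l') (.inl p''))
    (h5 : (incG S).Adj (.inl p'') (.inr l'')) (h6 : (incG S).Adj (.inr l'') (.inl p))
    (n1 : p ≠ p') (n4 : l ≠ l') (n5 : l ≠ l'') (n6 : l' ≠ l'') : False := by
  obtain ⟨⟨a, ha⟩, b, c⟩ := p
  obtain ⟨⟨a', ha'⟩, b', c'⟩ := p'
  obtain ⟨⟨a'', ha''⟩, b'', c''⟩ := p''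
  obtain ⟨x, y, z⟩ := l
  obtain ⟨x', y', z'⟩ := l'
  obtain ⟨x'', y'', z''⟩ := l''
  simp only [incG] at h1 h2 h3 h4 h5 h6
  have k1 : x ≠ x' := by
    rintro rfl
    apply n4
    simp only [Prod.mk.injEq, true_and]
    constructor
    · linear_combination h2.1 - h3.1
    · linear_combination h2.2 - h3.2
  have k2 : x ≠ x'' := by
    rintro rfl
    apply n5
    simp only [Prod.mk.injEq, true_and]
    constructor
    · linear_combination h1.1 - h6.1
    · linear_combination h1.2 - h6.2
  have k3 : x' ≠ x'' := by
    rintro rfl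
    apply n6
    simp only [Prod.mk.injEq, true_and]
    constructor
    · linear_combination h4.1 - h5.1
    · linear_combination h4.2 - h5.2
  have e1 : (a - a') * x + (a' - a'') * x' + (a'' - a) * x'' = 0 := by
    linear_combination h1.1 - h2.1 + h3.1 - h4.1 + h5.1 - h6.1
  have e2 : (a - a') * x ^ 2 + (a' - a'') * x' ^ 2 + (a'' - a) * x'' ^ 2 = 0 := by
    linear_combination h1.2 - h2.2 + h3.2 - h4.2 + h5.2 - h6.2
  have e3 : (a - a') * ((x - x') * (x - x'')) = 0 := by
    linear_combination e2 - (x' + x'') * e1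
  have e4 : a = a' := by
    rcases mul_eq_zero.1 e3 with h | h
    · exact sub_eq_zero.1 h
    · rcases mul_eq_zero.1 h with h | h
      · exact absurd (sub_eq_zero.1 h) k1
      · exact absurd (sub_eq_zero.1 h) k2
  subst e4
  apply n1
  simp only [Prod.mk.injEq, true_and]
  constructor
  · linear_combination -h1.1 + h2.1
  · linear_combination -h1.2 + h2.2

theorem inc_free {F : Type} [Field F] (S : Set F) : Free6 (incG S) := by
  intro a b c d e f h1 h2 h3 h4 h5 h6 n1 n2 n3 n4 n5 n6
  rcases a with a | a <;> rcases b with b | b <;> first | exact h1.elim | skip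
  all_goals rcases c with c | c <;> first | exact h2.elim | skip
  all_goals rcases d with d | d <;> first | exact h3.elim | skip
  all_goals rcases e with e | e <;> first | exact h4.elim | skip
  all_goals rcases f with f | f <;> first | exact h5.elim | skip
  · exact inc_free_aux a c e b d f h1 h2 h3 h4 h5 h6 (by simpa using n1) (by simpa using n4)
      (by simpa using n5) (by simpa using n6)
  · exact inc_free_aux b d f c e a h2 h3 h4 h5 h6 h1 (by simpa using n4)
      (by simpa using n3) (fun h => n1 (by rw [h])) (fun h => n2 (by rw [h]))

theorem cov_inc {F : Type} [Field F] [Finite F] (S : Set F)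
    (hS : ∀ x : F, x ≠ 0 → x ∈ S ∨ -x ∈ S) :
    Cov (F × F) (fun x y => x.1 ≠ y.1 ∧ x.2 ≠ y.2) (S ⊕ F) := by
  refine ⟨_, inferInstance, incG S, Sum.elim (fun p => p.2) (fun l => l.2),
    Sum.map Prod.fst Prod.fst, inc_free S, ?_, ?_⟩
  · rintro (u | u) (v | v) h h'
    · simp only [Sum.elim_inl, Sum.map_inl, Sum.inl.injEq] at *
      exact Prod.ext h' h
    · simp at h'
    · simp at h'
    · simp only [Sum.elim_inr, Sum.map_inr, Sum.inr.injEq] at *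
      exact Prod.ext h' h
  · rintro ⟨s, t⟩ ⟨s', t'⟩ - ⟨hs, ht⟩
    simp only at hs ht
    have hs1 : s - s' ≠ 0 := sub_ne_zero.2 hs
    have ht1 : t - t' ≠ 0 := sub_ne_zero.2 ht
    have hs2 : s' - s ≠ 0 := sub_ne_zero.2 hs.symm
    have ht2 : t' - t ≠ 0 := sub_ne_zero.2 ht.symm
    have hx : (s - s') ^ 2 / (t - t') ≠ 0 := div_ne_zero (pow_ne_zero _ hs1) ht1
    rcases hS _ hx with h | h
    · refine ⟨Sum.inl (⟨_, h⟩, s, t), Sum.inr ((t - t') / (s - s'), s', t'), rfl, rfl, ?_, ?_⟩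
      · simp only; field_simp
      · simp only; field_simp
    · refine ⟨Sum.inr ((t - t') / (s - s'), s, t), Sum.inl (⟨_, h⟩, s', t'), rfl, rfl, ?_, ?_⟩
      · simp only; field_simp; ring
      · simp only; field_simp; ring

theorem cov_square {F : Type} [Field F] [Finite F] (S : Set F)
    (hS : ∀ x : F, x ≠ 0 → x ∈ S ∨ -x ∈ S) {K : Type} (h : Cov F (fun _ _ => True) K) :
    Cov (F × F) (fun _ _ => True) ((S ⊕ F) ⊕ (K ⊕ K)) := by
  have h1 := (cov_inc S hS).sum ((h.rows F).sum ((h.rows F).comap Prod.swap Prod.swap_injective))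
  refine h1.mono ?_ id Function.injective_id
  rintro ⟨a, b⟩ ⟨c, d⟩ - -
  simp only [Prod.swap]
  tauto

/-- Numerical version of the existence of a cover. -/
def CovN (r k : ℕ) : Prop := Cov (Fin r) (fun _ _ => True) (Fin k)

theorem CovN.mono {r k r' k' : ℕ} (h : CovN r k) (hr : r' ≤ r) (hk : k ≤ k') : CovN r' k' := by
  have h1 := Cov.comap h (Fin.castLE hr) (Fin.castLE_injective hr)
  exact h1.mono (fun _ _ _ _ => trivial) (Fin.castLE hk) (Fin.castLE_injective hk)

theorem covN_triv (r : ℕ) : CovN r r := Cov.triv (Fin r)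

theorem covN_square {q m : ℕ} (hq : q.Prime) (h : CovN q m) :
    CovN (q * q) (q / 2 + q + 2 * m) := by
  have : Fact q.Prime := ⟨hq⟩
  classical
  have e : ZMod q ≃ Fin q := (ZMod.finEquiv q).symm.toEquiv
  let S : Finset (ZMod q) := (Finset.Icc 1 (q / 2)).image (fun n : ℕ => (n : ZMod q))
  have hScard : S.card ≤ q / 2 := by
    refine Finset.card_image_le.trans ?_
    simp
  have hS : ∀ x : ZMod q, x ≠ 0 → x ∈ (S : Set (ZMod q)) ∨ -x ∈ (S : Set (ZMod q)) := by
    intro x hx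
    have h0 : x.val ≠ 0 := by simpa [ZMod.val_eq_zero] using hx
    have h1 : x.val < q := x.val_lt
    by_cases hh : x.val ≤ q / 2
    · left
      simp only [S, Finset.coe_image, Set.mem_image, Finset.coe_Icc, Set.mem_Icc]
      exact ⟨x.val, ⟨by omega, hh⟩, by simp⟩
    · right
      simp only [S, Finset.coe_image, Set.mem_image, Finset.coe_Icc, Set.mem_Icc]
      refine ⟨q - x.val, ⟨by omega, by omega⟩, ?_⟩
      rw [Nat.cast_sub h1.le]
      simp
  have h1 : Cov (ZMod q) (fun _ _ => True) (Fin m) := Cov.comap h e e.injective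
  have h2 := cov_square (S : Set (ZMod q)) hS h1
  have e2 : Fin (q * q) ≃ ZMod q × ZMod q := finProdFinEquiv.symm.trans (Equiv.prodCongr e.symm e.symm)
  have h3 := h2.comap e2 e2.injective
  have hcard : Fintype.card (((S : Set (ZMod q)) ⊕ ZMod q) ⊕ (Fin m ⊕ Fin m)) ≤
      Fintype.card (Fin (q / 2 + q + 2 * m)) := by
    simp only [Fintype.card_sum, Fintype.card_fin, ZMod.card]
    have : Fintype.card ((S : Set (ZMod q)) : Type) = S.card := by simp
    rw [this]
    omega
  obtain ⟨φ⟩ := Function.Embedding.nonempty_of_card_le hcard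
  exact h3.mono (fun _ _ _ _ => trivial) φ φ.injective

theorem covN_sqrt (n : ℕ) : CovN n (8 * (n.sqrt + 1)) := by
  obtain ⟨p, hp, h1, h2⟩ := Nat.exists_prime_lt_and_le_two_mul (n.sqrt + 1) (by omega)
  have h := covN_square hp (covN_triv p)
  refine h.mono ?_ (by omega)
  have := Nat.lt_succ_sqrt n
  have h3 : n.sqrt.succ * n.sqrt.succ ≤ p * p := Nat.mul_le_mul (by omega) (by omega)
  omega

theorem f_bound {r q : ℕ} (hq : q.Prime) (hr : r ≤ q * q) :
    fGraph (SimpleGraph.cycleGraph 6) r ≤ q / 2 + q + 2 * (8 * (q.sqrt + 1)) :=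
  Cov.toR ((covN_square hq (covN_sqrt q)).mono hr le_rfl)

section Primes
open Chebyshev Finset
open scoped ArithmeticFunction.vonMangoldt Nat

theorem log_fact_eq (M : ℕ) : ∀ N ≤ M,
    Real.log (N ! : ℕ) = ∑ n ∈ Ioc 0 M, Λ n * ((N / n : ℕ) : ℝ) := by
  intro N
  induction N with
  | zero => intro _; simp
  | succ N ih =>
    intro hN
    rw [Nat.factorial_succ, Nat.cast_mul, Real.log_mul (by positivity) (by positivity),
      ih (by omega), ← ArithmeticFunction.vonMangoldt_sum]
    have h1 : ∀ n ∈ Ioc 0 M, Λ n * (((N + 1) / n : ℕ) : ℝ) =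
        (if n ∣ N + 1 then Λ n else 0) + Λ n * ((N / n : ℕ) : ℝ) := by
      intro n _
      rw [Nat.succ_div]
      split_ifs <;> push_cast <;> ring
    rw [sum_congr rfl h1, sum_add_distrib, ← sum_filter]
    congr 1
    apply sum_congr _ (fun _ _ => rfl)
    ext n
    simp only [Nat.mem_divisors, mem_filter, mem_Ioc]
    constructor
    · rintro ⟨h, _⟩
      exact ⟨⟨Nat.pos_of_dvd_of_pos h (by omega), (Nat.le_of_dvd (by omega) h).trans hN⟩, h⟩
    · rintro ⟨_, h⟩
      exact ⟨h, by omega⟩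

/-- Chebyshev's combination of log-factorials. -/
noncomputable def chebE (N : ℕ) : ℝ :=
  Real.log (N ! : ℕ) - Real.log ((N / 2)! : ℕ) - Real.log ((N / 3)! : ℕ)
    - Real.log ((N / 5)! : ℕ) + Real.log ((N / 30)! : ℕ)

theorem chebE_eq (N : ℕ) : chebE N = ∑ n ∈ Ioc 0 N, Λ n * (((N / n : ℕ) : ℝ)
    - ((N / n / 2 : ℕ) : ℝ) - ((N / n / 3 : ℕ) : ℝ) - ((N / n / 5 : ℕ) : ℝ)
    + ((N / n / 30 : ℕ) : ℝ)) := by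
  unfold chebE
  rw [log_fact_eq N N le_rfl, log_fact_eq N (N / 2) (by omega), log_fact_eq N (N / 3) (by omega),
    log_fact_eq N (N / 5) (by omega), log_fact_eq N (N / 30) (by omega),
    ← sum_sub_distrib, ← sum_sub_distrib, ← sum_sub_distrib, ← sum_add_distrib]
  apply sum_congr rfl
  intro n _
  rw [Nat.div_right_comm N n 2, Nat.div_right_comm N n 3, Nat.div_right_comm N n 5,
    Nat.div_right_comm N n 30]
  ring

theorem cheb_coeff_le (m : ℕ) : ((m : ℕ) : ℝ) - ((m / 2 : ℕ) : ℝ) - ((m / 3 : ℕ) : ℝ)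
    - ((m / 5 : ℕ) : ℝ) + ((m / 30 : ℕ) : ℝ) ≤ 1 := by
  have : m + m / 30 ≤ 1 + m / 2 + m / 3 + m / 5 := by omega
  have h : ((m + m / 30 : ℕ) : ℝ) ≤ ((1 + m / 2 + m / 3 + m / 5 : ℕ) : ℝ) := by exact_mod_cast this
  push_cast at h
  linarith

theorem cheb_coeff_nonneg (m : ℕ) : 0 ≤ ((m : ℕ) : ℝ) - ((m / 2 : ℕ) : ℝ) - ((m / 3 : ℕ) : ℝ)
    - ((m / 5 : ℕ) : ℝ) + ((m / 30 : ℕ) : ℝ) := by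
  have : m / 2 + m / 3 + m / 5 ≤ m + m / 30 := by omega
  have h : ((m / 2 + m / 3 + m / 5 : ℕ) : ℝ) ≤ ((m + m / 30 : ℕ) : ℝ) := by exact_mod_cast this
  push_cast at h
  linarith

theorem cheb_coeff_one (m : ℕ) (h1 : 1 ≤ m) (h6 : m < 6) : 1 ≤ ((m : ℕ) : ℝ)
    - ((m / 2 : ℕ) : ℝ) - ((m / 3 : ℕ) : ℝ) - ((m / 5 : ℕ) : ℝ) + ((m / 30 : ℕ) : ℝ) := by
  have : 1 + m / 2 + m / 3 + m / 5 ≤ m + m / 30 := by omega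
  have h : ((1 + m / 2 + m / 3 + m / 5 : ℕ) : ℝ) ≤ ((m + m / 30 : ℕ) : ℝ) := by exact_mod_cast this
  push_cast at h
  linarith

theorem chebE_le_psi (N : ℕ) : chebE N ≤ psi N := by
  rw [chebE_eq, psi, Nat.floor_natCast]
  apply sum_le_sum
  intro n _
  have := cheb_coeff_le (N / n)
  exact mul_le_of_le_one_right ArithmeticFunction.vonMangoldt_nonneg this

theorem psi_sub_le_chebE (N : ℕ) : psi N ≤ psi ((N / 6 : ℕ) : ℝ) + chebE N := by
  rw [chebE_eq, psi, psi, Nat.floor_natCast, Nat.floor_natCast]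
  have hsub : Ioc 0 (N / 6) ⊆ Ioc 0 N := Ioc_subset_Ioc_right (by omega)
  have h0 : ∑ n ∈ Ioc 0 (N / 6), Λ n = ∑ n ∈ Ioc 0 N, if n ∈ Ioc 0 (N / 6) then Λ n else 0 := by
    rw [← sum_filter]
    congr 1
    ext n
    simp only [mem_filter]
    exact ⟨fun h => ⟨hsub h, h⟩, fun h => h.2⟩
  rw [h0, ← sum_add_distrib]
  apply sum_le_sum
  intro n hn
  have hL : 0 ≤ Λ n := ArithmeticFunction.vonMangoldt_nonneg
  have hc := cheb_coeff_nonneg (N / n)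
  split_ifs with h
  · have := mul_nonneg hL hc
    linarith
  · simp only [mem_Ioc] at h hn
    have h1 : 1 ≤ N / n := (Nat.one_le_div_iff hn.1).2 hn.2
    have h6 : N / n < 6 := by
      rw [Nat.div_lt_iff_lt_mul hn.1]
      omega
    have := mul_le_mul_of_nonneg_left (cheb_coeff_one _ h1 h6) hL
    linarith

theorem log_fact_upper (M : ℕ) (hM : 1 ≤ M) :
    Real.log (M ! : ℕ) ≤ M * Real.log M - M + Real.log M + 1 := by
  induction M, hM using Nat.le_induction with
  | base => simp
  | succ M hM ih =>
    rw [Nat.factorial_succ, Nat.cast_mul, Real.log_mul (by positivity) (by positivity)]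
    have hM0 : (0 : ℝ) < M := by exact_mod_cast hM
    -- (M+1) (log (M+1) - log M) ≥ 1
    have h1 : Real.log (M / (M + 1)) ≤ M / (M + 1) - 1 :=
      Real.log_le_sub_one_of_pos (by positivity)
    rw [Real.log_div (by positivity) (by positivity)] at h1
    have h2 : (M : ℝ) / (M + 1) - 1 = - (1 / (M + 1)) := by field_simp; ring
    rw [h2] at h1
    have h3 : (M + 1 : ℝ) * (Real.log M - Real.log (M + 1)) ≤ -1 := by
      have := mul_le_mul_of_nonneg_left h1 (by positivity : (0 : ℝ) ≤ M + 1)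
      have h4 : (M + 1 : ℝ) * (-(1 / (M + 1))) = -1 := by field_simp
      linarith
    push_cast
    nlinarith

theorem xlogx_mono {a b : ℝ} (ha : 1 ≤ a) (hab : a ≤ b) :
    a * Real.log a - a ≤ b * Real.log b - b := by
  have ha0 : 0 < a := by linarith
  have hb0 : 0 < b := by linarith
  have h1 : Real.log (a / b) ≤ a / b - 1 := Real.log_le_sub_one_of_pos (by positivity)
  rw [Real.log_div ha0.ne' hb0.ne'] at h1
  have h2 : b * (Real.log a - Real.log b) ≤ a - b := by
    have := mul_le_mul_of_nonneg_left h1 hb0.le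
    have h4 : b * (a / b - 1) = a - b := by field_simp
    linarith
  have h3 := mul_nonneg (sub_nonneg.2 hab) (Real.log_nonneg ha)
  nlinarith

theorem log_fact_div {N d : ℕ} (hd : 1 ≤ d) (hN : d ≤ N) :
    |Real.log ((N / d)! : ℕ) - ((N : ℝ) / d * Real.log ((N : ℝ) / d) - (N : ℝ) / d)|
      ≤ Real.log N + 2 := by
  have hd0 : (1 : ℝ) ≤ d := by exact_mod_cast hd
  have hN0 : (d : ℝ) ≤ N := by exact_mod_cast hN
  set y : ℝ := (N : ℝ) / d with hy
  have hy1 : 1 ≤ y := by rw [hy, le_div_iff₀ (by linarith)]; linarith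
  have hyN : y ≤ N := div_le_self (by linarith) hd0
  set M := N / d with hM
  have hM1 : 1 ≤ M := (Nat.one_le_div_iff hd).2 hN
  have hMy : (M : ℝ) ≤ y := Nat.cast_div_le
  have hyM : y ≤ M + 1 := by
    rw [hy, div_le_iff₀ (by linarith)]
    have : N ≤ (M + 1) * d := by
      have := Nat.lt_mul_div_succ N hd
      rw [hM, mul_comm]
      exact this.le
    exact_mod_cast this
  have hM1' : (1 : ℝ) ≤ M := by exact_mod_cast hM1
  have hlM : Real.log M ≤ Real.log N := Real.log_le_log (by linarith) (by linarith)
  have hlM1 : Real.log (M + 1) ≤ Real.log N + 1 := by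
    have h1 : Real.log (M + 1) ≤ Real.log (2 * N) := Real.log_le_log (by linarith) (by linarith)
    rw [Real.log_mul (by norm_num) (by linarith)] at h1
    have := Real.log_two_lt_d9
    linarith
  rw [abs_le]
  constructor
  · have h1 := Stirling.le_log_factorial_stirling (n := M + 1) (by omega)
    rw [Nat.factorial_succ, Nat.cast_mul,
      Real.log_mul (x := ((M + 1 : ℕ) : ℝ)) (by positivity) (by positivity)] at h1
    have h2 := xlogx_mono hy1 hyM
    have h3 : 0 ≤ Real.log (2 * Real.pi) := Real.log_nonneg (by linarith [Real.pi_gt_three])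
    have h4 : 0 ≤ Real.log (M + 1) := Real.log_nonneg (by linarith)
    simp only [Nat.cast_add, Nat.cast_one] at h1
    linarith
  · have h1 := log_fact_upper M hM1
    have h2 := xlogx_mono hM1' hMy
    linarith

/-- Chebyshev's constant. -/
noncomputable def chebA : ℝ :=
  Real.log 2 / 2 + Real.log 3 / 3 + Real.log 5 / 5 - Real.log 30 / 30

theorem chebA_pos : 0 < chebA := by
  have h : Real.log 30 = Real.log 2 + Real.log 3 + Real.log 5 := by
    rw [← Real.log_mul (by norm_num) (by norm_num), ← Real.log_mul (by norm_num) (by norm_num)]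
    norm_num
  have h2 : 0 < Real.log 2 := Real.log_pos (by norm_num)
  have h3 : 0 < Real.log 3 := Real.log_pos (by norm_num)
  have h5 : 0 < Real.log 5 := Real.log_pos (by norm_num)
  unfold chebA
  linarith

theorem chebE_approx {N : ℕ} (hN : 30 ≤ N) : |chebE N - chebA * N| ≤ 20 * √N := by
  have h1 := log_fact_div (N := N) (d := 1) le_rfl (by omega)
  have h2 := log_fact_div (N := N) (d := 2) (by norm_num) (by omega)
  have h3 := log_fact_div (N := N) (d := 3) (by norm_num) (by omega)
  have h5 := log_fact_div (N := N) (d := 5) (by norm_num) (by omega)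
  have h30 := log_fact_div (N := N) (d := 30) (by norm_num) (by omega)
  have hN0 : (30 : ℝ) ≤ N := by exact_mod_cast hN
  have hNne : (N : ℝ) ≠ 0 := by linarith
  push_cast at h1 h2 h3 h5 h30
  rw [Nat.div_one, div_one] at h1
  rw [Real.log_div hNne (by norm_num)] at h2 h3 h5 h30
  have hs : 1 ≤ √(N : ℝ) := Real.one_le_sqrt.2 (by linarith)
  have hl : Real.log N ≤ 2 * √N - 2 := by
    have := Real.log_le_sub_one_of_pos (by linarith : 0 < √(N : ℝ))
    rw [Real.log_sqrt (by linarith)] at this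
    linarith
  rw [abs_le] at *
  unfold chebE chebA
  constructor
  · linarith
  · linarith

theorem psi_upper : ∃ K : ℝ, 20 ≤ K ∧ ∀ N : ℕ, psi N ≤ 6 / 5 * chebA * N + 2 * K * √N := by
  refine ⟨20 + psi 30, by linarith [psi_nonneg 30], ?_⟩
  set K := 20 + psi 30 with hK
  have hK0 : 20 ≤ K := by linarith [psi_nonneg 30]
  have hA := chebA_pos
  intro N
  induction N using Nat.strong_induction_on with
  | _ N ih =>
    rcases Nat.lt_or_ge N 30 with h | h
    · rcases Nat.eq_zero_or_pos N with rfl | hpos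
      · simp
      · have h1 : psi N ≤ psi 30 := psi_mono (by exact_mod_cast h.le)
        have h2 : (1 : ℝ) ≤ √N := Real.one_le_sqrt.2 (by exact_mod_cast hpos)
        have h3 : 0 ≤ 6 / 5 * chebA * N := by positivity
        nlinarith
    · have h1 := ih (N / 6) (by omega)
      have h2 := psi_sub_le_chebE N
      have h3 := (abs_le.1 (chebE_approx h)).2
      have h4 : ((N / 6 : ℕ) : ℝ) ≤ N / 6 := Nat.cast_div_le
      have h5 : √((N / 6 : ℕ) : ℝ) ≤ √N / 2 := by
        rw [Real.sqrt_le_left (by positivity), div_pow, Real.sq_sqrt (by positivity)]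
        have : (0 : ℝ) ≤ N := by positivity
        linarith
      have h6 := mul_le_mul_of_nonneg_left h4 hA.le
      have h7 := mul_le_mul_of_nonneg_left h5 (by linarith : 0 ≤ K)
      have h8 : 20 * √(N : ℝ) ≤ K * √N := mul_le_mul_of_nonneg_right hK0 (by positivity)
      linarith

theorem exists_prime_of_theta {a b : ℕ} (h : theta a < theta b) :
    ∃ p : ℕ, p.Prime ∧ a < p ∧ p ≤ b := by
  by_contra! hcon
  apply absurd h
  rw [not_lt, theta, theta, Nat.floor_natCast, Nat.floor_natCast]
  apply sum_le_sum_of_subset_of_nonneg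
  · intro p hp
    simp only [mem_filter, mem_Ioc] at *
    refine ⟨⟨hp.1.1, ?_⟩, hp.2⟩
    by_contra hh
    have := hcon p hp.2 (by omega)
    omega
  · intro p _ _
    exact Real.log_natCast_nonneg p

theorem eventually_prime : ∃ N₀ : ℕ, ∀ N ≥ N₀, ∃ p : ℕ, p.Prime ∧ N < p ∧ 4 * p ≤ 5 * N := by
  obtain ⟨K, hK, hup⟩ := psi_upper
  have hA := chebA_pos
  set c : ℝ := chebA / 1000 with hc
  have hc0 : 0 < c := by positivity
  have hlog := (isLittleO_log_rpow_atTop (by norm_num : (0 : ℝ) < 1 / 2)).bound hc0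
  have hsq : ∀ᶠ x : ℝ in Filter.atTop, K ≤ c * √x :=
    (Filter.Tendsto.const_mul_atTop hc0 Real.tendsto_sqrt_atTop).eventually_ge_atTop K
  obtain ⟨x₀, hx₀⟩ := Filter.eventually_atTop.1 (hlog.and hsq)
  refine ⟨⌈x₀⌉₊ + 1000, fun N hN => ?_⟩
  have hNx : x₀ ≤ N := (Nat.le_ceil x₀).trans (by exact_mod_cast (by omega : ⌈x₀⌉₊ ≤ N))
  set M := 5 * N / 4 with hM
  have hMN : N ≤ M := by omega
  have hMN' : (N : ℝ) ≤ M := by exact_mod_cast hMN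
  have hN1 : (1000 : ℝ) ≤ N := by exact_mod_cast (by omega : 1000 ≤ N)
  have hM1 : (5 : ℝ) * N ≤ 4 * M + 4 := by exact_mod_cast (by omega : 5 * N ≤ 4 * M + 4)
  have hM2 : (4 : ℝ) * M ≤ 5 * N := by exact_mod_cast (by omega : 4 * M ≤ 5 * N)
  obtain ⟨l1, s1⟩ := hx₀ M (hNx.trans hMN')
  rw [← Real.sqrt_eq_rpow, Real.norm_of_nonneg (Real.log_nonneg (by linarith)),
    Real.norm_of_nonneg (Real.sqrt_nonneg _)] at l1
  have hsM : √(M : ℝ) * √M = M := Real.mul_self_sqrt (by positivity)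
  have hs0 : 0 ≤ √(M : ℝ) := Real.sqrt_nonneg _
  have hsN : √(N : ℝ) ≤ √M := Real.sqrt_le_sqrt hMN'
  have e1 : √(M : ℝ) * Real.log M ≤ c * M := by
    have := mul_le_mul_of_nonneg_left l1 hs0
    calc _ ≤ _ := this
      _ = c * (√(M : ℝ) * √M) := by ring
      _ = _ := by rw [hsM]
  have e2 : K * √(M : ℝ) ≤ c * M := by
    have := mul_le_mul_of_nonneg_right s1 hs0
    calc _ ≤ _ := this
      _ = c * (√(M : ℝ) * √M) := by ring
      _ = _ := by rw [hsM]
  have e3 : K * √(N : ℝ) ≤ c * M :=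
    (mul_le_mul_of_nonneg_left hsN (by linarith)).trans e2
  have e4 : 20 * √(M : ℝ) ≤ c * M := (mul_le_mul_of_nonneg_right hK hs0).trans e2
  have t1 := (abs_le.1 (abs_psi_sub_theta_le_sqrt_mul_log (x := M) (by linarith))).2
  have t2 := theta_le_psi N
  have t3 := hup N
  have t4 := chebE_le_psi M
  have t5 := (abs_le.1 (chebE_approx (N := M) (by omega))).1
  have hAN : chebA * 1000 ≤ chebA * N := mul_le_mul_of_nonneg_left hN1 hA.le
  have hAM : chebA * (5 * N) ≤ chebA * (4 * M + 4) := mul_le_mul_of_nonneg_left hM1 hA.le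
  have hAM2 : chebA * (4 * M) ≤ chebA * (5 * N) := mul_le_mul_of_nonneg_left hM2 hA.le
  have hcM : c * M = chebA * M / 1000 := by rw [hc]; ring
  have : theta N < theta M := by
    rw [hcM] at *
    nlinarith
  obtain ⟨p, hp, h1, h2⟩ := exists_prime_of_theta this
  exact ⟨p, hp, h1, by omega⟩

end Primes

theorem stmt2_aux : ∃ r₀ : ℕ, ∀ r : ℕ, r₀ ≤ r →
      (fGraph (SimpleGraph.cycleGraph 6) r : ℝ) ≤ 2 * √(r : ℝ) := by
  obtain ⟨N₀, hN₀⟩ := eventually_prime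
  refine ⟨(N₀ + 1000000) ^ 2, fun r hr => ?_⟩
  set n := r.sqrt with hn
  have hnN : N₀ + 1000000 ≤ n := by
    rw [hn, Nat.le_sqrt']
    exact hr
  obtain ⟨q, hq, h1, h2⟩ := hN₀ n (by omega)
  have hrq : r ≤ q * q := by
    have h3 := Nat.lt_succ_sqrt r
    have h4 : r.sqrt.succ * r.sqrt.succ ≤ q * q := Nat.mul_le_mul h1 h1
    omega
  have hf := f_bound hq hrq
  -- √q ≤ q / 1000
  have hqs : 1000 * q.sqrt ≤ q := by
    have h5 : q.sqrt * q.sqrt ≤ q := Nat.sqrt_le q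
    have h6 : 1000 ≤ q.sqrt := by
      rw [Nat.le_sqrt]
      omega
    nlinarith
  have hfin : fGraph (SimpleGraph.cycleGraph 6) r ≤ 2 * n := by omega
  have hns : (n : ℝ) ≤ √r := by
    apply Real.le_sqrt_of_sq_le
    have : n ^ 2 ≤ r := Nat.sqrt_le' r
    exact_mod_cast this
  have : (fGraph (SimpleGraph.cycleGraph 6) r : ℝ) ≤ 2 * n := by exact_mod_cast hfin
  linarith

/-- For every `ε > 0`, for all sufficiently large `r`, `f(r, C_6) ≤ (2+ε)·r^{1/2}`. -/
theorem stmt2 (ε : ℝ) (hε : 0 < ε) :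
    ∃ r₀ : ℕ, ∀ r : ℕ, r₀ ≤ r →
      (fGraph (SimpleGraph.cycleGraph 6) r : ℝ) ≤ (2 + ε) * (r : ℝ) ^ ((1 : ℝ) / 2) := by
  obtain ⟨r₀, h⟩ := stmt2_aux
  refine ⟨r₀, fun r hr => (h r hr).trans ?_⟩
  rw [← Real.sqrt_eq_rpow]
  exact mul_le_mul_of_nonneg_right (by linarith) (Real.sqrt_nonneg _)
end

section
/- For every real ε > 0 there exists r₀ such that for all integers r ≥ r₀ one has f(r, C_{10}) ≤ (2 + ε) · r^{2/3}, where C_{10} denotes the cycle of length 10. -/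
open SimpleGraph

namespace PP
open Complex MeasureTheory FourierTransform Filter Topology

noncomputable def phi (t : ℝ) : ℝ := (1 - |t|) + Real.sin (2 * Real.pi * |t|) / (2 * Real.pi)

lemma phi_cont : Continuous phi := by unfold phi; fun_prop

lemma phi_bound {t : ℝ} (ht : |t| ≤ 1) : |phi t| ≤ 2 := by
  unfold phi
  have h1 : |Real.sin (2 * Real.pi * |t|) / (2 * Real.pi)| ≤ 1 := by
    rw [abs_div, div_le_one (by positivity)]
    refine (Real.abs_sin_le_one _).trans ?_
    rw [abs_of_pos (by positivity)]; nlinarith [Real.pi_gt_three]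
  have h2 : |(1 - |t|)| ≤ 1 := by
    rw [abs_le]; constructor <;> linarith [abs_nonneg t]
  exact (abs_add_le _ _).trans (by linarith)

noncomputable def K (w : ℝ) : ℂ := ∫ t in (-1:ℝ)..1, cexp (((-2 * Real.pi * t * w : ℝ) : ℂ) * I) * (phi t : ℂ)

lemma K_cont : Continuous K := by
  unfold K
  apply intervalIntegral.continuous_parametric_intervalIntegral_of_continuous'
  have := phi_cont
  fun_prop

lemma K_eq_real (w : ℝ) : K w = ((2 * ∫ t in (0:ℝ)..1, phi t * Real.cos (2 * Real.pi * w * t) : ℝ) : ℂ) := by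
  have hc : Continuous (fun t : ℝ => cexp (((-2 * Real.pi * t * w : ℝ) : ℂ) * I) * (phi t : ℂ)) := by
    have := phi_cont
    fun_prop
  have hc2 : Continuous (fun t : ℝ => cexp (((-2 * Real.pi * (-t) * w : ℝ) : ℂ) * I) * (phi (-t) : ℂ)) := by
    have := phi_cont
    fun_prop
  unfold K
  rw [← intervalIntegral.integral_add_adjacent_intervals (b := 0) (hc.intervalIntegrable _ _) (hc.intervalIntegrable _ _)]
  have h := intervalIntegral.integral_comp_neg (a := 0) (b := 1) (fun t : ℝ => cexp (((-2 * Real.pi * t * w : ℝ) : ℂ) * I) * (phi t : ℂ))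
  simp only [neg_zero] at h
  rw [← h, ← intervalIntegral.integral_add (hc2.intervalIntegrable _ _) (hc.intervalIntegrable _ _),
    ← intervalIntegral.integral_const_mul, ← intervalIntegral.integral_ofReal]
  refine intervalIntegral.integral_congr fun t _ => ?_
  have hp : phi (-t) = phi t := by simp [phi]
  simp only [hp]
  push_cast
  rw [Complex.cos]
  ring_nf

lemma K_formula {w : ℝ} (h0 : w ≠ 0) (h1 : w ^ 2 ≠ 1) :
    K w = (((1 - Real.cos (2 * Real.pi * w)) / (2 * Real.pi ^ 2 * (w ^ 2 * (1 - w ^ 2))) : ℝ) : ℂ) := by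
  rw [K_eq_real]
  congr 1
  have hpi := Real.pi_pos
  have hpi0 := Real.pi_ne_zero
  have hp : 1 + w ≠ 0 := by intro h; apply h1; have : w = -1 := by linarith
                            rw [this]; norm_num
  have hm : 1 - w ≠ 0 := by intro h; apply h1; have : w = 1 := by linarith
                            rw [this]; norm_num
  have key := intervalIntegral.integral_eq_sub_of_hasDerivAt (a := 0) (b := 1)
    (f := fun t : ℝ => (1 - t) * Real.sin (2 * Real.pi * w * t) / (2 * Real.pi * w)
      - Real.cos (2 * Real.pi * w * t) / (2 * Real.pi * w) ^ 2
      + (1 / (4 * Real.pi)) * (- Real.cos (2 * Real.pi * (1 + w) * t) / (2 * Real.pi * (1 + w))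
        - Real.cos (2 * Real.pi * (1 - w) * t) / (2 * Real.pi * (1 - w))))
    (f' := fun t => ((1 - t) + Real.sin (2 * Real.pi * t) / (2 * Real.pi)) * Real.cos (2 * Real.pi * w * t))
    (fun t _ => by
      have e (c : ℝ) : HasDerivAt (fun t : ℝ => c * t) c t := by simpa using (hasDerivAt_id t).const_mul c
      have d1 := ((((hasDerivAt_id t).const_sub 1).mul (e (2 * Real.pi * w)).sin).div_const (2 * Real.pi * w)).sub
        ((e (2 * Real.pi * w)).cos.div_const ((2 * Real.pi * w) ^ 2))
      have d2 := (((e (2 * Real.pi * (1 + w))).cos.neg.div_const (2 * Real.pi * (1 + w))).sub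
        ((e (2 * Real.pi * (1 - w))).cos.div_const (2 * Real.pi * (1 - w)))).const_mul (1 / (4 * Real.pi))
      refine (d1.add d2).congr_deriv ?_
      have s1 : Real.sin (2 * Real.pi * (1 + w) * t) = Real.sin (2 * Real.pi * t) * Real.cos (2 * Real.pi * w * t) + Real.cos (2 * Real.pi * t) * Real.sin (2 * Real.pi * w * t) := by
        rw [← Real.sin_add]; ring_nf
      have s2 : Real.sin (2 * Real.pi * (1 - w) * t) = Real.sin (2 * Real.pi * t) * Real.cos (2 * Real.pi * w * t) - Real.cos (2 * Real.pi * t) * Real.sin (2 * Real.pi * w * t) := by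
        rw [← Real.sin_sub]; ring_nf
      rw [s1, s2]
      simp only [id]
      field_simp
      ring)
    (Continuous.intervalIntegrable (by fun_prop) _ _)
  have hcongr : ∫ t in (0:ℝ)..1, phi t * Real.cos (2 * Real.pi * w * t) = ∫ t in (0:ℝ)..1, ((1 - t) + Real.sin (2 * Real.pi * t) / (2 * Real.pi)) * Real.cos (2 * Real.pi * w * t) := by
    refine intervalIntegral.integral_congr fun t ht => ?_
    rw [Set.uIcc_of_le zero_le_one] at ht
    simp only [phi, abs_of_nonneg ht.1]
  rw [hcongr, key]
  have c1 : Real.cos (2 * Real.pi * (1 + w) * 1) = Real.cos (2 * Real.pi * w) := by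
    rw [← Real.cos_add_two_pi (2 * Real.pi * w)]; ring_nf
  have c2 : Real.cos (2 * Real.pi * (1 - w) * 1) = Real.cos (2 * Real.pi * w) := by
    rw [show 2 * Real.pi * (1 - w) * 1 = 2 * Real.pi - 2 * Real.pi * w by ring, Real.cos_two_pi_sub]
  rw [c1, c2]
  have h3 : 1 - w ^ 2 ≠ 0 := fun h => h1 (by linarith)
  simp only [mul_zero, mul_one, Real.cos_zero, Real.sin_zero]
  have h4 : 1 - w ^ 2 = (1 - w) * (1 + w) := by ring
  rw [h4]
  field_simp
  ring

lemma K_re_nonpos {w : ℝ} (hw : 1 < |w|) : (K w).re ≤ 0 := by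
  have h2 : 1 < w ^ 2 := by rw [← sq_abs]; nlinarith
  rw [K_formula (by rintro rfl; simp at hw; linarith) h2.ne', ofReal_re]
  apply div_nonpos_of_nonneg_of_nonpos
  · linarith [Real.cos_le_one (2 * Real.pi * w)]
  · apply mul_nonpos_of_nonneg_of_nonpos (by positivity)
    apply mul_nonpos_of_nonneg_of_nonpos (by positivity)
    linarith

lemma K_bound (w : ℝ) : ‖K w‖ ≤ 12 * (1 + w ^ 2)⁻¹ := by
  by_cases h : w ^ 2 < 2
  · have : ‖K w‖ ≤ 2 * |(1:ℝ) - (-1)| := by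
      unfold K
      apply intervalIntegral.norm_integral_le_of_norm_le_const
      intro t ht
      rw [Set.uIoc_of_le (by norm_num)] at ht
      rw [norm_mul, norm_exp_ofReal_mul_I, one_mul, norm_real, Real.norm_eq_abs]
      exact phi_bound (abs_le.2 ⟨ht.1.le, ht.2⟩)
    refine this.trans ?_
    rw [← div_eq_mul_inv, le_div_iff₀ (by positivity)]
    norm_num
    linarith
  · push Not at h
    have h0 : w ≠ 0 := by rintro rfl; norm_num at h
    rw [K_formula h0 (by intro h; linarith), norm_real, Real.norm_eq_abs, abs_div, ← div_eq_mul_inv,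
      div_le_div_iff₀ (by apply abs_pos.2; have : 1 - w ^ 2 ≠ 0 := by intro h; linarith
                          have := Real.pi_ne_zero; positivity) (by positivity)]
    have e1 : |1 - Real.cos (2 * Real.pi * w)| ≤ 2 := by
      rw [abs_le]; constructor <;> linarith [Real.cos_le_one (2 * Real.pi * w), Real.neg_one_le_cos (2 * Real.pi * w)]
    have e2 : |2 * Real.pi ^ 2 * (w ^ 2 * (1 - w ^ 2))| = 2 * Real.pi ^ 2 * (w ^ 2 * (w ^ 2 - 1)) := by
      rw [abs_of_nonpos]
      · ring
      · apply mul_nonpos_of_nonneg_of_nonpos (by positivity)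
        apply mul_nonpos_of_nonneg_of_nonpos (by positivity)
        linarith
    rw [e2]
    have e3 : 1 ≤ Real.pi ^ 2 := by nlinarith [Real.pi_gt_three]
    have e4 : 1 + w ^ 2 ≤ 2 * (w ^ 2 * (w ^ 2 - 1)) := by nlinarith
    have e5 : 0 ≤ w ^ 2 * (w ^ 2 - 1) := by nlinarith
    calc _ ≤ 2 * (1 + w ^ 2) := by gcongr
      _ ≤ 12 * (2 * 1 * (w ^ 2 * (w ^ 2 - 1))) := by nlinarith
      _ ≤ _ := by gcongr

lemma K_int : Integrable K :=
  (integrable_inv_one_add_sq.const_mul 12).mono' K_cont.aestronglyMeasurable (ae_of_all _ K_bound)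

lemma K_integral : ∫ w, K w = 1 := by
  set f : ℝ → ℂ := (Set.Ioc (-1:ℝ) 1).indicator (fun t => (phi t : ℂ)) with hf
  have hpc : Continuous (fun t => (phi t : ℂ)) := by have := phi_cont; fun_prop
  have hK : 𝓕 f = K := by
    ext w
    rw [Real.fourier_real_eq_integral_exp_smul, K, intervalIntegral.integral_of_le (by norm_num),
      ← integral_indicator measurableSet_Ioc]
    congr 1
    ext t
    by_cases ht : t ∈ Set.Ioc (-1:ℝ) 1 <;> simp [hf, ht]
  have hfi : Integrable f := by
    rw [hf, integrable_indicator_iff measurableSet_Ioc]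
    exact hpc.integrableOn_Ioc
  have hev : f =ᶠ[𝓝 0] (fun t => (phi t : ℂ)) := by
    filter_upwards [Ioo_mem_nhds (show (-1:ℝ) < 0 by norm_num) (show (0:ℝ) < 1 by norm_num)] with t ht
    simp [hf, Set.indicator_of_mem (Set.Ioo_subset_Ioc_self ht)]
  have hca : ContinuousAt f 0 := hpc.continuousAt.congr hev.symm
  have := hfi.fourierInv_fourier_eq (hK ▸ K_int) hca
  rw [hK, hev.eq_of_nhds, Real.fourierInv_eq'] at this
  simpa [phi] using this
open ArithmeticFunction ArithmeticFunction.vonMangoldt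

noncomputable def G : ℂ → ℂ := LFunctionResidueClassAux (1 : ZMod 1)

lemma G_cont : ContinuousOn G {s | 1 ≤ s.re} := continuousOn_LFunctionResidueClassAux _

lemma G_eq {s : ℂ} (hs : 1 < s.re) :
    LSeries (fun n => (vonMangoldt n : ℂ)) s = G s + 1 / (s - 1) := by
  have h := eqOn_LFunctionResidueClassAux (q := 1) (a := 1) isUnit_one hs
  have h2 : (fun n => ((residueClass (1 : ZMod 1) n : ℝ) : ℂ)) = fun n => (vonMangoldt n : ℂ) := by
    ext n
    simp [residueClass, Set.indicator, Subsingleton.elim (n : ZMod 1) 1]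
  simp only [h2] at h
  simp [G, h]

noncomputable def S (σ l t : ℝ) : ℂ := 1 + (σ : ℂ) + ((-2 * Real.pi * l * t : ℝ) : ℂ) * I

lemma S_re (σ l t : ℝ) : (S σ l t).re = 1 + σ := by
  simp only [S, add_re, one_re, ofReal_re, mul_re, I_re, I_im, ofReal_im]
  ring

noncomputable def E (l v t : ℝ) : ℂ := cexp (((-2 * Real.pi * t * (l * v) : ℝ) : ℂ) * I) * (phi t : ℂ)

lemma E_cont (l v : ℝ) : Continuous (E l v) := by
  unfold E
  have := phi_cont
  fun_prop

lemma E_bound (l v : ℝ) {t : ℝ} (ht : t ∈ Set.uIoc (-1:ℝ) 1) : ‖E l v t‖ ≤ 2 := by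
  rw [Set.uIoc_of_le (by norm_num)] at ht
  rw [E, norm_mul, norm_exp_ofReal_mul_I, one_mul, norm_real, Real.norm_eq_abs]
  exact phi_bound (abs_le.2 ⟨ht.1.le, ht.2⟩)

noncomputable def J (l σ v : ℝ) : ℂ := ∫ t in (-1:ℝ)..1, E l v t * G (S |σ| l t)

lemma GS_cont (l : ℝ) : Continuous (fun p : ℝ × ℝ => G (S |p.1| l p.2)) := by
  apply G_cont.comp_continuous
  · unfold S; fun_prop
  · intro p
    simp only [Set.mem_ofPred_eq, S_re]
    linarith [abs_nonneg p.1]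

lemma J_cont (l v : ℝ) : Continuous (fun σ => J l σ v) := by
  unfold J
  apply intervalIntegral.continuous_parametric_intervalIntegral_of_continuous'
  exact ((E_cont l v).comp continuous_snd).mul (GS_cont l)

lemma J_tendsto {l : ℝ} (hl : 0 < l) : Tendsto (fun v => J l 0 v) atTop (𝓝 0) := by
  have h := Real.tendsto_integral_exp_smul_cocompact
    ((Set.Ioc (-1:ℝ) 1).indicator (fun t => (phi t : ℂ) * G (S |0| l t)))
  have h2 : Tendsto (fun v : ℝ => l * v) atTop (cocompact ℝ) :=
    (tendsto_id.const_mul_atTop hl).mono_right atTop_le_cocompact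
  refine (h.comp h2).congr fun v => ?_
  simp only [Function.comp, J]
  rw [intervalIntegral.integral_of_le (by norm_num), ← integral_indicator measurableSet_Ioc]
  congr 1
  ext t
  by_cases ht : t ∈ Set.Ioc (-1:ℝ) 1
  · simp only [Set.indicator_of_mem ht, E, Circle.smul_def, Real.fourierChar_apply, smul_eq_mul]
    rw [← mul_assoc]
    congr 4
    push_cast; ring
  · simp [ht]

lemma partA (l v : ℝ) {σ : ℝ} (hσ : 0 < σ) :
    HasSum (fun n : ℕ => ((vonMangoldt n * (n : ℝ) ^ (-(1 + σ)) : ℝ) : ℂ) * K (l * (v - Real.log n)))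
      (∫ t in (-1:ℝ)..1, E l v t * LSeries (fun n => (vonMangoldt n : ℂ)) (S σ l t)) := by
  have hsum : Summable (fun n : ℕ => ‖LSeries.term (fun n => (vonMangoldt n : ℂ)) ((1 + σ : ℝ) : ℂ) n‖) :=
    (LSeriesSummable_vonMangoldt (s := ((1 + σ : ℝ) : ℂ)) (by simp [hσ])).norm
  have hnorm (n : ℕ) (t : ℝ) : ‖LSeries.term (fun n => (vonMangoldt n : ℂ)) (S σ l t) n‖
      = ‖LSeries.term (fun n => (vonMangoldt n : ℂ)) ((1 + σ : ℝ) : ℂ) n‖ := by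
    rw [LSeries.norm_term_eq, LSeries.norm_term_eq, S_re, ofReal_re]
  have hterm (n : ℕ) (t : ℝ) : LSeries.term (fun n => (vonMangoldt n : ℂ)) (S σ l t) n =
      ((vonMangoldt n * (n : ℝ) ^ (-(1 + σ)) : ℝ) : ℂ) * cexp (((2 * Real.pi * t * l * Real.log n : ℝ) : ℂ) * I) := by
    rcases Nat.eq_zero_or_pos n with rfl | hn
    · simp
    have hn' : (0:ℝ) < n := by exact_mod_cast hn
    rw [LSeries.term_of_ne_zero hn.ne', div_eq_mul_inv, ← cpow_neg, cpow_def_of_ne_zero (by exact_mod_cast hn.ne'),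
      Real.rpow_def_of_pos hn', ← natCast_log]
    push_cast
    rw [mul_assoc, ← Complex.exp_add]
    congr 2
    simp only [S]; push_cast; ring
  have key := intervalIntegral.hasSum_integral_of_dominated_convergence (μ := volume) (a := -1) (b := 1)
    (F := fun (n : ℕ) t => E l v t * LSeries.term (fun n => (vonMangoldt n : ℂ)) (S σ l t) n)
    (f := fun t => E l v t * LSeries (fun n => (vonMangoldt n : ℂ)) (S σ l t))
    (fun n _ => 2 * ‖LSeries.term (fun n => (vonMangoldt n : ℂ)) ((1 + σ : ℝ) : ℂ) n‖)
    (fun n => by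
      simp only [hterm]
      have := E_cont l v
      exact Continuous.aestronglyMeasurable (by fun_prop))
    (fun n => ae_of_all _ fun t ht => by
      rw [norm_mul, hnorm]
      gcongr
      exact E_bound l v ht)
    (ae_of_all _ fun t ht => hsum.mul_left 2)
    (by simp)
    (ae_of_all _ fun t ht => by
      apply HasSum.mul_left
      exact (LSeriesSummable_vonMangoldt (by rw [S_re]; linarith)).hasSum)
  have hfun (n : ℕ) : ((vonMangoldt n * (n : ℝ) ^ (-(1 + σ)) : ℝ) : ℂ) * K (l * (v - Real.log n)) =
      ∫ t in (-1:ℝ)..1, E l v t * LSeries.term (fun n => (vonMangoldt n : ℂ)) (S σ l t) n := by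
    rw [K, ← intervalIntegral.integral_const_mul]
    refine intervalIntegral.integral_congr fun t _ => ?_
    simp only [hterm, E]
    rw [show cexp (((-2 * Real.pi * t * (l * (v - Real.log n)) : ℝ) : ℂ) * I) = cexp (((-2 * Real.pi * t * (l * v) : ℝ) : ℂ) * I) * cexp (((2 * Real.pi * t * l * Real.log n : ℝ) : ℂ) * I) by
      rw [← Complex.exp_add]; congr 1; push_cast; ring]
    ring
  simp_rw [hfun]
  exact key

lemma partB (l v : ℝ) {σ : ℝ} (hσ : 0 < σ) :
    ∫ t in (-1:ℝ)..1, E l v t * (1 / (S σ l t - 1)) =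
      ∫ x in Set.Ioi (0:ℝ), (Real.exp (-σ * x) : ℂ) * K (l * (v - x)) := by
  have h1 (t : ℝ) : E l v t * (1 / (S σ l t - 1)) = ∫ x in Set.Ioi (0:ℝ), E l v t * cexp (-(S σ l t - 1) * x) := by
    rw [integral_const_mul, integral_exp_mul_complex_Ioi (by simp [S_re, hσ]),
      ofReal_zero, mul_zero, Complex.exp_zero, neg_div_neg_eq]
  simp_rw [h1]
  have hn (t x : ℝ) : cexp (-(S σ l t - 1) * x) = (Real.exp (-σ * x) : ℂ) * cexp (((2 * Real.pi * l * t * x : ℝ) : ℂ) * I) := by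
    push_cast
    rw [← Complex.exp_add]
    congr 1
    simp only [S]; push_cast; ring
  rw [intervalIntegral_integral_swap]
  · refine setIntegral_congr_fun measurableSet_Ioi fun x _ => ?_
    simp only [K]
    rw [← intervalIntegral.integral_const_mul]
    refine intervalIntegral.integral_congr fun t _ => ?_
    simp only [hn, E]
    rw [show cexp (((-2 * Real.pi * t * (l * (v - x)) : ℝ) : ℂ) * I) = cexp (((-2 * Real.pi * t * (l * v) : ℝ) : ℂ) * I) * cexp (((2 * Real.pi * l * t * x : ℝ) : ℂ) * I) by
      rw [← Complex.exp_add]; congr 1; push_cast; ring]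
    ring
  · have e1 : Integrable (fun _ : ℝ => (2:ℝ)) (volume.restrict (Set.uIoc (-1:ℝ) 1)) := by
      simp [Set.uIoc_of_le]
    have e2 : Integrable (fun x : ℝ => Real.exp (-σ * x)) (volume.restrict (Set.Ioi (0:ℝ))) :=
      exp_neg_integrableOn_Ioi 0 hσ
    refine (e1.mul_prod e2).mono' ?_ ?_
    · apply Continuous.aestronglyMeasurable
      have := E_cont l v
      simp only [Function.uncurry_def, S]
      fun_prop
    · rw [Measure.prod_restrict, ae_restrict_iff' (measurableSet_uIoc.prod measurableSet_Ioi)]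
      refine ae_of_all _ fun p hp => ?_
      simp only [Function.uncurry, hn, norm_mul, norm_exp_ofReal_mul_I, mul_one, norm_real, Real.norm_eq_abs, Real.abs_exp]
      gcongr
      exact E_bound l v hp.1

lemma identity (l v : ℝ) {σ : ℝ} (hσ : 0 < σ) :
    HasSum (fun n : ℕ => ((vonMangoldt n * (n : ℝ) ^ (-(1 + σ)) : ℝ) : ℂ) * K (l * (v - Real.log n)))
      (J l σ v + ∫ x in Set.Ioi (0:ℝ), (Real.exp (-σ * x) : ℂ) * K (l * (v - x))) := by
  convert partA l v hσ using 1
  rw [← partB l v hσ, J, ← intervalIntegral.integral_add]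
  · refine intervalIntegral.integral_congr fun t _ => ?_
    rw [G_eq (by rw [S_re]; linarith), abs_of_pos hσ]
    ring
  · exact Continuous.intervalIntegrable ((E_cont l v).mul ((GS_cont l).comp (by fun_prop : Continuous fun t : ℝ => (σ, t)))) _ _
  · refine Continuous.intervalIntegrable ((E_cont l v).mul ?_) _ _
    refine continuous_const.div (by unfold S; fun_prop) fun t h => ?_
    have := congrArg Complex.re h
    rw [sub_re, S_re] at this
    simp at this
    linarith

lemma exists_primePow {δ : ℝ} (hδ : 0 < δ) : ∀ᶠ v : ℝ in atTop, ∃ n : ℕ, IsPrimePow n ∧ |v - Real.log n| ≤ δ := by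
  set l := δ⁻¹ with hl
  have hl0 : 0 < l := by positivity
  have hKl (v : ℝ) : Integrable (fun x : ℝ => K (l * (v - x))) := by
    have h1 : Integrable (fun x : ℝ => K (l * x)) := K_int.comp_mul_left' hl0.ne'
    exact h1.comp_sub_left v
  have hsig (v : ℝ) : Tendsto (fun σ : ℝ => J l σ v + ∫ x in Set.Ioi (0:ℝ), (Real.exp (-σ * x) : ℂ) * K (l * (v - x)))
      (𝓝[>] 0) (𝓝 (J l 0 v + ∫ x in Set.Ioi (0:ℝ), K (l * (v - x)))) := by
    apply Tendsto.add
    · exact ((J_cont l v).tendsto 0).mono_left nhdsWithin_le_nhds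
    · apply tendsto_integral_filter_of_dominated_convergence (fun x => ‖K (l * (v - x))‖)
      · refine Eventually.of_forall fun σ => Continuous.aestronglyMeasurable ?_
        have := K_cont
        fun_prop
      · filter_upwards [self_mem_nhdsWithin] with σ hσ
        rw [ae_restrict_iff' measurableSet_Ioi]
        refine ae_of_all _ fun x hx => ?_
        rw [norm_mul, norm_real, Real.norm_eq_abs, Real.abs_exp]
        have : Real.exp (-σ * x) ≤ 1 := Real.exp_le_one_iff.2 (by
          have := mul_pos (Set.mem_Ioi.1 hσ) (Set.mem_Ioi.1 hx); linarith)
        nlinarith [norm_nonneg (K (l * (v - x)))]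
      · exact (hKl v).norm.integrableOn
      · refine ae_of_all _ fun x => ?_
        have : Continuous (fun σ : ℝ => (Real.exp (-σ * x) : ℂ) * K (l * (v - x))) := by fun_prop
        have h := (this.tendsto 0).mono_left (nhdsWithin_le_nhds (s := Set.Ioi 0))
        simpa using h
  have hlim : Tendsto (fun v : ℝ => J l 0 v + ∫ x in Set.Ioi (0:ℝ), K (l * (v - x))) atTop (𝓝 (0 + ((δ : ℝ) : ℂ))) := by
    apply (J_tendsto hl0).add
    have h1 : ∀ v : ℝ, ∫ x in Set.Ioi (0:ℝ), K (l * (v - x)) = ∫ y in Set.Iio v, K (l * y) := by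
      intro v
      rw [← integral_indicator measurableSet_Ioi, ← integral_indicator measurableSet_Iio,
        ← integral_sub_left_eq_self _ volume v]
      congr 1
      ext x
      simp [Set.indicator]
    simp_rw [h1]
    have h2 : ((δ : ℝ) : ℂ) = ∫ y, K (l * y) := by
      rw [Measure.integral_comp_mul_left, K_integral, hl]
      simp [abs_of_pos hδ]
    rw [h2]
    simp_rw [← integral_indicator measurableSet_Iio]
    apply tendsto_integral_filter_of_dominated_convergence (fun x => ‖K (l * x)‖)
    · refine Eventually.of_forall fun v => ?_
      have := K_cont
      exact (Continuous.aestronglyMeasurable (by fun_prop)).indicator measurableSet_Iio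
    · exact Eventually.of_forall fun v => ae_of_all _ fun x => norm_indicator_le_norm_self _ _
    · exact (K_int.comp_mul_left' hl0.ne').norm
    · refine ae_of_all _ fun x => ?_
      apply tendsto_const_nhds.congr'
      filter_upwards [eventually_gt_atTop x] with v hv
      simp [hv]
  have hlimre := (continuous_re.tendsto _).comp hlim
  have hpos := hlimre.eventually (lt_mem_nhds (show (0:ℝ) < (0 + ((δ : ℝ) : ℂ)).re by simpa using hδ))
  filter_upwards [hpos] with v hv
  by_contra hno
  push Not at hno
  have hle : (J l 0 v + ∫ x in Set.Ioi (0:ℝ), K (l * (v - x))).re ≤ 0 := by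
    refine le_of_tendsto ((continuous_re.tendsto _).comp (hsig v)) ?_
    filter_upwards [self_mem_nhdsWithin] with σ hσ
    refine hasSum_le ?_ (Complex.hasSum_re (identity l v hσ)) hasSum_zero
    intro n
    by_cases hn : IsPrimePow n
    · rw [re_ofReal_mul]
      refine mul_nonpos_of_nonneg_of_nonpos (mul_nonneg vonMangoldt_nonneg (by positivity)) (K_re_nonpos ?_)
      rw [abs_mul, abs_of_pos hl0, hl, inv_mul_eq_div, lt_div_iff₀ hδ, one_mul]
      exact hno n hn
    · have : vonMangoldt n = 0 := by
        by_contra h; exact hn (vonMangoldt_ne_zero_iff.1 h)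
      simp [this]
  exact absurd hv (not_lt.2 hle)

end PP

namespace PP
lemma alg1 {F : Type} [Field F] {c0 c1 c2 c3 c4 t0 t1 t2 t3 t4 : F}
    (h0 : c0 + c1 + c2 + c3 + c4 = 0)
    (h1 : c0 * t0 + c1 * t1 + c2 * t2 + c3 * t3 + c4 * t4 = 0)
    (h2 : c0 * t0 ^ 2 + c1 * t1 ^ 2 + c2 * t2 ^ 2 + c3 * t3 ^ 2 + c4 * t4 ^ 2 = 0)
    (h3 : c0 * t0 ^ 3 + c1 * t1 ^ 3 + c2 * t2 ^ 3 + c3 * t3 ^ 3 + c4 * t4 ^ 3 = 0)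
    (h4 : c0 * t0 ^ 4 + c1 * t1 ^ 4 + c2 * t2 ^ 4 + c3 * t3 ^ 4 + c4 * t4 ^ 4 = 0)
    (n1 : t0 ≠ t1) (n2 : t0 ≠ t2) (n3 : t0 ≠ t3) (n4 : t0 ≠ t4) : c0 = 0 := by
  have key : c0 * ((t0 - t1) * (t0 - t2) * (t0 - t3) * (t0 - t4)) = 0 := by
    linear_combination h4 - (t1 + t2 + t3 + t4) * h3
      + (t1 * t2 + t1 * t3 + t1 * t4 + t2 * t3 + t2 * t4 + t3 * t4) * h2
      - (t1 * t2 * t3 + t1 * t2 * t4 + t1 * t3 * t4 + t2 * t3 * t4) * h1 + t1 * t2 * t3 * t4 * h0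
  have := mul_ne_zero (mul_ne_zero (mul_ne_zero (sub_ne_zero.2 n1) (sub_ne_zero.2 n2)) (sub_ne_zero.2 n3)) (sub_ne_zero.2 n4)
  exact (mul_eq_zero.1 key).resolve_right this

lemma alg2 {F : Type} [Field F] {c0 c1 c2 c3 c4 t0 t1 t2 t3 t4 : F}
    (h0 : c0 + c1 + c2 + c3 + c4 = 0)
    (h1 : c0 * t0 + c1 * t1 + c2 * t2 + c3 * t3 + c4 * t4 = 0)
    (h2 : c0 * t0 ^ 2 + c1 * t1 ^ 2 + c2 * t2 ^ 2 + c3 * t3 ^ 2 + c4 * t4 ^ 2 = 0)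
    (h3 : c0 * t0 ^ 3 + c1 * t1 ^ 3 + c2 * t2 ^ 3 + c3 * t3 ^ 3 + c4 * t4 ^ 3 = 0)
    (h4 : c0 * t0 ^ 4 + c1 * t1 ^ 4 + c2 * t2 ^ 4 + c3 * t3 ^ 4 + c4 * t4 ^ 4 = 0)
    (m0 : c0 ≠ 0) (m1 : c1 ≠ 0) (m2 : c2 ≠ 0) (m3 : c3 ≠ 0) (m4 : c4 ≠ 0)
    (n0 : t0 ≠ t1) (n1 : t1 ≠ t2) (n2 : t2 ≠ t3) (n3 : t3 ≠ t4) (n4 : t4 ≠ t0) : False := by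
  have u0 : t0 = t2 ∨ t0 = t3 := by
    by_contra! h
    exact m0 (alg1 h0 h1 h2 h3 h4 n0 h.1 h.2 n4.symm)
  have u1 : t1 = t3 ∨ t1 = t4 := by
    by_contra! h
    exact m1 (alg1 (c1 := c2) (c2 := c3) (c3 := c4) (c4 := c0) (t1 := t2) (t2 := t3) (t3 := t4) (t4 := t0) (by linear_combination h0) (by linear_combination h1) (by linear_combination h2)
      (by linear_combination h3) (by linear_combination h4) n1 h.1 h.2 n0.symm)
  have u2 : t2 = t4 ∨ t2 = t0 := by
    by_contra! h
    exact m2 (alg1 (c1 := c3) (c2 := c4) (c3 := c0) (c4 := c1) (t1 := t3) (t2 := t4) (t3 := t0) (t4 := t1) (by linear_combination h0) (by linear_combination h1) (by linear_combination h2)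
      (by linear_combination h3) (by linear_combination h4) n2 h.1 h.2 n1.symm)
  have u3 : t3 = t0 ∨ t3 = t1 := by
    by_contra! h
    exact m3 (alg1 (c1 := c4) (c2 := c0) (c3 := c1) (c4 := c2) (t1 := t4) (t2 := t0) (t3 := t1) (t4 := t2) (by linear_combination h0) (by linear_combination h1) (by linear_combination h2)
      (by linear_combination h3) (by linear_combination h4) n3 h.1 h.2 n2.symm)
  have u4 : t4 = t1 ∨ t4 = t2 := by
    by_contra! h
    exact m4 (alg1 (c1 := c0) (c2 := c1) (c3 := c2) (c4 := c3) (t1 := t0) (t2 := t1) (t3 := t2) (t4 := t3) (by linear_combination h0) (by linear_combination h1) (by linear_combination h2)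
      (by linear_combination h3) (by linear_combination h4) n4 h.1 h.2 n3.symm)
  grind

/-- Incidence between points `(x, a₁, a₂; a₃, a₄)` and lines `(t, b₃, b₄; b₁, b₂)`. -/
def Inc {F : Type} [Field F] (p l : (F × F × F) × (F × F)) : Prop :=
  p.1.2.1 + l.2.1 = p.1.1 * l.1.1 ∧ p.1.2.2 + l.2.2 = p.1.1 * l.1.1 ^ 2 ∧
  p.2.1 + l.1.2.1 = p.1.1 * l.1.1 ^ 3 ∧ p.2.2 + l.1.2.2 = p.1.1 * l.1.1 ^ 4

lemma Inc.c_ne {F : Type} [Field F] {p p' l : (F × F × F) × (F × F)} (h : Inc p l) (h' : Inc p' l)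
    (hne : p ≠ p') : p'.1.1 - p.1.1 ≠ 0 := by
  intro hx
  apply hne
  obtain ⟨⟨x, a1, a2⟩, a3, a4⟩ := p
  obtain ⟨⟨x', a1', a2'⟩, a3', a4'⟩ := p'
  obtain ⟨⟨t, b3, b4⟩, b1, b2⟩ := l
  simp only [Inc] at h h' hx
  obtain rfl : x' = x := sub_eq_zero.1 hx
  simp only [Prod.mk.injEq]
  refine ⟨⟨trivial, ?_, ?_⟩, ?_, ?_⟩
  · linear_combination h.1 - h'.1
  · linear_combination h.2.1 - h'.2.1
  · linear_combination h.2.2.1 - h'.2.2.1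
  · linear_combination h.2.2.2 - h'.2.2.2

lemma Inc.t_ne {F : Type} [Field F] {p l l' : (F × F × F) × (F × F)} (h : Inc p l) (h' : Inc p l')
    (hne : l ≠ l') : l.1.1 ≠ l'.1.1 := by
  intro hx
  apply hne
  obtain ⟨⟨x, a1, a2⟩, a3, a4⟩ := p
  obtain ⟨⟨t, b3, b4⟩, b1, b2⟩ := l
  obtain ⟨⟨t', b3', b4'⟩, b1', b2'⟩ := l'
  simp only [Inc] at h h' hx
  subst hx
  simp only [Prod.mk.injEq]
  refine ⟨⟨trivial, ?_, ?_⟩, ?_, ?_⟩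
  · linear_combination h.2.2.1 - h'.2.2.1
  · linear_combination h.2.2.2 - h'.2.2.2
  · linear_combination h.1 - h'.1
  · linear_combination h.2.1 - h'.2.1

lemma no_cycle {F : Type} [Field F] {p0 p1 p2 p3 p4 l0 l1 l2 l3 l4 : (F × F × F) × (F × F)}
    (h00 : Inc p0 l0) (h10 : Inc p1 l0) (h11 : Inc p1 l1) (h21 : Inc p2 l1) (h22 : Inc p2 l2)
    (h32 : Inc p3 l2) (h33 : Inc p3 l3) (h43 : Inc p4 l3) (h44 : Inc p4 l4) (h04 : Inc p0 l4)
    (p01 : p0 ≠ p1) (p12 : p1 ≠ p2) (p23 : p2 ≠ p3) (p34 : p3 ≠ p4) (p40 : p4 ≠ p0)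
    (l01 : l0 ≠ l1) (l12 : l1 ≠ l2) (l23 : l2 ≠ l3) (l34 : l3 ≠ l4) (l40 : l4 ≠ l0) : False := by
  refine alg2 ?_ ?_ ?_ ?_ ?_ (h00.c_ne h10 p01) (h11.c_ne h21 p12) (h22.c_ne h32 p23)
    (h33.c_ne h43 p34) (h44.c_ne h04 p40) (h10.t_ne h11 l01) (h21.t_ne h22 l12) (h32.t_ne h33 l23)
    (h43.t_ne h44 l34) (h04.t_ne h00 l40)
  · ring
  · linear_combination h00.1 - h10.1 + h11.1 - h21.1 + h22.1 - h32.1 + h33.1 - h43.1 + h44.1 - h04.1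
  · linear_combination h00.2.1 - h10.2.1 + h11.2.1 - h21.2.1 + h22.2.1 - h32.2.1 + h33.2.1 - h43.2.1 + h44.2.1 - h04.2.1
  · linear_combination h00.2.2.1 - h10.2.2.1 + h11.2.2.1 - h21.2.2.1 + h22.2.2.1 - h32.2.2.1 + h33.2.2.1 - h43.2.2.1 + h44.2.2.1 - h04.2.2.1
  · linear_combination h00.2.2.2 - h10.2.2.2 + h11.2.2.2 - h21.2.2.2 + h22.2.2.2 - h32.2.2.2 + h33.2.2.2 - h43.2.2.2 + h44.2.2.2 - h04.2.2.2

/-- The vertex type: a part index, a flag (point or line), and two free coordinates. -/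
abbrev Vt (F : Type) (r : ℕ) : Type := Fin r × Bool × (F × F)

def cd {F : Type} {r : ℕ} (e : Fin r → F × F × F) (v : Vt F r) : (F × F × F) × (F × F) := (e v.1, v.2.2)

def Gr {F : Type} [Field F] {r : ℕ} (e : Fin r → F × F × F) : SimpleGraph (Vt F r) where
  Adj u w := (u.2.1 = true ∧ w.2.1 = false ∧ Inc (cd e u) (cd e w)) ∨
    (w.2.1 = true ∧ u.2.1 = false ∧ Inc (cd e w) (cd e u))
  symm := ⟨fun u w h => h.symm⟩
  loopless := ⟨fun u h => by rcases h with h | h <;> simp [h.1] at h⟩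

lemma Gr_adj {F : Type} [Field F] {r : ℕ} (e : Fin r → F × F × F) {u w : Vt F r} (h : (Gr e).Adj u w) :
    (u.2.1 = true → w.2.1 = false ∧ Inc (cd e u) (cd e w)) ∧
    (u.2.1 = false → w.2.1 = true ∧ Inc (cd e w) (cd e u)) := by
  rcases h with ⟨a, b, c⟩ | ⟨a, b, c⟩ <;> simp [a, b, c]

lemma no10 {F : Type} [Field F] {r : ℕ} {e : Fin r → F × F × F} (he : Function.Injective e)
    (f : Fin 10 → Vt F r) (hf : Function.Injective f) (hadj : ∀ i : Fin 10, (Gr e).Adj (f i) (f (i + 1)))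
    (h0 : (f 0).2.1 = true) : False := by
  have b0 := (Gr_adj e (hadj 0)).1 h0
  have b1 := (Gr_adj e (hadj 1)).2 b0.1
  have b2 := (Gr_adj e (hadj 2)).1 b1.1
  have b3 := (Gr_adj e (hadj 3)).2 b2.1
  have b4 := (Gr_adj e (hadj 4)).1 b3.1
  have b5 := (Gr_adj e (hadj 5)).2 b4.1
  have b6 := (Gr_adj e (hadj 6)).1 b5.1
  have b7 := (Gr_adj e (hadj 7)).2 b6.1
  have b8 := (Gr_adj e (hadj 8)).1 b7.1
  have b9 := (Gr_adj e (hadj 9)).2 b8.1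
  have hne (i j : Fin 10) (hij : i ≠ j) (hb : (f i).2.1 = (f j).2.1) : cd e (f i) ≠ cd e (f j) := by
    intro h
    simp only [cd, Prod.mk.injEq] at h
    exact hij (hf (Prod.ext (he h.1) (Prod.ext hb h.2)))
  exact no_cycle b0.2 b1.2 b2.2 b3.2 b4.2 b5.2 b6.2 b7.2 b8.2 b9.2
    (hne 0 2 (by decide) (h0.trans b1.1.symm)) (hne 2 4 (by decide) (b1.1.trans b3.1.symm))
    (hne 4 6 (by decide) (b3.1.trans b5.1.symm)) (hne 6 8 (by decide) (b5.1.trans b7.1.symm))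
    (hne 8 0 (by decide) (b7.1.trans h0.symm))
    (hne 1 3 (by decide) (b0.1.trans b2.1.symm)) (hne 3 5 (by decide) (b2.1.trans b4.1.symm))
    (hne 5 7 (by decide) (b4.1.trans b6.1.symm)) (hne 7 9 (by decide) (b6.1.trans b8.1.symm))
    (hne 9 1 (by decide) (b8.1.trans b0.1.symm))

lemma Gr_free {F : Type} [Field F] {r : ℕ} {e : Fin r → F × F × F} (he : Function.Injective e) :
    ¬ ContainsSub (SimpleGraph.cycleGraph 10) (Gr e) := by
  rintro ⟨f, hf⟩
  have hadj : ∀ i : Fin 10, (Gr e).Adj (f i) (f (i + 1)) := fun i => f.map_adj (by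
    revert i; simp only [SimpleGraph.cycleGraph_adj]; decide)
  cases h0 : (f 0).2.1 with
  | true => exact no10 he f hf hadj h0
  | false =>
    refine no10 he (fun i => f (i + 1)) (hf.comp (add_left_injective 1)) (fun i => hadj (i + 1)) ?_
    exact ((Gr_adj e (hadj 0)).2 h0).1

lemma fGraph_le {F : Type} [Field F] [Fintype F] {r : ℕ} (h : r ≤ Fintype.card F ^ 3) :
    fGraph (SimpleGraph.cycleGraph 10) r ≤ 2 * Fintype.card F ^ 2 := by
  classical
  obtain ⟨e⟩ : Nonempty (Fin r ↪ F × F × F) := by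
    apply Function.Embedding.nonempty_of_card_le
    simp only [Fintype.card_fin, Fintype.card_prod]
    calc r ≤ _ := h
      _ = _ := by ring
  let φ := Fintype.equivFin (Vt F r)
  apply Nat.sInf_le
  refine ⟨_, (Gr e).map φ.toEmbedding, ?_, ?_⟩
  · rintro ⟨f, hf⟩
    apply Gr_free e.injective
    let iso := SimpleGraph.Iso.map φ (Gr e)
    exact ⟨iso.symm.toHom.comp f, iso.symm.injective.comp hf⟩
  · refine ⟨fun i => Finset.univ.filter fun v => (φ.symm v).1 = i, ?_, ?_, ?_⟩
    · intro v
      refine ⟨(φ.symm v).1, by simp, fun j hj => by simpa [eq_comm] using hj⟩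
    · intro i
      have : (Finset.univ.filter fun v => (φ.symm v).1 = i).card ≤ (Finset.univ : Finset (Bool × (F × F))).card := by
        apply Finset.card_le_card_of_injOn (fun v => (φ.symm v).2) (by simp)
        intro u hu w hw huw
        simp at hu hw
        exact φ.symm.injective (Prod.ext (hu.trans hw.symm) huw)
      refine this.trans (le_of_eq ?_)
      simp [sq]
    · intro i j _
      let u : Vt F r := (i, true, ((e i).1 * (e j).1 ^ 3 - (e j).2.1, (e i).1 * (e j).1 ^ 4 - (e j).2.2))
      let w : Vt F r := (j, false, ((e i).1 * (e j).1 - (e i).2.1, (e i).1 * (e j).1 ^ 2 - (e i).2.2))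
      refine ⟨φ u, by simp [u], φ w, by simp [w], ?_⟩
      rw [show φ u = φ.toEmbedding u from rfl, show φ w = φ.toEmbedding w from rfl, SimpleGraph.map_adj_apply]
      left
      refine ⟨rfl, rfl, ?_⟩
      simp [u, w, cd, Inc]

lemma fGraph_le_primePow {q r : ℕ} (hq : IsPrimePow q) (h : r ≤ q ^ 3) :
    fGraph (SimpleGraph.cycleGraph 10) r ≤ 2 * q ^ 2 := by
  obtain ⟨p, k, hp, hk, rfl⟩ := hq
  have : Fact p.Prime := ⟨hp.nat_prime⟩
  let _ : Fintype (GaloisField p k) := Fintype.ofFinite _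
  have hc : Fintype.card (GaloisField p k) = p ^ k := by
    rw [← Nat.card_eq_fintype_card, GaloisField.card p k hk.ne']
  rw [← hc] at h ⊢
  exact fGraph_le h
end PP

/-- For every `ε > 0`, for all sufficiently large `r`, `f(r, C_10) ≤ (2+ε)·r^{2/3}`. -/
theorem stmt3 (ε : ℝ) (hε : 0 < ε) :
    ∃ r₀ : ℕ, ∀ r : ℕ, r₀ ≤ r →
      (fGraph (SimpleGraph.cycleGraph 10) r : ℝ) ≤ (2 + ε) * (r : ℝ) ^ ((2 : ℝ) / 3) := by
  -- take `exp (4 δ) = 1 + ε / 2`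
  set δ := Real.log (1 + ε / 2) / 4 with hδ
  have hδ0 : 0 < δ := by
    have := Real.log_pos (show 1 < 1 + ε / 2 by linarith)
    positivity
  have h1 := PP.exists_primePow hδ0
  have h2 : Filter.Tendsto (fun r : ℕ => Real.log r / 3 + δ) Filter.atTop Filter.atTop := by
    apply Filter.tendsto_atTop_add_const_right
    exact (Real.tendsto_log_atTop.comp tendsto_natCast_atTop_atTop).atTop_div_const (by norm_num)
  obtain ⟨r₀, hr₀⟩ := Filter.eventually_atTop.1 ((h2.eventually h1).and (Filter.eventually_ge_atTop 1))
  refine ⟨r₀, fun r hr => ?_⟩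
  obtain ⟨⟨q, hq, hqv⟩, hr1⟩ := hr₀ r hr
  have hr0 : (0:ℝ) < r := by exact_mod_cast hr1
  have hq0 : (0:ℝ) < q := by exact_mod_cast hq.pos
  rw [abs_le] at hqv
  have hle : r ≤ q ^ 3 := by
    have : Real.log r ≤ Real.log ((q:ℝ) ^ 3) := by
      rw [Real.log_pow]; push_cast; linarith [hqv.2]
    exact_mod_cast (Real.log_le_log_iff hr0 (by positivity)).1 this
  have hf := PP.fGraph_le_primePow hq hle
  have hq2 : (q:ℝ) ^ 2 ≤ (1 + ε / 2) * (r : ℝ) ^ ((2 : ℝ) / 3) := by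
    rw [← Real.log_le_log_iff (by positivity) (by positivity), Real.log_mul (by positivity) (by positivity),
      Real.log_pow, Real.log_rpow hr0]
    push_cast
    have : Real.log (1 + ε / 2) = 4 * δ := by rw [hδ]; ring
    rw [this]
    linarith [hqv.1]
  calc (fGraph (SimpleGraph.cycleGraph 10) r : ℝ) ≤ ((2 * q ^ 2 : ℕ) : ℝ) := by exact_mod_cast hf
    _ = 2 * (q:ℝ) ^ 2 := by push_cast; ring
    _ ≤ 2 * ((1 + ε / 2) * (r : ℝ) ^ ((2 : ℝ) / 3)) := by gcongr
    _ = _ := by ring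
end

section
/- For every integer ℓ ≥ 2 there exists a constant C > 0 such that for every integer N there exists an integer r ≥ N satisfying f(r, C_{2ℓ}) ≤ C · r^{(3ℓ−2)/(3ℓ+2)} · (log r)^{3ℓ/(3ℓ+2)}, where C_{2ℓ} denotes the cycle of length 2ℓ. -/
open SimpleGraph

namespace Constr
open PowerSeries Matrix

variable {F : Type} [Field F]

/-- power series from a vector of coefficients -/
noncomputable def ps {n : ℕ} (v : Fin n → F) : F⟦X⟧ :=
  PowerSeries.mk (fun i => if h : i < n then v ⟨i, h⟩ else 0)

lemma coeff_ps {n : ℕ} (v : Fin n → F) (i : Fin n) : coeff (i : ℕ) (ps v) = v i := by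
  simp [ps, coeff_mk]

/-- parameters -/
abbrev XP (F : Type) (g : ℕ) := (Fin (g+1) → F) × (Fin (g+1) → F) × (Fin g → F)
abbrev RP (F : Type) (g : ℕ) := (Fin (g+1) → F) × (Fin (g+2) → F) × (Fin g → F)

noncomputable def pa {g : ℕ} (x : XP F g) : F⟦X⟧ := 1 + X * ps x.1
noncomputable def pb {g : ℕ} (x : XP F g) : F⟦X⟧ := X * ps x.2.1
noncomputable def pc {g : ℕ} (b : F) (x : XP F g) : F⟦X⟧ := X * (C b + X * ps x.2.2)
noncomputable def pd {g : ℕ} (b : F) (x : XP F g) : F⟦X⟧ := (1 + pb x * pc b x) * (pa x)⁻¹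

noncomputable def lA (t : F) : Matrix (Fin 2) (Fin 2) F⟦X⟧ := !![1, C t; 0, 1]
noncomputable def lB (t : F) : Matrix (Fin 2) (Fin 2) F⟦X⟧ := !![1, 0; X * C t, 1]

noncomputable def lM {g : ℕ} (b : F) (x : XP F g) : Matrix (Fin 2) (Fin 2) F⟦X⟧ :=
  !![pa x, pb x; pc b x, pd b x]

noncomputable def eM {g : ℕ} (b : F) (x : XP F g) (t : F) : Matrix (Fin 2) (Fin 2) F⟦X⟧ :=
  lM b x * lA t * lB (-b)

noncomputable def E {g : ℕ} (b : F) (x : XP F g) (t : F) : RP F g :=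
  (fun i => coeff ((i : ℕ) + 1) (eM b x t 0 0), fun i => coeff (i : ℕ) (eM b x t 0 1),
   fun i => coeff ((i : ℕ) + 2) (eM b x t 1 0))

lemma lA_add (s t : F) : lA s * lA t = lA (s + t) := by
  simp [lA, add_comm]
lemma lB_add (s t : F) : lB s * lB t = lB (s + t) := by
  simp [lB, mul_add]
lemma lA_zero : lA (0 : F) = 1 := by simp [lA, Matrix.one_fin_two]
lemma lB_zero : lB (0 : F) = 1 := by simp [lB, Matrix.one_fin_two]

lemma pa_cc {g : ℕ} (x : XP F g) : constantCoeff (pa x) = 1 := by simp [pa]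
lemma pb_cc {g : ℕ} (x : XP F g) : constantCoeff (pb x) = 0 := by simp [pb]
lemma pc_cc {g : ℕ} (b : F) (x : XP F g) : constantCoeff (pc b x) = 0 := by simp [pc]
lemma pd_cc {g : ℕ} (b : F) (x : XP F g) : constantCoeff (pd b x) = 1 := by
  simp [pd, pa_cc, pb_cc]
lemma pc_c1 {g : ℕ} (b : F) (x : XP F g) : coeff 1 (pc b x) = b := by
  rw [pc]; refine (coeff_succ_X_mul 0 _).trans ?_; simp

lemma lM_det {g : ℕ} (b : F) (x : XP F g) : (lM b x).det = 1 := by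
  have : pa x * (pa x)⁻¹ = 1 := PowerSeries.mul_inv_cancel _ (by simp [pa_cc])
  rw [lM, Matrix.det_fin_two_of, pd]
  linear_combination (1 + pb x * pc b x) * this
lemma lA_det (t : F) : (lA t).det = 1 := by simp [lA]
lemma lB_det (t : F) : (lB t).det = 1 := by simp [lB]
lemma eM_det {g : ℕ} (b : F) (x : XP F g) (t : F) : (eM b x t).det = 1 := by
  simp [eM, lM_det, lA_det, lB_det]

lemma eM_entries {g : ℕ} (b : F) (x : XP F g) (t : F) :
    eM b x t = !![pa x + (pa x * C t + pb x) * (X * C (-b)), pa x * C t + pb x;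
      pc b x + (pc b x * C t + pd b x) * (X * C (-b)), pc b x * C t + pd b x] := by
  simp [eM, lM, lA, lB]

lemma eM00 {g : ℕ} (b : F) (x : XP F g) (t : F) : coeff 0 (eM b x t 0 0) = 1 := by
  rw [eM_entries]; simp [pa_cc]
lemma eM10 {g : ℕ} (b : F) (x : XP F g) (t : F) : coeff 0 (eM b x t 1 0) = 0 := by
  rw [eM_entries]; simp [pc_cc]
lemma eM11 {g : ℕ} (b : F) (x : XP F g) (t : F) : coeff 1 (eM b x t 1 0) = 0 := by
  rw [eM_entries]
  have : coeff 1 ((pc b x * C t + pd b x) * (X * C (-b))) = -b := by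
    rw [show (pc b x * C t + pd b x) * (X * C (-b)) = X * ((pc b x * C t + pd b x) * C (-b)) by ring,
      show (1 : ℕ) = 0 + 1 from rfl, coeff_succ_X_mul]
    simp [pc_cc, pd_cc]
  simp only [Matrix.of_apply, Matrix.cons_val', Matrix.cons_val_zero, Matrix.cons_val_one, map_add, this, pc_c1]
  simp

/-- truncated ring -/
abbrev S (F : Type) [Field F] (D : ℕ) := F⟦X⟧ ⧸ (Ideal.span {(X : F⟦X⟧) ^ D})

noncomputable def π (F : Type) [Field F] (D : ℕ) : F⟦X⟧ →+* S F D := Ideal.Quotient.mk _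

lemma π_eq_iff (D : ℕ) (p q : F⟦X⟧) : π F D p = π F D q ↔ ∀ m < D, coeff m p = coeff m q := by
  rw [π, Ideal.Quotient.eq, Ideal.mem_span_singleton, PowerSeries.X_pow_dvd_iff]
  simp [sub_eq_zero]

noncomputable def φ (F : Type) [Field F] (D : ℕ) :
    Matrix (Fin 2) (Fin 2) F⟦X⟧ →+* Matrix (Fin 2) (Fin 2) (S F D) := (π F D).mapMatrix

lemma φ_eq_iff (D : ℕ) (M N : Matrix (Fin 2) (Fin 2) F⟦X⟧) :
    φ F D M = φ F D N ↔ ∀ i j, π F D (M i j) = π F D (N i j) := by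
  rw [← Matrix.ext_iff]; rfl

lemma φ_unit (D : ℕ) (M : Matrix (Fin 2) (Fin 2) F⟦X⟧) (h : M.det = 1) : IsUnit (φ F D M) := by
  apply IsUnit.map
  rw [Matrix.isUnit_iff_isUnit_det, h]; exact isUnit_one

lemma E_mat {g : ℕ} {b b' : F} {x x' : XP F g} {t t' : F} (h : E b x t = E b' x' t') :
    φ F (g+2) (eM b x t) = φ F (g+2) (eM b' x' t') := by
  simp only [E, Prod.mk.injEq, funext_iff] at h
  obtain ⟨h1, h2, h3⟩ := h
  have e00 : π F (g+2) (eM b x t 0 0) = π F (g+2) (eM b' x' t' 0 0) := by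
    rw [π_eq_iff]; intro m hm
    rcases m with _ | m
    · rw [eM00, eM00]
    · exact h1 ⟨m, by omega⟩
  have e01 : π F (g+2) (eM b x t 0 1) = π F (g+2) (eM b' x' t' 0 1) := by
    rw [π_eq_iff]; intro m hm
    exact h2 ⟨m, by omega⟩
  have e10 : π F (g+2) (eM b x t 1 0) = π F (g+2) (eM b' x' t' 1 0) := by
    rw [π_eq_iff]; intro m hm
    rcases m with _ | _ | m
    · rw [eM10, eM10]
    · rw [eM11, eM11]
    · exact h3 ⟨m, by omega⟩
  have e11 : π F (g+2) (eM b x t 1 1) = π F (g+2) (eM b' x' t' 1 1) := by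
    have d1 := congrArg (π F (g+2)) (eM_det b x t)
    have d2 := congrArg (π F (g+2)) (eM_det b' x' t')
    rw [Matrix.det_fin_two, map_sub, map_mul, map_mul, map_one] at d1 d2
    have hu : IsUnit (π F (g+2) (eM b x t 0 0)) := by
      apply IsUnit.map
      rw [PowerSeries.isUnit_iff_constantCoeff, ← coeff_zero_eq_constantCoeff_apply, eM00]
      exact isUnit_one
    apply hu.mul_left_cancel
    rw [← e00, ← e01, ← e10] at d2
    exact sub_left_injective (d1.trans d2.symm)
  rw [φ_eq_iff]
  exact Fin.forall_fin_two.2 ⟨Fin.forall_fin_two.2 ⟨e00, e01⟩, Fin.forall_fin_two.2 ⟨e10, e11⟩⟩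

lemma lMA_inj {g : ℕ} {b : F} {x x' : XP F g} {t t' : F}
    (h : φ F (g+2) (lM b x * lA t) = φ F (g+2) (lM b x' * lA t')) : x = x' ∧ t = t' := by
  rw [φ_eq_iff] at h
  have h00 := (π_eq_iff _ _ _).1 (h 0 0)
  have h01 := (π_eq_iff _ _ _).1 (h 0 1)
  have h10 := (π_eq_iff _ _ _).1 (h 1 0)
  simp only [lM, lA, Matrix.mul_fin_two, Matrix.of_apply, Matrix.cons_val', Matrix.cons_val_zero,
    Matrix.cons_val_one, mul_one, mul_zero, add_zero, Matrix.cons_val_fin_one] at h00 h01 h10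
  have ht : t = t' := by
    have := h01 0 (by omega)
    simpa [pa_cc, pb_cc] using this
  subst ht
  refine ⟨?_, rfl⟩
  obtain ⟨a, b1, c⟩ := x
  obtain ⟨a', b1', c'⟩ := x'
  have ha : a = a' := by
    funext i
    have := h00 (i + 1) (by omega)
    simp only [pa, map_add, coeff_succ_X_mul, coeff_ps] at this
    simpa using this
  subst ha
  have hb : b1 = b1' := by
    funext i
    have := h01 (i + 1) (by omega)
    simp only [pa, pb, map_add, coeff_succ_X_mul, coeff_ps] at this
    simpa using this
  have hc : c = c' := by
    funext i
    have := h10 (i + 1 + 1) (by omega)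
    simp only [pc, map_add, coeff_succ_X_mul, coeff_ps] at this
    simpa using this
  rw [hb, hc]

lemma eM_lB {g : ℕ} (b : F) (x : XP F g) (t : F) : eM b x t * lB b = lM b x * lA t := by
  rw [eM, mul_assoc, lB_add, neg_add_cancel, lB_zero, mul_one]

lemma E_inj {g : ℕ} {b : F} {x x' : XP F g} {t t' : F} (h : E b x t = E b x' t') :
    x = x' ∧ t = t' := by
  apply lMA_inj (b := b)
  rw [← eM_lB, ← eM_lB, map_mul, map_mul, E_mat h]

/-- invariant for first row of a word -/
def Inv (n : ℕ) (p q : F⟦X⟧) : Prop :=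
  (∀ k, n < 2 * k → coeff k p = 0) ∧ (∀ k, n < 2 * k + 1 → coeff k q = 0) ∧
  (∀ h, n = 2 * h → coeff h p ≠ 0) ∧ (∀ h, n = 2 * h + 1 → coeff h q ≠ 0)

lemma inv_stepA {n : ℕ} (hn : Even n) {W : Matrix (Fin 2) (Fin 2) F⟦X⟧} {t : F} (ht : t ≠ 0)
    (h : Inv n (W 0 0) (W 0 1)) : Inv (n+1) ((W * lA t) 0 0) ((W * lA t) 0 1) := by
  have e0 : (W * lA t) 0 0 = W 0 0 := by simp [lA, Matrix.mul_apply, Fin.sum_univ_two]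
  have e1 : (W * lA t) 0 1 = W 0 0 * C t + W 0 1 := by
    simp [lA, Matrix.mul_apply, Fin.sum_univ_two]
  rw [e0, e1]
  obtain ⟨h1, h2, h3, h4⟩ := h
  obtain ⟨m, hm⟩ := hn
  refine ⟨fun k hk => h1 k (by omega), fun k hk => ?_, fun k hk => by omega, fun k hk => ?_⟩
  · rw [map_add, coeff_mul_C, h1 k (by omega), h2 k (by omega)]; simp
  · rw [map_add, coeff_mul_C, h2 k (by omega), add_zero]
    exact mul_ne_zero (h3 k (by omega)) ht

lemma inv_stepB {n : ℕ} (hn : ¬ Even n) {W : Matrix (Fin 2) (Fin 2) F⟦X⟧} {t : F} (ht : t ≠ 0)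
    (h : Inv n (W 0 0) (W 0 1)) : Inv (n+1) ((W * lB t) 0 0) ((W * lB t) 0 1) := by
  have e0 : (W * lB t) 0 0 = W 0 0 + X * (W 0 1 * C t) := by
    simp [lB, Matrix.mul_apply, Fin.sum_univ_two]; ring
  have e1 : (W * lB t) 0 1 = W 0 1 := by
    simp [lB, Matrix.mul_apply, Fin.sum_univ_two]
  rw [e0, e1]
  obtain ⟨h1, h2, h3, h4⟩ := h
  obtain ⟨m, hm⟩ := Nat.not_even_iff_odd.1 hn
  refine ⟨fun k hk => ?_, fun k hk => h2 k (by omega), fun k hk => ?_, fun k hk => by omega⟩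
  · obtain ⟨k, rfl⟩ : ∃ j, k = j + 1 := ⟨k - 1, by omega⟩
    rw [map_add, coeff_succ_X_mul, coeff_mul_C, h1 (k+1) (by omega), h2 k (by omega)]; simp
  · obtain ⟨k, rfl⟩ : ∃ j, k = j + 1 := ⟨k - 1, by omega⟩
    rw [map_add, coeff_succ_X_mul, coeff_mul_C, h1 (k+1) (by omega), zero_add]
    exact mul_ne_zero (h4 k (by omega)) ht

lemma word_inv {D : ℕ} (u : ℕ → Matrix (Fin 2) (Fin 2) (S F D)) (g0 : Matrix (Fin 2) (Fin 2) (S F D))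
    (W0 : Matrix (Fin 2) (Fin 2) F⟦X⟧) (m : ℕ)
    (h0 : u 0 = g0 * φ F D W0) (hi : Inv 0 (W0 0 0) (W0 0 1))
    (hA : ∀ n < m, Even n → ∃ t : F, t ≠ 0 ∧ u (n+1) = u n * φ F D (lA t))
    (hB : ∀ n < m, ¬ Even n → ∃ t : F, t ≠ 0 ∧ u (n+1) = u n * φ F D (lB t)) :
    ∀ n ≤ m, ∃ W, u n = g0 * φ F D W ∧ Inv n (W 0 0) (W 0 1) := by
  intro n
  induction n with
  | zero => intro _; exact ⟨W0, h0, hi⟩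
  | succ n ih =>
    intro hn
    obtain ⟨W, hW, hI⟩ := ih (by omega)
    by_cases he : Even n
    · obtain ⟨t, ht, e⟩ := hA n (by omega) he
      exact ⟨W * lA t, by rw [e, hW, map_mul, mul_assoc], inv_stepA he ht hI⟩
    · obtain ⟨t, ht, e⟩ := hB n (by omega) he
      exact ⟨W * lB t, by rw [e, hW, map_mul, mul_assoc], inv_stepB he ht hI⟩

lemma inv_one : Inv 0 (1 : F⟦X⟧) 0 := by
  refine ⟨fun k hk => ?_, fun k hk => by simp, fun k hk => ?_, fun k hk => by omega⟩
  · rw [coeff_one, if_neg (by omega)]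
  · rw [coeff_one, if_pos (by omega)]; simp

lemma no_two_words {D ℓ : ℕ} (hℓ : 2 ≤ ℓ) (hD : ℓ / 2 < D)
    (u v : ℕ → Matrix (Fin 2) (Fin 2) (S F D)) (h0 : u 0 = v 0) (hu : IsUnit (u 0))
    (hl : u ℓ = v ℓ)
    (uA : ∀ n < ℓ, Even n → ∃ t : F, t ≠ 0 ∧ u (n+1) = u n * φ F D (lA t))
    (uB : ∀ n < ℓ, ¬ Even n → ∃ t : F, t ≠ 0 ∧ u (n+1) = u n * φ F D (lB t))
    (vB : ∀ n < ℓ, Even n → ∃ t : F, t ≠ 0 ∧ v (n+1) = v n * φ F D (lB t))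
    (vA : ∀ n < ℓ, ¬ Even n → ∃ t : F, t ≠ 0 ∧ v (n+1) = v n * φ F D (lA t)) : False := by
  obtain ⟨W, hW, I⟩ := word_inv u (u 0) 1 ℓ (by simp) (by simpa using inv_one) uA uB ℓ le_rfl
  obtain ⟨t, ht, e⟩ := vB 0 (by omega) (by simp)
  obtain ⟨V, hV, J⟩ := word_inv (fun n => v (n+1)) (u 0) (lB t) (ℓ - 1)
    (by rw [h0]; exact e) (by simpa [lB] using inv_one)
    (fun n hn he => vA (n+1) (by omega) (by simpa [Nat.even_add_one] using he))
    (fun n hn he => vB (n+1) (by omega) (by simpa [Nat.even_add_one] using he)) (ℓ - 1) le_rfl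
  simp only [show ℓ - 1 + 1 = ℓ by omega] at hV
  rw [← hl, hW] at hV
  have hE := (φ_eq_iff _ _ _).1 (hu.mul_left_cancel hV)
  obtain ⟨-, -, I3, I4⟩ := I
  obtain ⟨J1, J2, -, -⟩ := J
  rcases Nat.even_or_odd' ℓ with ⟨h, hh | hh⟩
  · apply I3 h hh
    rw [(π_eq_iff _ _ _).1 (hE 0 0) h (by omega)]
    exact J1 h (by omega)
  · apply I4 h hh
    rw [(π_eq_iff _ _ _).1 (hE 0 1) h (by omega)]
    exact J2 h (by omega)

/-- the bipartite graph -/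
def Rel {g : ℕ} (u v : (F × XP F g) ⊕ RP F g) : Prop :=
  ∃ b x t, u = Sum.inl (b, x) ∧ v = Sum.inr (E b x t)

def Gr (F : Type) [Field F] (g : ℕ) : SimpleGraph ((F × XP F g) ⊕ RP F g) where
  Adj u v := Rel u v ∨ Rel v u
  symm := ⟨fun u v h => h.symm⟩
  loopless := ⟨by
    rintro u (⟨b, x, t, h1, h2⟩ | ⟨b, x, t, h1, h2⟩) <;> rw [h1] at h2 <;> simp at h2⟩

def EM {g : ℕ} (u v : (F × XP F g) ⊕ RP F g) (M : Matrix (Fin 2) (Fin 2) (S F (g+2))) : Prop :=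
  ∃ b x t, ((u = Sum.inl (b, x) ∧ v = Sum.inr (E b x t)) ∨
    (v = Sum.inl (b, x) ∧ u = Sum.inr (E b x t))) ∧ M = φ F (g+2) (lM b x * lA t)

lemma EM_symm {g : ℕ} {u v : (F × XP F g) ⊕ RP F g} {M} (h : EM u v M) : EM v u M := by
  obtain ⟨b, x, t, h, e⟩ := h
  exact ⟨b, x, t, h.symm, e⟩

lemma EM_exists {g : ℕ} {u v : (F × XP F g) ⊕ RP F g} (h : (Gr F g).Adj u v) : ∃ M, EM u v M := by
  rcases h with ⟨b, x, t, h⟩ | ⟨b, x, t, h⟩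
  · exact ⟨_, b, x, t, Or.inl h, rfl⟩
  · exact ⟨_, b, x, t, Or.inr h, rfl⟩

lemma EM_unit {g : ℕ} {u v : (F × XP F g) ⊕ RP F g} {M} (h : EM u v M) : IsUnit M := by
  obtain ⟨b, x, t, h, rfl⟩ := h
  apply φ_unit
  rw [Matrix.det_mul, lM_det, lA_det, mul_one]

lemma EM_left {g : ℕ} {u v w : (F × XP F g) ⊕ RP F g} {M N} (h : EM u v M) (h' : EM v w N)
    (hne : u ≠ w) (hv : v.isLeft = true) : ∃ t : F, t ≠ 0 ∧ N = M * φ F (g+2) (lA t) := by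
  obtain ⟨b, x, t, h, rfl⟩ := h
  obtain ⟨b', x', t', h', rfl⟩ := h'
  rcases h with ⟨rfl, rfl⟩ | ⟨rfl, rfl⟩
  · simp at hv
  rcases h' with ⟨h1, rfl⟩ | ⟨rfl, h1⟩
  · simp only [Sum.inl.injEq, Prod.mk.injEq] at h1
    obtain ⟨rfl, rfl⟩ := h1
    refine ⟨t' - t, ?_, ?_⟩
    · intro h
      rw [sub_eq_zero] at h
      exact hne (by rw [h])
    · rw [← map_mul, mul_assoc, lA_add, add_sub_cancel]
  · simp at h1

lemma EM_right {g : ℕ} {u v w : (F × XP F g) ⊕ RP F g} {M N} (h : EM u v M) (h' : EM v w N)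
    (hne : u ≠ w) (hv : v.isLeft = false) : ∃ t : F, t ≠ 0 ∧ N = M * φ F (g+2) (lB t) := by
  obtain ⟨b, x, t, h, rfl⟩ := h
  obtain ⟨b', x', t', h', rfl⟩ := h'
  rcases h with ⟨rfl, rfl⟩ | ⟨rfl, rfl⟩
  · rcases h' with ⟨h1, rfl⟩ | ⟨rfl, h1⟩
    · simp at h1
    · simp only [Sum.inr.injEq] at h1
      refine ⟨b' - b, ?_, ?_⟩
      · intro h
        rw [sub_eq_zero] at h
        subst h
        exact hne (by rw [(E_inj h1).1])
      · rw [← eM_lB, ← eM_lB, ← map_mul, mul_assoc, lB_add, add_sub_cancel, map_mul, map_mul,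
          E_mat h1]
  · simp at hv

lemma adj_isLeft {g : ℕ} {u v : (F × XP F g) ⊕ RP F g} (h : (Gr F g).Adj u v) :
    v.isLeft = !u.isLeft := by
  rcases h with ⟨b, x, t, rfl, rfl⟩ | ⟨b, x, t, rfl, rfl⟩ <;> rfl

lemma no_cycle {g ℓ : ℕ} (hℓ : 2 ≤ ℓ) (hD : ℓ / 2 < g + 2)
    (f : SimpleGraph.cycleGraph (2 * ℓ) →g Gr F g) (hf : Function.Injective f) : False := by
  classical
  have : NeZero (2 * ℓ) := ⟨by omega⟩
  set c : ℕ → (F × XP F g) ⊕ RP F g := fun j => f (Fin.ofNat (2 * ℓ) j) with hc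
  have hper : ∀ j, c (2 * ℓ + j) = c j := by
    intro j
    simp only [hc]
    congr 1
    apply Fin.ext
    simp [Fin.ofNat]
  have hadj : ∀ j, (Gr F g).Adj (c j) (c (j+1)) := by
    intro j
    apply f.map_adj
    clear hper hc c hf f
    obtain ⟨n, hn⟩ : ∃ n, 2 * ℓ = n + 2 := ⟨2 * ℓ - 2, by omega⟩
    generalize 2 * ℓ = L at *
    subst hn
    rw [SimpleGraph.cycleGraph_adj]
    right
    rw [Fin.ext_iff]
    have : (Fin.ofNat (n+2) (j+1)) = Fin.ofNat (n+2) j + 1 := by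
      apply Fin.ext; simp [Fin.ofNat, Fin.val_add]
    rw [this]; simp
  have hne : ∀ j, c j ≠ c (j + 2) := by
    intro j h
    have := congrArg Fin.val (hf h)
    simp only [Fin.ofNat] at this
    have h2 : j ≡ j + 2 [MOD 2 * ℓ] := this
    have h3 : 0 ≡ 2 [MOD 2 * ℓ] := Nat.ModEq.add_left_cancel' j h2
    have := (Nat.modEq_zero_iff_dvd.1 h3.symm)
    have := Nat.le_of_dvd (by omega) this
    omega
  let ge : (F × XP F g) ⊕ RP F g → (F × XP F g) ⊕ RP F g → Matrix (Fin 2) (Fin 2) (S F (g+2)) :=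
    fun u v => if h : ∃ M, EM u v M then h.choose else 0
  have hge : ∀ u v, (Gr F g).Adj u v → EM u v (ge u v) := by
    intro u v h
    have := EM_exists h
    simp only [ge, dif_pos this]
    exact this.choose_spec
  set gs : ℕ → Matrix (Fin 2) (Fin 2) (S F (g+2)) := fun j => ge (c j) (c (j+1)) with hgs
  have hE : ∀ j, EM (c j) (c (j+1)) (gs j) := fun j => hge _ _ (hadj j)
  have hlast : gs (2 * ℓ) = gs 0 := by
    simp only [hgs]
    rw [show c (2 * ℓ) = c 0 from hper 0, hper 1]
  have hpar : ∀ j, (c j).isLeft = if Even j then (c 0).isLeft else !(c 0).isLeft := by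
    intro j
    induction j with
    | zero => simp
    | succ j ih =>
      rw [adj_isLeft (hadj j), ih]
      by_cases h : Even j <;> simp [h, Nat.even_add_one]
  have fwdL : ∀ j, (c (j+1)).isLeft = true → ∃ t : F, t ≠ 0 ∧ gs (j+1) = gs j * φ F (g+2) (lA t) :=
    fun j h => EM_left (hE j) (hE (j+1)) (hne j) h
  have fwdR : ∀ j, (c (j+1)).isLeft = false → ∃ t : F, t ≠ 0 ∧ gs (j+1) = gs j * φ F (g+2) (lB t) :=
    fun j h => EM_right (hE j) (hE (j+1)) (hne j) h
  have bwdL : ∀ j, (c (j+1)).isLeft = true → ∃ t : F, t ≠ 0 ∧ gs j = gs (j+1) * φ F (g+2) (lA t) :=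
    fun j h => EM_left (EM_symm (hE (j+1))) (EM_symm (hE j)) (hne j).symm h
  have bwdR : ∀ j, (c (j+1)).isLeft = false → ∃ t : F, t ≠ 0 ∧ gs j = gs (j+1) * φ F (g+2) (lB t) :=
    fun j h => EM_right (EM_symm (hE (j+1))) (EM_symm (hE j)) (hne j).symm h
  have key : ∀ n < ℓ, 2 * ℓ - n = (2 * ℓ - (n + 1)) + 1 := fun n hn => by omega
  have par2 : ∀ n < ℓ, (Even (2 * ℓ - (n+1) + 1) ↔ Even n) := fun n hn => by
    rw [← key n hn, Nat.even_sub (by omega)]; simp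
  cases h0 : (c 0).isLeft with
  | false =>
    refine no_two_words hℓ hD gs (fun n => gs (2 * ℓ - n)) (by simp [hlast]) (EM_unit (hE 0))
      (by show gs _ = gs _; congr 1; omega) ?_ ?_ ?_ ?_
    · intro n hn he
      exact fwdL n (by rw [hpar, h0]; simp [Nat.even_add_one, he])
    · intro n hn he
      exact fwdR n (by rw [hpar, h0]; simp [Nat.even_add_one, he])
    · intro n hn he
      simp only [key n hn]
      exact bwdR _ (by rw [hpar, h0, if_pos ((par2 n hn).2 he)])
    · intro n hn he
      simp only [key n hn]
      exact bwdL _ (by rw [hpar, h0, if_neg (fun h => he ((par2 n hn).1 h))]; rfl)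
  | true =>
    refine no_two_words hℓ hD (fun n => gs (2 * ℓ - n)) gs (by simp [hlast])
      (by simp only [Nat.sub_zero]; exact (EM_unit (hE _)))
      (by show gs _ = gs _; congr 1; omega) ?_ ?_ ?_ ?_
    · intro n hn he
      simp only [key n hn]
      exact bwdL _ (by rw [hpar, h0, if_pos ((par2 n hn).2 he)])
    · intro n hn he
      simp only [key n hn]
      exact bwdR _ (by rw [hpar, h0, if_neg (fun h => he ((par2 n hn).1 h))]; rfl)
    · intro n hn he
      exact fwdR n (by rw [hpar, h0]; simp [Nat.even_add_one, he])
    · intro n hn he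
      exact fwdL n (by rw [hpar, h0]; simp [Nat.even_add_one, he])

end Constr

lemma shift_exists {r m : ℕ} [NeZero r] {Bl J : Type} [Fintype Bl] [Fintype J] [DecidableEq Bl]
    (N : J → Finset (Bl × ZMod r)) (hN : ∀ j, m ≤ (N j).card)
    (h : (Fintype.card J : ℝ) * r * Real.exp (-(m / r : ℝ)) < 1) :
    ∃ s : Bl → ZMod r, ∀ j c, ∃ x ∈ N j, x.2 + s x.1 = c := by
  classical
  by_contra hcon
  push Not at hcon
  have hr : (0 : ℝ) < r := by exact_mod_cast Nat.pos_of_ne_zero (NeZero.ne r)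
  let bad : J × ZMod r → Finset (Bl → ZMod r) := fun jc =>
    Fintype.piFinset (fun b => (((N jc.1).filter (fun x => x.1 = b)).image (fun x => jc.2 - x.2))ᶜ)
  have hcard : ∀ jc, ((bad jc).card : ℝ) ≤ (r : ℝ) ^ (Fintype.card Bl) * Real.exp (-(m / r : ℝ)) := by
    intro jc
    have h1 : ∀ b, ((((N jc.1).filter (fun x => x.1 = b)).image (fun x => jc.2 - x.2))ᶜ.card : ℝ)
        ≤ r * Real.exp (-(((N jc.1).filter (fun x => x.1 = b)).card / r : ℝ)) := by
      intro b
      have hc : (((N jc.1).filter (fun x => x.1 = b)).image (fun x => jc.2 - x.2)).card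
          = ((N jc.1).filter (fun x => x.1 = b)).card := by
        apply Finset.card_image_of_injOn
        intro x hx y hy hxy
        simp at hx hy hxy
        exact Prod.ext (hx.2.trans hy.2.symm) hxy
      rw [Finset.card_compl, hc, ZMod.card, Nat.cast_sub]
      · have := Real.add_one_le_exp (-(((N jc.1).filter (fun x => x.1 = b)).card / r : ℝ))
        calc (r : ℝ) - ((N jc.1).filter (fun x => x.1 = b)).card
            = r * (-(((N jc.1).filter (fun x => x.1 = b)).card / r : ℝ) + 1) := by
              field_simp; ring
          _ ≤ _ := by gcongr
      · rw [← hc]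
        exact (Finset.card_le_univ _).trans (by rw [ZMod.card])
    simp only [bad, Fintype.card_piFinset]
    push_cast
    calc _ ≤ ∏ b : Bl, ((r : ℝ) * Real.exp (-(((N jc.1).filter (fun x => x.1 = b)).card / r : ℝ))) := by
          apply Finset.prod_le_prod
          · intros; positivity
          · intro b _; exact h1 b
      _ = (r : ℝ) ^ (Fintype.card Bl) * Real.exp (-((N jc.1).card / r : ℝ)) := by
          rw [Finset.prod_mul_distrib, ← Real.exp_sum, Finset.prod_const, Finset.card_univ,
            Finset.sum_neg_distrib, ← Finset.sum_div]
          congr 4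
          have := Finset.card_eq_sum_card_fiberwise (s := N jc.1) (t := Finset.univ)
            (f := fun x => x.1) (by intro x _; simp)
          exact_mod_cast this.symm
      _ ≤ _ := by
          have := hN jc.1
          gcongr
  have hcov : (Finset.univ : Finset (Bl → ZMod r)) ⊆ Finset.univ.biUnion bad := by
    intro s _
    obtain ⟨j, c, hs⟩ := hcon s
    simp only [Finset.mem_biUnion, Finset.mem_univ, true_and]
    refine ⟨(j, c), ?_⟩
    simp only [bad, Fintype.mem_piFinset, Finset.mem_compl, Finset.mem_image, Finset.mem_filter, not_exists, not_and]
    rintro b x ⟨hx, rfl⟩ h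
    exact hs x hx (by rw [← h]; ring)
  have h2 := (Finset.card_le_card hcov).trans Finset.card_biUnion_le
  have h3 : ((r : ℝ) ^ (Fintype.card Bl)) ≤
      (Fintype.card J * r) * ((r : ℝ) ^ (Fintype.card Bl) * Real.exp (-(m / r : ℝ))) := by
    calc ((r : ℝ) ^ (Fintype.card Bl)) = ((Finset.univ : Finset (Bl → ZMod r)).card : ℝ) := by
          simp [ZMod.card]
      _ ≤ ∑ jc, ((bad jc).card : ℝ) := by exact_mod_cast h2
      _ ≤ ∑ jc : J × ZMod r, ((r : ℝ) ^ (Fintype.card Bl) * Real.exp (-(m / r : ℝ))) :=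
          Finset.sum_le_sum (fun jc _ => hcard jc)
      _ = _ := by simp [ZMod.card]
  have h4 : (0 : ℝ) < (r : ℝ) ^ (Fintype.card Bl) := by positivity
  nlinarith

lemma fGraph_le {W V Z : Type} [Fintype V] [Fintype Z] [DecidableEq Z] (H : SimpleGraph W)
    (G : SimpleGraph V)
    (hG : ¬ ContainsSub H G) (r k : ℕ) (hZ : Fintype.card Z = r) (col : V → Z)
    (hk : ∀ z, (Finset.univ.filter (fun v => col v = z)).card ≤ k)
    (hadj : ∀ z z', z ≠ z' → ∃ u w, col u = z ∧ col w = z' ∧ G.Adj u w) :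
    fGraph H r ≤ k := by
  classical
  apply Nat.sInf_le
  let e : V ≃ Fin (Fintype.card V) := Fintype.equivFin V
  let ez : Z ≃ Fin r := Fintype.equivFinOfCardEq hZ
  refine ⟨Fintype.card V, G.comap e.symm, ?_, ?_⟩
  · rintro ⟨f, hf⟩
    apply hG
    refine ⟨⟨fun w => e.symm (f w), ?_⟩, ?_⟩
    · intro a b hab
      exact f.map_adj hab
    · intro a b hab
      exact hf (e.symm.injective hab)
  · refine ⟨fun i => Finset.univ.filter (fun v => ez (col (e.symm v)) = i), ?_, ?_, ?_⟩
    · intro v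
      exact ⟨ez (col (e.symm v)), by simp, by simp⟩
    · intro i
      refine le_trans (le_of_eq ?_) (hk (ez.symm i))
      apply Finset.card_bij (fun v _ => e.symm v)
      · intro v hv
        simp only [Finset.mem_filter, Finset.mem_univ, true_and] at hv ⊢
        rw [← hv]; simp
      · intro a _ b _ h; exact e.symm.injective h
      · intro v hv
        simp only [Finset.mem_filter, Finset.mem_univ, true_and] at hv
        exact ⟨e v, by simp [hv], by simp⟩
    · intro i j hij
      obtain ⟨u, w, hu, hw, h⟩ := hadj (ez.symm i) (ez.symm j) (by simpa using hij)
      exact ⟨e u, by simp [hu], e w, by simp [hw], by simpa using h⟩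

/-- combinatorial core -/
lemma partition_bound {W I X R : Type} [Fintype I] [Fintype X] [Fintype R]
    (H : SimpleGraph W) (G : SimpleGraph ((I × X) ⊕ R)) (hG : ¬ ContainsSub H G)
    (E : I → X → I → R) (hE : ∀ b x t, G.Adj (Sum.inl (b, x)) (Sum.inr (E b x t)))
    (hinj : ∀ b x x' t t', E b x t = E b x' t' → x = x' ∧ t = t')
    (k t r B : ℕ) (hr : r = Fintype.card I * t) (hr0 : 0 < r) (htk : t * k ≤ Fintype.card X)
    (hB : Fintype.card R ≤ B * r)
    (hexp : (r : ℝ) * r * Real.exp (-((k * Fintype.card I : ℕ) / r : ℝ)) < 1) :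
    fGraph H r ≤ k + B := by
  classical
  have : NeZero r := ⟨hr0.ne'⟩
  obtain ⟨ι⟩ : Nonempty (Fin t × Fin k ↪ X) := by
    apply Function.Embedding.nonempty_of_card_le; simpa using htk
  obtain ⟨κ⟩ : Nonempty (R ↪ Fin B × ZMod r) := by
    apply Function.Embedding.nonempty_of_card_le; simpa [ZMod.card] using hB
  obtain ⟨ez⟩ : Nonempty (I × Fin t ≃ ZMod r) := by
    apply Fintype.card_eq.1 (by simp [ZMod.card, hr])
  let N : I × Fin t → Finset (Fin B × ZMod r) := fun j =>
    (Finset.univ : Finset (Fin k × I)).image (fun ua => κ (E j.1 (ι (j.2, ua.1)) ua.2))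
  have hN : ∀ j, k * Fintype.card I ≤ (N j).card := by
    intro j
    apply le_of_eq
    simp only [N]
    rw [Finset.card_image_of_injective]
    · simp
    · intro a b hab
      obtain ⟨h1, h2⟩ := hinj _ _ _ _ _ (κ.injective hab)
      have := ι.injective h1
      simp only [Prod.mk.injEq, true_and] at this
      exact Prod.ext this h2
  obtain ⟨s, hs⟩ := shift_exists (m := k * Fintype.card I) N hN (by
    rw [show Fintype.card (I × Fin t) = r by simp [hr]]; exact hexp)
  let V := ((I × Fin t) × Fin k) ⊕ R
  let mp : V → (I × X) ⊕ R := Sum.map (fun v => (v.1.1, ι (v.1.2, v.2))) id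
  have hmp : Function.Injective mp := by
    apply Function.Injective.sumMap _ Function.injective_id
    rintro ⟨⟨a, b⟩, c⟩ ⟨⟨a', b'⟩, c'⟩ h
    simp only [Prod.mk.injEq] at h
    have := ι.injective h.2
    simp only [Prod.mk.injEq] at this
    simp [h.1, this]
  let col : V → ZMod r := Sum.elim (fun v => ez v.1) (fun y => (κ y).2 + s (κ y).1)
  refine fGraph_le (V := V) (Z := ZMod r) H (G.comap mp) ?_ r (k + B) (ZMod.card r) col ?_ ?_
  · rintro ⟨f, hf⟩
    exact hG ⟨⟨fun w => mp (f w), fun hab => f.map_adj hab⟩, fun a b hab => hf (hmp hab)⟩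
  · intro z
    have hsub : (Finset.univ.filter (fun v => col v = z)) ⊆
        (Finset.univ : Finset (Fin k)).image (fun u => (Sum.inl (ez.symm z, u) : V)) ∪
        (Finset.univ.filter (fun y : R => (κ y).2 + s (κ y).1 = z)).image Sum.inr := by
      rintro (v | y) hv
      · simp only [col, Finset.mem_filter, Finset.mem_univ, true_and, Sum.elim_inl] at hv
        apply Finset.mem_union_left
        rw [Finset.mem_image]
        exact ⟨v.2, by simp, by rw [← hv]; simp⟩
      · simp only [col, Finset.mem_filter, Finset.mem_univ, true_and, Sum.elim_inr] at hv
        apply Finset.mem_union_right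
        rw [Finset.mem_image]
        exact ⟨y, by simp [hv], rfl⟩
    refine (Finset.card_le_card hsub).trans ((Finset.card_union_le _ _).trans ?_)
    apply add_le_add
    · exact Finset.card_image_le.trans (by simp)
    · refine Finset.card_image_le.trans ?_
      have : (Finset.univ.filter (fun y : R => (κ y).2 + s (κ y).1 = z)).card ≤
          (Finset.univ : Finset (Fin B)).card := by
        apply Finset.card_le_card_of_injOn (fun y => (κ y).1) (by simp)
        intro y hy y' hy' h
        simp only [Finset.coe_filter, Finset.mem_univ, true_and, Set.mem_ofPred_eq] at hy hy' h
        apply κ.injective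
        refine Prod.ext h ?_
        rw [← hy', h] at hy
        exact add_right_cancel hy
      simpa using this
  · intro z z' _
    obtain ⟨x, hx, hc⟩ := hs (ez.symm z) z'
    simp only [N, Finset.mem_image, Finset.mem_univ, true_and] at hx
    obtain ⟨ua, rfl⟩ := hx
    refine ⟨Sum.inl (ez.symm z, ua.1), Sum.inr (E (ez.symm z).1 (ι ((ez.symm z).2, ua.1)) ua.2), ?_, ?_, ?_⟩
    · simp [col]
    · simpa [col] using hc
    · exact hE _ _ _

lemma core_bound (ℓ p k t B : ℕ) (hℓ : 2 ≤ ℓ) [Fact p.Prime] (g : ℕ) (hg : ℓ / 2 = g + 1)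
    (ht : 0 < t) (htk : t * k ≤ p ^ (3 * g + 2)) (hB : p ^ (3 * g + 2) ≤ B * t)
    (hexp : ((p * t : ℕ) : ℝ) * (p * t : ℕ) * Real.exp (-((k * p : ℕ) / (p * t : ℕ) : ℝ)) < 1) :
    fGraph (SimpleGraph.cycleGraph (2 * ℓ)) (p * t) ≤ k + B := by
  have hp : 0 < p := (Fact.out : p.Prime).pos
  refine partition_bound (I := ZMod p) (X := Constr.XP (ZMod p) g) (R := Constr.RP (ZMod p) g)
    _ (Constr.Gr (ZMod p) g) ?_ Constr.E ?_ ?_ k t (p * t) B ?_ (by positivity) ?_ ?_ ?_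
  · rintro ⟨f, hf⟩
    exact Constr.no_cycle hℓ (by omega) f hf
  · intro b x s
    exact Or.inl ⟨b, x, s, rfl, rfl⟩
  · intro b x x' s s' h
    exact Constr.E_inj h
  · rw [ZMod.card]
  · refine htk.trans (le_of_eq ?_)
    simp only [Fintype.card_prod, Fintype.card_fun, ZMod.card, Fintype.card_fin]
    ring
  · calc _ = p * p ^ (3 * g + 2) := by
          simp only [Fintype.card_prod, Fintype.card_fun, ZMod.card, Fintype.card_fin]
          ring
      _ ≤ p * (B * t) := Nat.mul_le_mul_left _ hB
      _ = _ := by ring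
  · rw [ZMod.card]; exact hexp

lemma final_real (ℓ g : ℕ) (hℓ : 2 ≤ ℓ) (hg : ℓ / 2 = g + 1) (p M Y lam a r : ℝ) (hp : 1 < p)
    (hM : M = p ^ (3 * g + 2)) (ha : 0 < a) (hlam : 1 ≤ lam) (hY0 : 0 < Y) (hY : Y ^ 2 = a * M * lam)
    (hr : p * M / (4 * Y) ≤ r) (hlr : lam ≤ Real.log r) :
    6 * Y ≤ (6 * (4 : ℝ) ^ ((3 * (ℓ : ℝ) - 2) / (3 * (ℓ : ℝ) + 2)) *
        a ^ (3 * (ℓ : ℝ) / (3 * (ℓ : ℝ) + 2))) * r ^ ((3 * (ℓ : ℝ) - 2) / (3 * (ℓ : ℝ) + 2)) *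
            (Real.log r) ^ (3 * (ℓ : ℝ) / (3 * (ℓ : ℝ) + 2)) := by
  have hl2 : (2 : ℝ) ≤ ℓ := by exact_mod_cast hℓ
  have hgl : 2 * ((g : ℝ) + 1) ≤ ℓ := by
    have : 2 * (g + 1) ≤ ℓ := by omega
    exact_mod_cast this
  set α := (3 * (ℓ : ℝ) - 2) / (3 * (ℓ : ℝ) + 2) with hα
  set β := 3 * (ℓ : ℝ) / (3 * (ℓ : ℝ) + 2) with hβ
  have hden : 0 < 3 * (ℓ : ℝ) + 2 := by linarith
  have hα0 : 0 ≤ α := div_nonneg (by linarith) hden.le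
  have hβ0 : 0 ≤ β := div_nonneg (by linarith) hden.le
  have hαβ : 1 + α = 2 * β := by rw [hα, hβ]; field_simp; ring
  have hM0 : 0 < M := by rw [hM]; positivity
  have hp0 : 0 < p := by linarith
  have hMp : M ^ β ≤ p ^ α * M ^ α := by
    have h1 : β = (β - α) + α := by ring
    rw [h1, Real.rpow_add hM0]
    gcongr
    rw [hM, ← Real.rpow_natCast, ← Real.rpow_mul hp0.le]
    apply Real.rpow_le_rpow_of_exponent_le hp.le
    have : β - α = 2 / (3 * (ℓ : ℝ) + 2) := by rw [hα, hβ]; field_simp; ring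
    rw [this, hα, mul_div_assoc']
    gcongr
    push_cast
    linarith
  have hYpow : Y * Y ^ α = a ^ β * M ^ β * lam ^ β := by
    have : Y * Y ^ α = Y ^ (1 + α) := by rw [Real.rpow_add hY0, Real.rpow_one]
    rw [this, hαβ, Real.rpow_mul hY0.le, ← Real.mul_rpow (by positivity) (by positivity),
      ← Real.mul_rpow (by positivity) (by positivity), ← hY]
    norm_num
  have h1 : (p * M / (4 * Y)) ^ α ≤ r ^ α := Real.rpow_le_rpow (by positivity) hr hα0
  have h2 : lam ^ β ≤ (Real.log r) ^ β := Real.rpow_le_rpow (by linarith) hlr hβ0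
  have h3 : (p * M / (4 * Y)) ^ α = p ^ α * M ^ α / (4 ^ α * Y ^ α) := by
    rw [Real.div_rpow (by positivity) (by positivity), Real.mul_rpow (by positivity) (by positivity),
      Real.mul_rpow (by positivity) (by positivity)]
  calc 6 * Y = 6 * (Y * Y ^ α) / Y ^ α := by
        have : 0 < Y ^ α := by positivity
        field_simp
    _ = (6 * 4 ^ α * a ^ β) * (M ^ β / (4 ^ α * Y ^ α)) * lam ^ β := by
        rw [hYpow]
        have : 0 < Y ^ α := by positivity
        have : (0 : ℝ) < 4 ^ α := by positivity
        field_simp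
    _ ≤ (6 * 4 ^ α * a ^ β) * (p ^ α * M ^ α / (4 ^ α * Y ^ α)) * lam ^ β := by gcongr
    _ = (6 * 4 ^ α * a ^ β) * (p * M / (4 * Y)) ^ α * lam ^ β := by rw [h3]
    _ ≤ _ := by
        have hr0 : 0 ≤ r := le_trans (by positivity) hr
        gcongr

/-- For every `ℓ ≥ 2` there is `C > 0` such that for every `N` there is `r ≥ N` with
`f(r, C_{2ℓ}) ≤ C · r^{(3ℓ−2)/(3ℓ+2)} · (log r)^{3ℓ/(3ℓ+2)}`. -/
theorem stmt4 (ℓ : ℕ) (hℓ : 2 ≤ ℓ) :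
    ∃ C : ℝ, 0 < C ∧ ∀ N : ℕ, ∃ r : ℕ, N ≤ r ∧
      (fGraph (SimpleGraph.cycleGraph (2 * ℓ)) r : ℝ)
        ≤ C * (r : ℝ) ^ ((3 * (ℓ : ℝ) - 2) / (3 * (ℓ : ℝ) + 2)) *
            (Real.log r) ^ (3 * (ℓ : ℝ) / (3 * (ℓ : ℝ) + 2)) := by
  obtain ⟨g, hg⟩ : ∃ g, ℓ / 2 = g + 1 := ⟨ℓ / 2 - 1, by omega⟩
  set a : ℝ := 6 * ((g : ℝ) + 1) with ha
  have ha0 : 0 < a := by positivity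
  refine ⟨6 * (4 : ℝ) ^ ((3 * (ℓ : ℝ) - 2) / (3 * (ℓ : ℝ) + 2)) *
        a ^ (3 * (ℓ : ℝ) / (3 * (ℓ : ℝ) + 2)), by positivity, fun N => ?_⟩
  obtain ⟨p, hpN, hpp⟩ := Nat.exists_infinite_primes (N + 24 * (g + 1) + 3)
  have : Fact p.Prime := ⟨hpp⟩
  have hp3 : (3 : ℝ) ≤ p := by exact_mod_cast (by omega : 3 ≤ p)
  have hpa : 4 * a ≤ p := by
    have : 24 * (g + 1) ≤ p := by omega
    have : (24 * (g + 1) : ℝ) ≤ p := by exact_mod_cast this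
    rw [ha]; linarith
  set lam := Real.log p with hlam
  have hp0 : (0 : ℝ) < p := by linarith
  have hlam1 : 1 ≤ lam := by
    rw [hlam, Real.le_log_iff_exp_le hp0]
    linarith [Real.exp_one_lt_d9]
  have hlamp : lam ≤ p := (Real.log_le_sub_one_of_pos hp0).trans (by linarith)
  set M : ℝ := (p : ℝ) ^ (3 * g + 2) with hM
  have hMp : (p : ℝ) ^ 2 ≤ M := pow_le_pow_right₀ (by linarith) (by omega)
  have hM0 : 0 < M := by positivity
  have hM1 : 1 ≤ M := by nlinarith
  set Y := Real.sqrt (a * M * lam) with hYdef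
  have hY2 : Y ^ 2 = a * M * lam := Real.sq_sqrt (by positivity)
  have ha1 : 1 ≤ a := by rw [ha]; nlinarith [(Nat.cast_nonneg g : (0 : ℝ) ≤ g)]
  have hY1 : 1 ≤ Y := by
    rw [hYdef, Real.one_le_sqrt]
    nlinarith [mul_le_mul ha1 hM1 (by norm_num) ha0.le,
      mul_le_mul (mul_le_mul ha1 hM1 (by norm_num) ha0.le) hlam1 (by norm_num) (by positivity)]
  have hYM : 2 * Y ≤ M := by
    apply le_of_sq_le_sq _ hM0.le
    have h1 : 4 * a * lam ≤ M := by
      calc 4 * a * lam ≤ p * p := by gcongr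
        _ ≤ M := by rw [← sq]; exact hMp
    calc (2 * Y) ^ 2 = (4 * a * lam) * M := by rw [mul_pow, hY2]; ring
      _ ≤ M * M := by gcongr
      _ = M ^ 2 := by ring
  set k := ⌊Y⌋₊ + 1 with hk
  have hkY : Y < k := by rw [hk]; push_cast; exact Nat.lt_floor_add_one Y
  have hk2Y : (k : ℝ) ≤ 2 * Y := by
    have := Nat.floor_le (by linarith : 0 ≤ Y)
    rw [hk]; push_cast; linarith
  set t := p ^ (3 * g + 2) / k with ht
  have hkM : k ≤ p ^ (3 * g + 2) := by
    have : (k : ℝ) ≤ M := hk2Y.trans hYM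
    rw [hM] at this
    exact_mod_cast this
  have ht1 : 0 < t := Nat.div_pos hkM (by omega)
  have htk : t * k ≤ p ^ (3 * g + 2) := Nat.div_mul_le_self _ _
  have hMtk : p ^ (3 * g + 2) ≤ 2 * k * t := by
    have h1 : p ^ (3 * g + 2) < k * (t + 1) := Nat.lt_mul_div_succ _ (by omega)
    nlinarith
  have htkR : (t : ℝ) * k ≤ M := by rw [hM]; exact_mod_cast htk
  have hMtkR : M ≤ 2 * k * t := by rw [hM]; exact_mod_cast hMtk
  have ht0 : (0 : ℝ) < t := by exact_mod_cast ht1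
  have hk0 : (0 : ℝ) < k := by linarith
  have hk1 : (1 : ℝ) ≤ k := by linarith
  refine ⟨p * t, ?_, ?_⟩
  · nlinarith
  have hbound := core_bound ℓ p k t (2 * k) hℓ g hg ht1 htk hMtk (by
    have hr : ((p * t : ℕ) : ℝ) ≤ Real.exp ((3 * g + 3) * lam) := by
      calc ((p * t : ℕ) : ℝ) = p * t := by push_cast; ring
        _ ≤ p * M := by
          gcongr
          nlinarith
        _ = Real.exp ((3 * g + 3) * lam) := by
          rw [mul_comm (_ : ℝ) lam, Real.exp_mul, hlam, Real.exp_log hp0, hM, ← pow_succ',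
            ← Real.rpow_natCast]
          congr 1
          push_cast; ring
    have hlt : a * lam < ((k * p : ℕ) / (p * t : ℕ) : ℝ) := by
      push_cast
      rw [lt_div_iff₀ (by positivity)]
      have h1 : a * lam * t < k := by
        have : a * lam * t * k < k * k := by
          calc a * lam * t * k = a * lam * (t * k) := by ring
            _ ≤ a * lam * M := by gcongr
            _ = Y ^ 2 := by rw [hY2]; ring
            _ < k * k := by nlinarith
        exact lt_of_mul_lt_mul_right this hk0.le
      nlinarith
    calc _ ≤ Real.exp ((3 * g + 3) * lam) * Real.exp ((3 * g + 3) * lam) *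
          Real.exp (-((k * p : ℕ) / (p * t : ℕ) : ℝ)) := by gcongr
      _ = Real.exp (a * lam - ((k * p : ℕ) / (p * t : ℕ) : ℝ)) := by
          rw [← Real.exp_add, ← Real.exp_add, ha]
          congr 1; ring
      _ < 1 := by rw [Real.exp_lt_one_iff]; linarith)
  have hb2 : (fGraph (SimpleGraph.cycleGraph (2 * ℓ)) (p * t) : ℝ) ≤ 6 * Y := by
    have : (fGraph (SimpleGraph.cycleGraph (2 * ℓ)) (p * t) : ℝ) ≤ k + 2 * k := by
      exact_mod_cast hbound
    linarith
  refine hb2.trans (final_real ℓ g hℓ hg p M Y lam a _ (by linarith) hM ha0 hlam1 (by linarith) hY2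
    ?_ ?_)
  · rw [div_le_iff₀ (by linarith)]
    push_cast
    calc (p : ℝ) * M ≤ p * (2 * k * t) := by gcongr
      _ ≤ p * (2 * (2 * Y) * t) := by gcongr
      _ = _ := by ring
  · rw [hlam]
    apply Real.log_le_log hp0
    push_cast
    have : (1 : ℝ) ≤ t := by exact_mod_cast ht1
    nlinarith
end
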